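/- The number α₁₂ = √25 · ln((√25 − 1)/(√25 + 1)) = 5 ln(2/3) has non-quadraticity measure at most 9.46082; that is, for every real κ > 9.46082, there exist only finitely many real numbers β that are roots of irreducible integer polynomials of degree at most 2 and satisfy |α₁₂ − β| < H(β)^(−κ), where H(β) denotes the largest absolute value of the coefficients of the irreducible integer polynomial having β as a root. -/

import Mathlib

/-!
For `t = log (2 / 3)`, a quadratic `P` and a polynomial `G`, partial summation by the operator
`P(-d/dX)` compares `∑ (P(-d/dX) G)(k) e ^ (t k)` with `P(t) * ∑ G(k) e ^ (t k)`. Take for `G` a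
product of three binomial coefficients whose index blocks of length `11 n` are shifted by `n`, times
`X ^ j`. Then:

* the left-hand sum times `reducedDenom n` is an integer multiple of a product of large powers of
  `2` and `3`, since `G` has triple zeros at many integers around `0`; primes with suitable
  fractional part of `n / p` divide out of the denominator, and the prime number theorem gives its
  exponential rate;
* for one of `j = 0, 1, 2` the left-hand sum does not vanish, by comparing solutions of a shift
  relation;
* the two sides differ by an integral along the line `Re s = 1 / 2`, which is exponentially small by
  the location of the saddle point;
* the sum on the right-hand side grows at most at a known exponential rate.

Hence `1 ≤ |P(t)| e ^ (A n) + H e ^ (-B n)` up to subexponential factors, for quadratics with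
coefficients bounded by `H`. Choosing `n` near `log H / B` gives `|P(t)| ≥ c H ^ (-A / B)`, and
passing from values of polynomials to distances from their roots costs one more factor `H`.
-/

/-- The height of an integer polynomial: the largest absolute value of its coefficients. -/
def polyHeight (P : Polynomial ℤ) : ℕ :=
  P.support.sup fun i => (P.coeff i).natAbs

section FejerKernel

open Real Set MeasureTheory

/-- The Fejér kernel on the real line, normalised so that it is the Fourier transform of the
triangle function `1 - |t|` on `[-1, 1]`. -/
noncomputable def fejerKernel (x : ℝ) : ℝ :=
  sinc (x / 2) ^ 2

lemma fejerKernel_nonneg (x : ℝ) : 0 ≤ fejerKernel x :=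
  sq_nonneg _

lemma continuous_fejerKernel : Continuous fejerKernel := by
  unfold fejerKernel
  fun_prop

lemma fejerKernel_zero : fejerKernel 0 = 1 := by
  simp [fejerKernel]

lemma fejerKernel_eq_div {x : ℝ} (hx : x ≠ 0) : fejerKernel x = 2 * (1 - cos x) / x ^ 2 := by
  have hcos : cos x = 1 - 2 * sin (x / 2) ^ 2 := by
    rw [sin_sq, cos_sq, mul_div_cancel₀ x two_ne_zero]
    ring
  rw [fejerKernel, sinc_of_ne_zero (div_ne_zero hx two_ne_zero), hcos]
  field_simp
  ring

lemma fejerKernel_le (x : ℝ) : fejerKernel x ≤ 5 * (1 + x ^ 2)⁻¹ := by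
  obtain rfl | hx := eq_or_ne x 0
  · norm_num [fejerKernel_zero]
  · rw [fejerKernel_eq_div hx, ← div_eq_mul_inv, div_le_div_iff₀ (by positivity) (by positivity)]
    nlinarith [neg_one_le_cos x, one_sub_sq_div_two_le_cos (x := x), sq_nonneg x]

lemma integrable_fejerKernel : Integrable fejerKernel := by
  refine (integrable_inv_one_add_sq.const_mul 5).mono'
    continuous_fejerKernel.aestronglyMeasurable (ae_of_all _ fun x ↦ ?_)
  rw [norm_of_nonneg (fejerKernel_nonneg x)]
  exact fejerKernel_le x

lemma integral_fejerKernel_pos : 0 < ∫ x, fejerKernel x := by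
  rw [integral_pos_iff_support_of_nonneg fejerKernel_nonneg integrable_fejerKernel]
  exact continuous_fejerKernel.isOpen_support.measure_pos _ ⟨0, by simp [fejerKernel_zero]⟩

lemma integral_one_sub_mul_cos (x : ℝ) :
    ∫ t in (0 : ℝ)..1, (1 - t) * cos (t * x) = fejerKernel x / 2 := by
  obtain rfl | hx := eq_or_ne x 0
  · simp only [mul_zero, cos_zero, mul_one, fejerKernel_zero]
    rw [intervalIntegral.integral_sub (by simp) (by simp), integral_id]
    norm_num
  · have hderiv (t : ℝ) : HasDerivAt (fun t ↦ (1 - t) * (sin (t * x) / x) - cos (t * x) / x ^ 2)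
        ((1 - t) * cos (t * x)) t := by
      have hlin : HasDerivAt (fun t : ℝ ↦ t * x) x t := by
        simpa using (hasDerivAt_id t).mul_const x
      refine ((((hasDerivAt_id t).const_sub 1).mul (hlin.sin.div_const x)).sub
        (hlin.cos.div_const (x ^ 2))).congr_deriv ?_
      simp only [id]
      field_simp
      ring
    rw [intervalIntegral.integral_eq_sub_of_hasDerivAt (fun t _ ↦ hderiv t)
      (Continuous.intervalIntegrable (by fun_prop) _ _), fejerKernel_eq_div hx]
    simp
    ring

lemma integral_neg_self_eq_integral_add_comp_neg {E : Type*} [NormedAddCommGroup E]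
    [NormedSpace ℝ E] {g : ℝ → E} (hg : Continuous g) (a : ℝ) :
    ∫ t in (-a)..a, g t = ∫ t in (0 : ℝ)..a, (g t + g (-t)) := by
  have hint (b c : ℝ) : IntervalIntegrable g volume b c := hg.intervalIntegrable b c
  have hreflect : ∫ t in (0 : ℝ)..a, g (-t) = ∫ t in (-a)..0, g t := by
    simp only [intervalIntegral.integral_comp_neg, neg_zero]
  have hintneg : IntervalIntegrable (fun t ↦ g (-t)) volume 0 a :=
    (hg.comp continuous_neg).intervalIntegrable _ _
  rw [intervalIntegral.integral_add (hint _ _) hintneg, hreflect, add_comm,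
    intervalIntegral.integral_add_adjacent_intervals (hint _ _) (hint _ _)]

lemma integral_triangle_mul_exp (x : ℝ) :
    ∫ t in (-1 : ℝ)..1, ((1 - |t| : ℝ) : ℂ) * Complex.exp (Complex.I * t * x) =
      fejerKernel x := by
  have hfold (t : ℝ) (ht : t ∈ uIcc 0 1) :
      ((1 - |t| : ℝ) : ℂ) * Complex.exp (Complex.I * t * x) +
        ((1 - |-t| : ℝ) : ℂ) * Complex.exp (Complex.I * (-t : ℝ) * x) =
      ((2 * ((1 - t) * cos (t * x)) : ℝ) : ℂ) := by
    rw [uIcc_of_le zero_le_one] at ht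
    rw [abs_neg, abs_of_nonneg ht.1]
    push_cast
    rw [mul_comm _ (Complex.cos _), ← mul_assoc, Complex.two_cos]
    ring_nf
  rw [integral_neg_self_eq_integral_add_comp_neg (by fun_prop),
    intervalIntegral.integral_congr hfold, intervalIntegral.integral_ofReal,
    intervalIntegral.integral_const_mul, integral_one_sub_mul_cos]
  push_cast
  ring

end FejerKernel

section WienerIkehara

open Real Set Filter Topology MeasureTheory

lemma norm_triangle_mul_exp_le_one {t : ℝ} (ht : t ∈ Ioc (-1 : ℝ) 1) (x : ℝ) :
    ‖((1 - |t| : ℝ) : ℂ) * Complex.exp (Complex.I * t * x)‖ ≤ 1 := by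
  have hphase : Complex.I * t * x = ((t * x : ℝ) : ℂ) * Complex.I := by
    push_cast
    ring
  rw [norm_mul, Complex.norm_real, hphase, Complex.norm_exp_ofReal_mul_I, mul_one, norm_eq_abs,
    abs_of_nonneg (sub_nonneg.2 (abs_le.2 ⟨ht.1.le, ht.2⟩))]
  linarith [abs_nonneg t]

variable {h : ℝ → ℝ} {M : ℝ} {G : ℂ → ℂ}

lemma integrable_prod_laplace_triangle (hmeas : Measurable h) (hbound : ∀ u, |h u| ≤ M) {ε : ℝ}
    (hε : 0 < ε) (v : ℝ) :
    Integrable (Function.uncurry fun t u : ℝ ↦ ((h u * exp (-ε * u) : ℝ) : ℂ) *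
        (((1 - |t| : ℝ) : ℂ) * Complex.exp (Complex.I * t * ((v - u : ℝ) : ℂ))))
      ((volume.restrict (Ioc (-1 : ℝ) 1)).prod (volume.restrict (Ioi (0 : ℝ)))) := by
  have hdecay : Integrable (fun u : ℝ ↦ M * exp (-ε * u)) (volume.restrict (Ioi 0)) :=
    (integrableOn_exp_mul_Ioi (by linarith) 0).const_mul M
  have hone : Integrable (fun _ : ℝ ↦ (1 : ℝ)) (volume.restrict (Ioc (-1 : ℝ) 1)) :=
    integrableOn_const (by simp)
  refine (hone.mul_prod hdecay).mono' (Measurable.aestronglyMeasurable (by fun_prop)) ?_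
  rw [Measure.prod_restrict]
  filter_upwards [ae_restrict_mem (measurableSet_Ioc.prod measurableSet_Ioi)] with p hp
  rw [Function.uncurry_def, norm_mul, Complex.norm_real, norm_mul, norm_eq_abs,
    norm_of_nonneg (exp_pos _).le, mul_comm]
  exact mul_le_mul (norm_triangle_mul_exp_le_one hp.1 _)
    (mul_le_mul_of_nonneg_right (hbound _) (exp_pos _).le) (by positivity) zero_le_one

lemma integral_triangle_mul_laplace (hmeas : Measurable h) (hbound : ∀ u, |h u| ≤ M)
    (hlaplace : ∀ s : ℂ, 0 < s.re → ∫ u in Ioi (0 : ℝ), (h u : ℂ) * Complex.exp (-s * u) = G s)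
    {ε : ℝ} (hε : 0 < ε) (v : ℝ) :
    ∫ t in (-1 : ℝ)..1,
        ((1 - |t| : ℝ) : ℂ) * Complex.exp (Complex.I * t * v) * G (ε + Complex.I * t) =
      ∫ u in Ioi (0 : ℝ), ((h u * exp (-ε * u) * fejerKernel (v - u) : ℝ) : ℂ) := by
  have hexpand (t : ℝ) :
      ((1 - |t| : ℝ) : ℂ) * Complex.exp (Complex.I * t * v) * G (ε + Complex.I * t) =
        ∫ u in Ioi (0 : ℝ), ((h u * exp (-ε * u) : ℝ) : ℂ) *
          (((1 - |t| : ℝ) : ℂ) * Complex.exp (Complex.I * t * ((v - u : ℝ) : ℂ))) := by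
    rw [← hlaplace _ (by simp [hε]), ← integral_const_mul]
    congr 1 with u
    have hsplit : Complex.exp (Complex.I * t * v) * Complex.exp (-(ε + Complex.I * t) * u) =
        Complex.exp (-ε * u) * Complex.exp (Complex.I * t * (v - u)) := by
      rw [← Complex.exp_add, ← Complex.exp_add]
      ring_nf
    push_cast
    linear_combination (1 - ((|t| : ℝ) : ℂ)) * h u * hsplit
  simp_rw [hexpand]
  rw [intervalIntegral.integral_of_le (by norm_num),
    integral_integral_swap (integrable_prod_laplace_triangle hmeas hbound hε v)]
  congr 1 with u
  rw [integral_const_mul, ← intervalIntegral.integral_of_le (by norm_num),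
    integral_triangle_mul_exp, ← Complex.ofReal_mul]

lemma tendsto_integral_triangle_mul_boundary (hG : ContinuousOn G {s | 0 ≤ s.re}) (v : ℝ) :
    Tendsto (fun ε : ℝ ↦ ∫ t in (-1 : ℝ)..1,
        ((1 - |t| : ℝ) : ℂ) * Complex.exp (Complex.I * t * v) * G (ε + Complex.I * t)) (𝓝[>] 0)
      (𝓝 (∫ t in (-1 : ℝ)..1,
        ((1 - |t| : ℝ) : ℂ) * Complex.exp (Complex.I * t * v) * G (Complex.I * t))) := by
  have hsmall : ∀ᶠ ε : ℝ in 𝓝[>] 0, ε ∈ Ioc (0 : ℝ) 1 := Ioc_mem_nhdsGT one_pos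
  obtain ⟨C, hC⟩ : ∃ C, ∀ ε ∈ Icc (0 : ℝ) 1, ∀ t ∈ Icc (-1 : ℝ) 1,
      ‖G (ε + Complex.I * t)‖ ≤ C := by
    have hcompact : IsCompact
        ((fun p : ℝ × ℝ ↦ (p.1 : ℂ) + Complex.I * p.2) '' (Icc 0 1 ×ˢ Icc (-1) 1)) :=
      (isCompact_Icc.prod isCompact_Icc).image (by fun_prop)
    obtain ⟨C, hC⟩ := hcompact.exists_bound_of_continuousOn (f := G) <| hG.mono <| by
      rintro _ ⟨p, hp, rfl⟩
      simpa using hp.1.1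
    exact ⟨C, fun ε hε t ht ↦ hC _ ⟨(ε, t), ⟨hε, ht⟩, rfl⟩⟩
  refine intervalIntegral.tendsto_integral_filter_of_dominated_convergence (fun _ ↦ C) ?_ ?_
    (by simp) ?_
  · filter_upwards [hsmall] with ε hε
    have hline : Continuous fun t : ℝ ↦ G (ε + Complex.I * t) :=
      hG.comp_continuous (by fun_prop) fun t ↦ by simpa using hε.1.le
    exact Continuous.aestronglyMeasurable (Continuous.mul (by fun_prop) hline)
  · filter_upwards [hsmall] with ε hε
    filter_upwards with t ht
    rw [uIoc_of_le (by norm_num)] at ht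
    rw [norm_mul, ← one_mul C]
    exact mul_le_mul (norm_triangle_mul_exp_le_one ht v)
      (hC ε (Ioc_subset_Icc_self hε) t (Ioc_subset_Icc_self ht)) (norm_nonneg _) zero_le_one
  · filter_upwards with t _
    refine Tendsto.const_mul _ ?_
    have hboundary : ContinuousWithinAt G {s | 0 ≤ s.re} (Complex.I * t) := hG _ (by simp)
    refine hboundary.tendsto.comp (tendsto_nhdsWithin_iff.2 ⟨?_, ?_⟩)
    · have hpath : Continuous fun ε : ℝ ↦ (ε : ℂ) + Complex.I * t := by fun_prop
      simpa using (hpath.tendsto 0).mono_left nhdsWithin_le_nhds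
    · filter_upwards [hsmall] with ε hε
      simpa using hε.1.le

lemma tendsto_integral_abel_mul_fejerKernel (hmeas : Measurable h) (hbound : ∀ u, |h u| ≤ M)
    (v : ℝ) :
    Tendsto (fun ε : ℝ ↦ ∫ u in Ioi (0 : ℝ),
        ((h u * exp (-ε * u) * fejerKernel (v - u) : ℝ) : ℂ)) (𝓝[>] 0)
      (𝓝 (∫ u in Ioi (0 : ℝ), ((h u * fejerKernel (v - u) : ℝ) : ℂ))) := by
  have hkernel : Measurable fejerKernel := continuous_fejerKernel.measurable
  refine tendsto_integral_filter_of_dominated_convergence (fun u ↦ M * fejerKernel (v - u))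
    (.of_forall fun ε ↦ Measurable.aestronglyMeasurable (by fun_prop)) ?_
    ((integrable_fejerKernel.comp_sub_left v).const_mul M).integrableOn ?_
  · filter_upwards [self_mem_nhdsWithin] with ε (hε : 0 < ε)
    filter_upwards [ae_restrict_mem measurableSet_Ioi] with u (hu : 0 < u)
    have hexp : exp (-ε * u) ≤ 1 := exp_le_one_iff.2 (by nlinarith)
    rw [Complex.norm_real, norm_mul, norm_mul, norm_eq_abs, norm_of_nonneg (exp_pos _).le,
      norm_of_nonneg (fejerKernel_nonneg _)]
    exact mul_le_mul_of_nonneg_right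
      ((mul_le_of_le_one_right (abs_nonneg _) hexp).trans (hbound u)) (fejerKernel_nonneg _)
  · filter_upwards with u
    have hcont : Continuous fun ε : ℝ ↦
        ((h u * exp (-ε * u) * fejerKernel (v - u) : ℝ) : ℂ) := by fun_prop
    simpa using (hcont.tendsto 0).mono_left nhdsWithin_le_nhds

lemma tendsto_integral_exp_mul_atTop (g : ℝ → ℂ) :
    Tendsto (fun v : ℝ ↦ ∫ t in (-1 : ℝ)..1, Complex.exp (Complex.I * t * v) * g t) atTop
      (𝓝 0) := by
  have hfreq : Tendsto (fun v : ℝ ↦ -(v / (2 * π))) atTop (cocompact ℝ) := by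
    rw [cocompact_eq_atBot_atTop]
    exact (tendsto_neg_atTop_atBot.comp (tendsto_id.atTop_div_const (by positivity))).mono_right
      le_sup_left
  refine ((Real.tendsto_integral_exp_smul_cocompact ((Ioc (-1 : ℝ) 1).indicator g)).comp
    hfreq).congr fun v ↦ ?_
  rw [intervalIntegral.integral_of_le (by norm_num), ← integral_indicator measurableSet_Ioc]
  refine integral_congr_ae (ae_of_all _ fun t ↦ ?_)
  by_cases ht : t ∈ Ioc (-1 : ℝ) 1
  · have hphase : (((2 * π * -(t * -(v / (2 * π)))) : ℝ) : ℂ) * Complex.I =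
        Complex.I * t * v := by
      push_cast
      field_simp
    simp only [indicator_of_mem ht, Circle.smul_def, fourierChar_apply, smul_eq_mul, hphase]
  · simp [indicator_of_notMem ht]

/-- The Fourier transform of the kernel is supported on `[-1, 1]`, so only the boundary values of
the Laplace transform on a compact segment matter; Riemann–Lebesgue then gives the limit. -/
theorem tendsto_integral_mul_fejerKernel_of_laplace (hmeas : Measurable h)
    (hbound : ∀ u, |h u| ≤ M) (hG : ContinuousOn G {s | 0 ≤ s.re})
    (hlaplace : ∀ s : ℂ, 0 < s.re → ∫ u in Ioi (0 : ℝ), (h u : ℂ) * Complex.exp (-s * u) = G s) :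
    Tendsto (fun v : ℝ ↦ ∫ u in Ioi (0 : ℝ), h u * fejerKernel (v - u)) atTop (𝓝 0) := by
  have hboundary (v : ℝ) :
      ∫ t in (-1 : ℝ)..1,
        ((1 - |t| : ℝ) : ℂ) * Complex.exp (Complex.I * t * v) * G (Complex.I * t) =
      ((∫ u in Ioi (0 : ℝ), h u * fejerKernel (v - u) : ℝ) : ℂ) := by
    rw [← integral_complex_ofReal]
    refine tendsto_nhds_unique ((tendsto_integral_triangle_mul_boundary hG v).congr' ?_)
      (tendsto_integral_abel_mul_fejerKernel hmeas hbound v)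
    filter_upwards [self_mem_nhdsWithin] with ε hε
    exact integral_triangle_mul_laplace hmeas hbound hlaplace hε v
  have hlim := tendsto_integral_exp_mul_atTop fun t ↦ ((1 - |t| : ℝ) : ℂ) * G (Complex.I * t)
  simp_rw [mul_left_comm (Complex.exp _), ← mul_assoc, hboundary] at hlim
  simpa [Function.comp_def] using (Complex.continuous_re.tendsto 0).comp hlim

end WienerIkehara

section Tauberian

open Real Set Filter Topology MeasureTheory

lemma setIntegral_Icc_fejerKernel_sub (R v : ℝ) :
    ∫ u in Icc (v - R) (v + R), fejerKernel (v - u) = ∫ x in Icc (-R) R, fejerKernel x := by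
  have hpre : (fun u ↦ v - u) ⁻¹' Icc (-R) R = Icc (v - R) (v + R) := by
    simp [sub_neg_eq_add]
  rw [← hpre]
  exact (Measure.measurePreserving_sub_left volume v).setIntegral_preimage_emb
    (Homeomorph.subLeft v).measurableEmbedding _ _

lemma tendsto_setIntegral_Ioi_fejerKernel_sub :
    Tendsto (fun v : ℝ ↦ ∫ u in Ioi (0 : ℝ), fejerKernel (v - u)) atTop
      (𝓝 (∫ x, fejerKernel x)) := by
  have hreflect (v : ℝ) : ∫ u in Ioi (0 : ℝ), fejerKernel (v - u) =
      ∫ x in Iio v, fejerKernel x := by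
    have hpre : (fun u ↦ v - u) ⁻¹' Iio v = Ioi 0 := by
      simp
    rw [← hpre]
    exact (Measure.measurePreserving_sub_left volume v).setIntegral_preimage_emb
      (Homeomorph.subLeft v).measurableEmbedding _ _
  simp_rw [hreflect]
  exact (aecover_Iio (μ := volume) tendsto_id).integral_tendsto_of_countably_generated
    integrable_fejerKernel

lemma tendsto_setIntegral_Icc_fejerKernel :
    Tendsto (fun R : ℝ ↦ ∫ x in Icc (-R) R, fejerKernel x) atTop (𝓝 (∫ x, fejerKernel x)) :=
  (aecover_Icc (μ := volume) tendsto_neg_atTop_atBot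
    tendsto_id).integral_tendsto_of_countably_generated integrable_fejerKernel

/-- The average of `f` against the Fejér kernel of width `1 / c` centred at `v / c`, without the
normalisation by `∫ fejerKernel`. -/
noncomputable def fejerMean (f : ℝ → ℝ) (c v : ℝ) : ℝ :=
  ∫ u in Ioi (0 : ℝ), f (u / c) * fejerKernel (v - u)

variable {f : ℝ → ℝ} {M : ℝ} {G : ℂ → ℂ}

lemma integrable_mul_fejerKernel_sub (hmeas : Measurable f) (hnonneg : ∀ u, 0 ≤ f u)
    (hbound : ∀ u, f u ≤ M) (c v : ℝ) :
    Integrable fun u ↦ f (u / c) * fejerKernel (v - u) := by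
  refine (integrable_fejerKernel.comp_sub_left v).bdd_mul (c := M)
    (Measurable.aestronglyMeasurable (by fun_prop)) (ae_of_all _ fun u ↦ ?_)
  rw [norm_of_nonneg (hnonneg _)]
  exact hbound _

lemma tendsto_fejerMean (hmeas : Measurable f) (hnonneg : ∀ u, 0 ≤ f u) (hbound : ∀ u, f u ≤ M)
    (hG : ContinuousOn G {s | 0 ≤ s.re})
    (hlaplace : ∀ s : ℂ, 0 < s.re →
      ∫ u in Ioi (0 : ℝ), ((f u - 1 : ℝ) : ℂ) * Complex.exp (-s * u) = G s)
    {c : ℝ} (hc : 0 < c) :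
    Tendsto (fejerMean f c) atTop (𝓝 (∫ x, fejerKernel x)) := by
  have hlaplace_scaled (s : ℂ) (hs : 0 < s.re) :
      ∫ u in Ioi (0 : ℝ), ((f (u / c) - 1 : ℝ) : ℂ) * Complex.exp (-s * u) = c * G (c * s) := by
    have hscale := integral_comp_mul_left_Ioi
      (fun u : ℝ ↦ ((f (u / c) - 1 : ℝ) : ℂ) * Complex.exp (-s * u)) 0 hc
    simp only [mul_zero, mul_div_cancel_left₀ _ hc.ne', Complex.ofReal_mul, Complex.real_smul]
      at hscale
    rw [← hlaplace _ (by simpa using mul_pos hc hs)]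
    simp_rw [show ∀ u : ℝ, -(c * s) * u = -s * (c * u) by intro u; ring]
    rw [hscale, ← mul_assoc, Complex.ofReal_inv, mul_inv_cancel₀ (mod_cast hc.ne'), one_mul]
  have hsub := tendsto_integral_mul_fejerKernel_of_laplace (h := fun u ↦ f (u / c) - 1)
    (M := M + 1) (G := fun s ↦ c * G (c * s)) (by fun_prop)
    (fun u ↦ abs_le.2 ⟨by linarith [hnonneg (u / c), hbound (u / c)], by linarith [hbound (u / c)]⟩)
    (continuousOn_const.mul (hG.comp (by fun_prop) fun s hs ↦ by
      simpa using mul_nonneg hc.le hs)) hlaplace_scaled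
  have hadd := hsub.add tendsto_setIntegral_Ioi_fejerKernel_sub
  rw [zero_add] at hadd
  refine hadd.congr fun v ↦ ?_
  have hint := integrable_mul_fejerKernel_sub hmeas hnonneg hbound c v
  have hkernel := integrable_fejerKernel.comp_sub_left v
  simp only [sub_mul, one_mul]
  rw [integral_sub hint.integrableOn hkernel.integrableOn, sub_add_cancel, fejerMean]

lemma le_mul_exp_of_monotone_mul_exp (hmono : Monotone fun u ↦ f u * exp u)
    (hnonneg : ∀ u, 0 ≤ f u) {u v d : ℝ} (huv : u ≤ v) (hd : v - u ≤ d) :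
    f u ≤ f v * exp d :=
  calc f u ≤ f v * exp (v - u) := by
        rw [exp_sub, ← mul_div_assoc, le_div_iff₀ (exp_pos u)]
        exact hmono huv
    _ ≤ f v * exp d := mul_le_mul_of_nonneg_left (exp_le_exp.2 hd) (hnonneg v)

lemma mul_setIntegral_fejerKernel_le_fejerMean (hmeas : Measurable f) (hnonneg : ∀ u, 0 ≤ f u)
    (hbound : ∀ u, f u ≤ M) (hmono : Monotone fun u ↦ f u * exp u) {c u : ℝ} (hc : 0 < c)
    (hu : 0 < u) (R : ℝ) :
    f u * exp (-(2 * R / c)) * ∫ x in Icc (-R) R, fejerKernel x ≤ fejerMean f c (c * u + R) := by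
  set v := c * u + R
  have hint := integrable_mul_fejerKernel_sub hmeas hnonneg hbound c v
  have hsub : Icc (v - R) (v + R) ⊆ Ioi 0 := fun w hw ↦
    (mul_pos hc hu).trans_le (by linarith [hw.1])
  rw [← setIntegral_Icc_fejerKernel_sub R v, ← integral_const_mul]
  refine (setIntegral_mono_on ((integrable_fejerKernel.comp_sub_left v).const_mul _).integrableOn
    hint.integrableOn measurableSet_Icc fun w hw ↦ ?_).trans
    (setIntegral_mono_set hint.integrableOn
      (ae_of_all _ fun w ↦ mul_nonneg (hnonneg _) (fejerKernel_nonneg _)) hsub.eventuallyLE)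
  refine mul_le_mul_of_nonneg_right ?_ (fejerKernel_nonneg _)
  rw [exp_neg, mul_inv_le_iff₀ (exp_pos _)]
  refine le_mul_exp_of_monotone_mul_exp hmono hnonneg ?_ ?_
  · rw [le_div_iff₀ hc]
    linarith [hw.1]
  · rw [div_sub' hc.ne', div_le_div_iff_of_pos_right hc]
    linarith [hw.2]

lemma fejerMean_le (hmeas : Measurable f) (hnonneg : ∀ u, 0 ≤ f u) (hbound : ∀ u, f u ≤ M)
    (hmono : Monotone fun u ↦ f u * exp u) {c : ℝ} (hc : 0 < c) (R u : ℝ) :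
    fejerMean f c (c * u - R) ≤ f u * exp (2 * R / c) * (∫ x, fejerKernel x) +
      M * ((∫ x, fejerKernel x) - ∫ x in Icc (-R) R, fejerKernel x) := by
  set v := c * u - R
  set W := Icc (v - R) (v + R)
  have hint := integrable_mul_fejerKernel_sub hmeas hnonneg hbound c v
  have hkernel := integrable_fejerKernel.comp_sub_left v
  have hinside : ∫ w in W, f (w / c) * fejerKernel (v - w) ≤
      f u * exp (2 * R / c) * ∫ x, fejerKernel x := by
    rw [← integral_sub_left_eq_self fejerKernel volume v, ← integral_const_mul]
    refine (setIntegral_mono_on hint.integrableOn (hkernel.const_mul _).integrableOn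
      measurableSet_Icc fun w hw ↦ mul_le_mul_of_nonneg_right
        (le_mul_exp_of_monotone_mul_exp hmono hnonneg ?_ ?_) (fejerKernel_nonneg _)).trans
      (setIntegral_le_integral (hkernel.const_mul _) (ae_of_all _ fun w ↦
        mul_nonneg (mul_nonneg (hnonneg u) (exp_pos _).le) (fejerKernel_nonneg _)))
    · rw [div_le_iff₀ hc]
      linarith [hw.2]
    · rw [sub_div' hc.ne', div_le_div_iff_of_pos_right hc]
      linarith [hw.1]
  have houtside : ∫ w in Wᶜ, f (w / c) * fejerKernel (v - w) ≤
      M * ((∫ x, fejerKernel x) - ∫ x in Icc (-R) R, fejerKernel x) := by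
    rw [← setIntegral_Icc_fejerKernel_sub R v, ← integral_sub_left_eq_self fejerKernel volume v,
      ← setIntegral_compl measurableSet_Icc hkernel, ← integral_const_mul]
    exact setIntegral_mono_on hint.integrableOn (hkernel.const_mul _).integrableOn
      measurableSet_Icc.compl fun w _ ↦
        mul_le_mul_of_nonneg_right (hbound _) (fejerKernel_nonneg _)
  calc fejerMean f c v ≤ ∫ w, f (w / c) * fejerKernel (v - w) :=
        setIntegral_le_integral hint
          (ae_of_all _ fun w ↦ mul_nonneg (hnonneg _) (fejerKernel_nonneg _))
    _ = (∫ w in W, f (w / c) * fejerKernel (v - w)) +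
          ∫ w in Wᶜ, f (w / c) * fejerKernel (v - w) :=
        (integral_add_compl measurableSet_Icc hint).symm
    _ ≤ _ := add_le_add hinside houtside

/-- In the comparison of `f` with its means take windows of radius `R` at scale `c = R ^ 2`: the
factors `exp (± 2 * R / c)` and the mass of the kernel outside the window both become negligible. -/
theorem tendsto_one_of_continuousOn_laplace (hmeas : Measurable f) (hnonneg : ∀ u, 0 ≤ f u)
    (hbound : ∀ u, f u ≤ M) (hmono : Monotone fun u ↦ f u * exp u)
    (hG : ContinuousOn G {s | 0 ≤ s.re})
    (hlaplace : ∀ s : ℂ, 0 < s.re →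
      ∫ u in Ioi (0 : ℝ), ((f u - 1 : ℝ) : ℂ) * Complex.exp (-s * u) = G s) :
    Tendsto f atTop (𝓝 1) := by
  set I := ∫ x, fejerKernel x
  have hI : 0 < I := integral_fejerKernel_pos
  set J : ℝ → ℝ := fun R ↦ ∫ x in Icc (-R) R, fejerKernel x
  have hJ : Tendsto J atTop (𝓝 I) := tendsto_setIntegral_Icc_fejerKernel
  have hmean {R : ℝ} (hR : 0 < R) : Tendsto (fejerMean f (R ^ 2)) atTop (𝓝 I) :=
    tendsto_fejerMean hmeas hnonneg hbound hG hlaplace (pow_pos hR 2)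
  have hratio : Tendsto (fun R : ℝ ↦ 2 * R / R ^ 2) atTop (𝓝 0) := by
    refine (tendsto_const_nhds (x := (2 : ℝ)).div_atTop tendsto_id).congr' ?_
    filter_upwards [eventually_ne_atTop 0] with R hR
    simp only [id]
    field_simp
  have hshift {R : ℝ} (hR : 0 < R) (d : ℝ) : Tendsto (fun u ↦ R ^ 2 * u + d) atTop atTop :=
    tendsto_atTop_add_const_right _ _ (tendsto_id.const_mul_atTop (pow_pos hR 2))
  refine tendsto_order.2 ⟨fun b hb ↦ ?_, fun b hb ↦ ?_⟩
  · have hlim : Tendsto (fun R ↦ b * exp (2 * R / R ^ 2) * I + M * (I - J R)) atTop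
        (𝓝 (b * exp 0 * I + M * (I - I))) :=
      ((hratio.rexp.const_mul b).mul_const I).add ((hJ.const_sub I).const_mul M)
    obtain ⟨R, hlt, hR⟩ := ((hlim.eventually_lt_const (u := I) (by
      simpa using mul_lt_of_lt_one_left hI hb)).and (eventually_gt_atTop 0)).exists
    filter_upwards [(hshift hR (-R)).eventually ((hmean hR).eventually_const_lt hlt)] with u hu
    have hle := fejerMean_le hmeas hnonneg hbound hmono (pow_pos hR 2) R u
    have hcomp : b * exp (2 * R / R ^ 2) * I < f u * exp (2 * R / R ^ 2) * I :=
      lt_of_add_lt_add_right (hu.trans_le hle)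
    exact lt_of_mul_lt_mul_right (lt_of_mul_lt_mul_right hcomp hI.le) (exp_pos _).le
  · have hlim : Tendsto (fun R ↦ b * exp (-(2 * R / R ^ 2)) * J R) atTop
        (𝓝 (b * exp (-0) * I)) :=
      (hratio.neg.rexp.const_mul b).mul hJ
    obtain ⟨R, ⟨hlt, hJR⟩, hR⟩ := (((hlim.eventually_const_lt (u := I) (by
      simpa using (lt_mul_iff_one_lt_left hI).2 hb)).and (hJ.eventually_const_lt hI)).and
        (eventually_gt_atTop 0)).exists
    filter_upwards [(hshift hR R).eventually ((hmean hR).eventually_lt_const hlt),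
      eventually_gt_atTop 0] with u hu hu0
    have hcomp := (mul_setIntegral_fejerKernel_le_fejerMean hmeas hnonneg hbound hmono
      (pow_pos hR 2) hu0 R).trans_lt hu
    exact lt_of_mul_lt_mul_right (lt_of_mul_lt_mul_right hcomp hJR.le) (exp_pos _).le

end Tauberian

section PrimeNumberTheorem

open Real Set Filter Topology MeasureTheory Chebyshev
open ArithmeticFunction hiding log

/-- The Chebyshev quotient `ψ x / x` at `x = exp u`, a bounded function whose Laplace transform is
governed by `-ζ' / ζ`. -/
noncomputable def psiQuotient (u : ℝ) : ℝ :=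
  ψ (exp u) * exp (-u)

lemma psiQuotient_nonneg (u : ℝ) : 0 ≤ psiQuotient u :=
  mul_nonneg (psi_nonneg _) (exp_pos _).le

lemma measurable_psiQuotient : Measurable psiQuotient := by
  have hpsi : Measurable ψ := psi_mono.measurable
  unfold psiQuotient
  fun_prop

lemma psiQuotient_le (u : ℝ) : psiQuotient u ≤ log 4 + 4 := by
  rw [psiQuotient, exp_neg, mul_inv_le_iff₀ (exp_pos u)]
  exact psi_le_const_mul_self (exp_pos u).le

lemma monotone_psiQuotient_mul_exp : Monotone fun u ↦ psiQuotient u * exp u := fun u v huv ↦ by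
  simpa only [psiQuotient, exp_neg, inv_mul_cancel_right₀ (exp_pos _).ne'] using
    psi_mono (exp_monotone huv)

/-- The function `(-ζ' / ζ (1 + s) - 1 / s - 1) / (1 + s)`; `LFunctionResidueClassAux` for the
modulus `1` is the continuous extension of `-ζ' / ζ (s) - 1 / (s - 1)` to `1 ≤ s.re`. -/
noncomputable def psiQuotientLaplace (s : ℂ) : ℂ :=
  (vonMangoldt.LFunctionResidueClassAux (1 : ZMod 1) (1 + s) - 1) / (1 + s)

lemma continuousOn_psiQuotientLaplace : ContinuousOn psiQuotientLaplace {s | 0 ≤ s.re} := by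
  refine ContinuousOn.div (ContinuousOn.sub ?_ continuousOn_const) (by fun_prop) fun s hs hzero ↦ ?_
  · exact (vonMangoldt.continuousOn_LFunctionResidueClassAux (1 : ZMod 1)).comp (by fun_prop)
      fun s hs ↦ by simpa using hs
  · have hre : 1 + s.re = 0 := by simpa using congrArg Complex.re hzero
    linarith [show 0 ≤ s.re from hs]

lemma exp_image_Ioi_zero : exp '' Ioi 0 = Ioi 1 := by
  ext x
  refine ⟨?_, fun hx ↦ ⟨log x, log_pos hx, exp_log (zero_lt_one.trans hx)⟩⟩
  rintro ⟨y, hy, rfl⟩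
  exact one_lt_exp_iff.2 hy

lemma LSeries_vonMangoldt_eq_mul_integral_psi {s : ℂ} (hs : 1 < s.re) :
    LSeries (fun n ↦ ((vonMangoldt n : ℝ) : ℂ)) s =
      s * ∫ x in Ioi (1 : ℝ), (ψ x : ℂ) * (x : ℂ) ^ (-(s + 1)) := by
  have hpsi (x : ℝ) : ∑ k ∈ Finset.Icc 1 ⌊x⌋₊, vonMangoldt k = ψ x := rfl
  rw [LSeries_eq_mul_integral_of_nonneg _ zero_le_one hs ?_ fun _ ↦ vonMangoldt_nonneg]
  · simp_rw [← hpsi]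
    push_cast
    rfl
  · refine Asymptotics.IsBigO.of_bound (log 4 + 4) (.of_forall fun n ↦ ?_)
    have hbound := psi_le_const_mul_self (Nat.cast_nonneg (α := ℝ) n)
    have hsum := hpsi n
    rw [Nat.floor_natCast] at hsum
    simpa [hsum, abs_of_nonneg (psi_nonneg _)] using hbound

lemma integral_psiQuotient_mul_exp {s : ℂ} (hs : 0 < s.re) :
    ∫ u in Ioi (0 : ℝ), (psiQuotient u : ℂ) * Complex.exp (-s * u) =
      LSeries (fun n ↦ ((vonMangoldt n : ℝ) : ℂ)) (1 + s) / (1 + s) := by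
  have hs1 : 1 + s ≠ 0 := fun h ↦ by
    have hre : 1 + s.re = 0 := by simpa using congrArg Complex.re h
    linarith
  rw [LSeries_vonMangoldt_eq_mul_integral_psi (by simpa using hs), mul_div_cancel_left₀ _ hs1,
    ← exp_image_Ioi_zero, integral_image_eq_integral_abs_deriv_smul measurableSet_Ioi
      (fun x _ ↦ (hasDerivAt_exp x).hasDerivWithinAt) exp_injective.injOn]
  refine integral_congr_ae (ae_of_all _ fun u ↦ ?_)
  have hcpow : ((exp u : ℝ) : ℂ) ^ (-(1 + s + 1)) = Complex.exp (u * -(1 + s + 1)) := by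
    rw [Complex.cpow_def_of_ne_zero (mod_cast (exp_pos u).ne'),
      ← Complex.ofReal_log (exp_pos u).le, log_exp]
  have hexp : Complex.exp (-u) * Complex.exp (-s * u) =
      Complex.exp u * Complex.exp (u * -(1 + s + 1)) := by
    rw [← Complex.exp_add, ← Complex.exp_add]
    ring_nf
  simp only [psiQuotient, abs_of_pos (exp_pos u), Complex.real_smul, hcpow]
  push_cast
  linear_combination (ψ (exp u) : ℂ) * hexp

lemma residueClass_one_eq_vonMangoldt (n : ℕ) :
    vonMangoldt.residueClass (1 : ZMod 1) n = vonMangoldt n := by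
  rw [vonMangoldt.residueClass, indicator_of_mem]
  exact Subsingleton.elim _ _

lemma integral_psiQuotient_sub_one_mul_exp {s : ℂ} (hs : 0 < s.re) :
    ∫ u in Ioi (0 : ℝ), ((psiQuotient u - 1 : ℝ) : ℂ) * Complex.exp (-s * u) =
      psiQuotientLaplace s := by
  have hs0 : s ≠ 0 := fun h ↦ by simp [h] at hs
  have hs1 : 1 + s ≠ 0 := fun h ↦ by
    have hre : 1 + s.re = 0 := by simpa using congrArg Complex.re h
    linarith
  have hexp : IntegrableOn (fun u : ℝ ↦ Complex.exp (-s * u)) (Ioi 0) :=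
    integrableOn_exp_mul_complex_Ioi (by simpa using hs) 0
  have hpsi : IntegrableOn (fun u : ℝ ↦ (psiQuotient u : ℂ) * Complex.exp (-s * u)) (Ioi 0) := by
    have hmeas := measurable_psiQuotient
    refine Integrable.bdd_mul (c := log 4 + 4) hexp
      (Measurable.aestronglyMeasurable (by fun_prop)) (ae_of_all _ fun u ↦ ?_)
    rw [Complex.norm_real, norm_of_nonneg (psiQuotient_nonneg u)]
    exact psiQuotient_le u
  have hexp_integral : ∫ u in Ioi (0 : ℝ), Complex.exp (-s * u) = 1 / s := by
    rw [integral_exp_mul_complex_Ioi (by simpa using hs)]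
    simp
  have hext := vonMangoldt.eqOn_LFunctionResidueClassAux (a := (1 : ZMod 1)) isUnit_one
    (show 1 + s ∈ {s : ℂ | 1 < s.re} by simpa using hs)
  simp only [residueClass_one_eq_vonMangoldt, Nat.totient_one, Nat.cast_one, inv_one,
    add_sub_cancel_left] at hext
  simp only [Complex.ofReal_sub, Complex.ofReal_one, sub_mul, one_mul]
  rw [integral_sub hpsi hexp, hexp_integral, integral_psiQuotient_mul_exp hs, psiQuotientLaplace,
    hext]
  field_simp
  ring

theorem tendsto_psi_div_self : Tendsto (fun x : ℝ ↦ ψ x / x) atTop (𝓝 1) := by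
  have hlim : Tendsto psiQuotient atTop (𝓝 1) :=
    tendsto_one_of_continuousOn_laplace measurable_psiQuotient psiQuotient_nonneg psiQuotient_le
      monotone_psiQuotient_mul_exp continuousOn_psiQuotientLaplace
      fun _ ↦ integral_psiQuotient_sub_one_mul_exp
  refine (hlim.comp tendsto_log_atTop).congr' ?_
  filter_upwards [eventually_gt_atTop 0] with x hx
  simp [psiQuotient, exp_neg, exp_log hx, div_eq_mul_inv]

theorem tendsto_theta_div_self : Tendsto (fun x : ℝ ↦ θ x / x) atTop (𝓝 1) := by
  have hsqrt : sqrt =o[atTop] fun x : ℝ ↦ x := by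
    have hlim : Tendsto (fun x ↦ √x / x) atTop (𝓝 0) :=
      tendsto_sqrt_atTop.inv_tendsto_atTop.congr fun _ ↦ sqrt_div_self.symm
    exact (Asymptotics.isLittleO_iff_tendsto' <|
      (eventually_ne_atTop 0).mono fun _ hx h ↦ absurd h hx).2 hlim
  have hdiff := (isBigO_psi_sub_theta_sqrt.trans_isLittleO hsqrt).tendsto_div_nhds_zero
  rw [← sub_zero 1]
  refine (tendsto_psi_div_self.sub hdiff).congr fun x ↦ ?_
  simp only [Pi.sub_apply]
  ring

lemma tendsto_comp_mul_natCast_div {F : ℝ → ℝ} (hF : Tendsto (fun x ↦ F x / x) atTop (𝓝 1))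
    {a : ℝ} (ha : 0 < a) : Tendsto (fun n : ℕ ↦ F (a * n) / n) atTop (𝓝 a) := by
  have hscale : Tendsto (fun n : ℕ ↦ a * (n : ℝ)) atTop atTop :=
    tendsto_natCast_atTop_atTop.const_mul_atTop ha
  have hlim := (hF.comp hscale).const_mul a
  rw [mul_one] at hlim
  refine hlim.congr fun n ↦ ?_
  simp only [Function.comp]
  field_simp

end PrimeNumberTheorem

section SechIntegral

open Real Set Filter Topology MeasureTheory Polynomial

lemma integrable_exp_neg_mul_abs {c : ℝ} (hc : 0 < c) :
    Integrable fun y : ℝ ↦ exp (-c * |y|) := by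
  rw [← integrableOn_univ, ← Iic_union_Ioi (a := (0 : ℝ))]
  refine IntegrableOn.union ?_ ?_
  · refine (integrableOn_exp_mul_Iic hc 0).congr_fun (fun y hy ↦ ?_) measurableSet_Iic
    simp only [abs_of_nonpos (mem_Iic.1 hy), neg_mul_neg]
  · refine (integrableOn_exp_mul_Ioi (neg_lt_zero.2 hc) 0).congr_fun (fun y hy ↦ ?_)
      measurableSet_Ioi
    simp only [abs_of_pos (mem_Ioi.1 hy)]

lemma integrable_one_add_abs_pow_mul_exp_neg {c : ℝ} (hc : 0 < c) (k : ℕ) :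
    Integrable fun y : ℝ ↦ (1 + |y|) ^ k * exp (-c * |y|) := by
  have hhalf : 0 < c / 2 := half_pos hc
  refine ((integrable_exp_neg_mul_abs hhalf).const_mul
    (k.factorial / (c / 2) ^ k * exp (c / 2))).mono'
    (Continuous.aestronglyMeasurable (by fun_prop)) (ae_of_all _ fun y ↦ ?_)
  have hpow : (1 + |y|) ^ k ≤ k.factorial / (c / 2) ^ k * exp (c / 2 * (1 + |y|)) := by
    have hexp := pow_div_factorial_le_exp (c / 2 * (1 + |y|)) (by positivity) k
    rw [div_le_iff₀ (by positivity), mul_pow] at hexp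
    rw [div_mul_eq_mul_div, le_div_iff₀ (by positivity)]
    linarith
  rw [norm_of_nonneg (by positivity)]
  calc (1 + |y|) ^ k * exp (-c * |y|)
      ≤ k.factorial / (c / 2) ^ k * exp (c / 2 * (1 + |y|)) * exp (-c * |y|) := by gcongr
    _ = k.factorial / (c / 2) ^ k * exp (c / 2) * exp (-(c / 2) * |y|) := by
      rw [mul_assoc, mul_assoc, ← exp_add, ← exp_add]
      ring_nf

/-- The probability density `π / (2 cosh² (π y))`, against which the remainder of the
approximations is integrated; it is the derivative of `y ↦ sigmoid (2 π y)`. -/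
noncomputable def sechWeight (y : ℝ) : ℝ :=
  π / 2 / cosh (π * y) ^ 2

lemma sechWeight_pos (y : ℝ) : 0 < sechWeight y :=
  div_pos (half_pos pi_pos) (pow_pos (cosh_pos _) 2)

@[fun_prop]
lemma continuous_sechWeight : Continuous sechWeight :=
  Continuous.div (by fun_prop) (by fun_prop) fun y ↦ (pow_pos (cosh_pos (π * y)) 2).ne'

lemma norm_sechWeight (y : ℝ) : ‖(sechWeight y : ℂ)‖ = sechWeight y := by
  rw [Complex.norm_real, norm_of_nonneg (sechWeight_pos y).le]

lemma sechWeight_le (y : ℝ) : sechWeight y ≤ 2 * π * exp (-(2 * π) * |y|) := by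
  have hcosh : exp (π * |y|) / 2 ≤ cosh (π * y) := by
    rw [← cosh_abs, abs_mul, abs_of_pos pi_pos, cosh_eq]
    linarith [exp_pos (-(π * |y|))]
  have hexp : exp (-(2 * π) * |y|) * exp (π * |y|) ^ 2 = 1 := by
    rw [← exp_nat_mul, ← exp_add, exp_eq_one_iff]
    push_cast
    ring
  rw [sechWeight, div_le_iff₀ (pow_pos (cosh_pos _) 2)]
  calc π / 2 = 2 * π * exp (-(2 * π) * |y|) * (exp (π * |y|) / 2) ^ 2 := by
        linear_combination -π / 2 * hexp
    _ ≤ 2 * π * exp (-(2 * π) * |y|) * cosh (π * y) ^ 2 := by gcongr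

lemma integrable_one_add_abs_pow_mul_sechWeight (j : ℕ) :
    Integrable fun y : ℝ ↦ (1 + |y|) ^ j * sechWeight y := by
  refine ((integrable_one_add_abs_pow_mul_exp_neg two_pi_pos j).const_mul (2 * π)).mono'
    (Continuous.aestronglyMeasurable (by fun_prop)) (ae_of_all _ fun y ↦ ?_)
  rw [norm_mul, norm_of_nonneg (by positivity), norm_of_nonneg (sechWeight_pos y).le]
  calc (1 + |y|) ^ j * sechWeight y ≤ (1 + |y|) ^ j * (2 * π * exp (-(2 * π) * |y|)) := by
        gcongr
        exact sechWeight_le y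
    _ = 2 * π * ((1 + |y|) ^ j * exp (-(2 * π) * |y|)) := by ring

lemma hasDerivAt_sigmoid_two_pi_mul (y : ℝ) :
    HasDerivAt (fun y ↦ sigmoid (2 * π * y)) (sechWeight y) y := by
  refine ((hasDerivAt_sigmoid _).comp y (hasDerivAt_const_mul (2 * π))).congr_deriv ?_
  have hexp : exp (-(2 * π * y)) = (exp (π * y) ^ 2)⁻¹ := by
    rw [← exp_nat_mul, ← exp_neg]
    ring_nf
  rw [sechWeight, cosh_eq, sigmoid_def, hexp, exp_neg]
  field_simp
  ring

lemma one_sub_sigmoid (x : ℝ) : 1 - sigmoid x = exp (-x) * sigmoid x := by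
  rw [← sigmoid_neg, ← sigmoid_mul_rexp_neg, mul_comm]

lemma sigmoid_cpow_mul_one_sub_sigmoid_cpow_neg (x : ℝ) (a : ℂ) :
    (sigmoid x : ℂ) ^ a * (1 - (sigmoid x : ℂ)) ^ (-a) = Complex.exp (a * x) := by
  have hsig := sigmoid_pos x
  have hcast : (1 - (sigmoid x : ℂ)) = ((exp (-x) * sigmoid x : ℝ) : ℂ) := by
    rw [← one_sub_sigmoid]
    push_cast
    rfl
  rw [hcast, Complex.cpow_def_of_ne_zero (mod_cast hsig.ne'),
    Complex.cpow_def_of_ne_zero (mod_cast (by positivity : exp (-x) * sigmoid x ≠ 0)),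
    ← Complex.ofReal_log hsig.le, ← Complex.ofReal_log (by positivity),
    log_mul (exp_pos _).ne' hsig.ne', log_exp, ← Complex.exp_add]
  push_cast
  ring_nf

lemma betaIntegral_one_add_one_sub (a : ℂ) :
    Complex.betaIntegral (1 + a) (1 - a) =
      ∫ y : ℝ, Complex.exp (2 * π * a * y) * sechWeight y := by
  have himage : (fun y : ℝ ↦ sigmoid (2 * π * y)) '' univ = Ioo 0 1 := by
    rw [image_univ, ← range_sigmoid]
    exact (mul_left_surjective₀ two_pi_pos.ne').range_comp sigmoid
  have hinj : InjOn (fun y : ℝ ↦ sigmoid (2 * π * y)) univ :=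
    (sigmoid_injective.comp (mul_right_injective₀ two_pi_pos.ne')).injOn
  rw [Complex.betaIntegral, intervalIntegral.integral_of_le zero_le_one,
    integral_Ioc_eq_integral_Ioo, ← himage, integral_image_eq_integral_abs_deriv_smul
      MeasurableSet.univ (fun y _ ↦ (hasDerivAt_sigmoid_two_pi_mul y).hasDerivWithinAt) hinj,
    setIntegral_univ]
  refine integral_congr_ae (ae_of_all _ fun y ↦ ?_)
  simp only [abs_of_pos (sechWeight_pos y), Complex.real_smul, add_sub_cancel_left,
    sub_sub_cancel_left, sigmoid_cpow_mul_one_sub_sigmoid_cpow_neg]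
  push_cast
  ring_nf

lemma integral_exp_mul_sechWeight {a : ℂ} (ha : |a.re| < 1) (ha0 : a ≠ 0) :
    ∫ y : ℝ, Complex.exp (2 * π * a * y) * sechWeight y = π * a / Complex.sin (π * a) := by
  obtain ⟨hlow, hup⟩ := abs_lt.1 ha
  have hbeta := Complex.Gamma_mul_Gamma_eq_betaIntegral (s := 1 + a) (t := 1 - a)
    (by simp only [Complex.add_re, Complex.one_re]; linarith)
    (by simp only [Complex.sub_re, Complex.one_re]; linarith)
  have hGamma_two : Complex.Gamma (1 + a + (1 - a)) = 1 := by
    rw [show 1 + a + (1 - a) = 2 by ring, Complex.Gamma_ofNat_eq_factorial]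
    simp
  rw [hGamma_two, one_mul, betaIntegral_one_add_one_sub, add_comm 1 a,
    Complex.Gamma_add_one a ha0, mul_assoc, Complex.Gamma_mul_Gamma_one_sub] at hbeta
  rw [← hbeta]
  ring

/-- The point `1/2 + i y` of the line `Re s = 1/2`, the symmetry axis of `s ↦ 1 - s`. -/
noncomputable def criticalLine (y : ℝ) : ℂ :=
  1 / 2 + Complex.I * y

@[fun_prop]
lemma continuous_criticalLine : Continuous criticalLine := by
  unfold criticalLine
  fun_prop

lemma norm_criticalLine_le (y : ℝ) : ‖criticalLine y‖ ≤ 1 + |y| := by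
  have htriangle := norm_add_le (1 / 2 : ℂ) (Complex.I * y)
  simp only [norm_div, norm_one, Complex.norm_ofNat, norm_mul, Complex.norm_I, one_mul,
    Complex.norm_real, norm_eq_abs] at htriangle
  unfold criticalLine
  linarith

lemma norm_exp_mul_criticalLine (t y : ℝ) :
    ‖Complex.exp (t * criticalLine y)‖ = exp (t / 2) := by
  rw [Complex.norm_exp]
  simp [criticalLine, div_eq_mul_inv]

/-- The integral `∫ s ^ j e ^ (t s) π / (2 cosh² (π y)) dy` along the line `s = 1/2 + i y`. -/
noncomputable def sechMoment (j : ℕ) (t : ℝ) : ℂ :=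
  ∫ y, criticalLine y ^ j * Complex.exp (t * criticalLine y) * sechWeight y

lemma norm_sechMoment_integrand_le (j : ℕ) {t : ℝ} (ht : t ≤ 0) (y : ℝ) :
    ‖criticalLine y ^ j * Complex.exp (t * criticalLine y) * sechWeight y‖ ≤
      (1 + |y|) ^ j * sechWeight y := by
  have hweight := (sechWeight_pos y).le
  have hexp : exp (t / 2) ≤ 1 := exp_le_one_iff.2 (by linarith)
  rw [norm_mul, norm_mul, norm_pow, norm_exp_mul_criticalLine, norm_sechWeight]
  calc ‖criticalLine y‖ ^ j * exp (t / 2) * sechWeight y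
      ≤ (1 + |y|) ^ j * 1 * sechWeight y := by
        gcongr
        exact norm_criticalLine_le y
    _ = (1 + |y|) ^ j * sechWeight y := by ring

lemma integrable_sechMoment_integrand (j : ℕ) {t : ℝ} (ht : t ≤ 0) :
    Integrable fun y ↦ criticalLine y ^ j * Complex.exp (t * criticalLine y) * sechWeight y :=
  (integrable_one_add_abs_pow_mul_sechWeight j).mono'
    (Continuous.aestronglyMeasurable (by fun_prop))
    (ae_of_all _ (norm_sechMoment_integrand_le j ht))

lemma hasDerivAt_sechMoment (j : ℕ) {t : ℝ} (ht : t < 0) :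
    HasDerivAt (sechMoment j) (sechMoment (j + 1) t) t := by
  refine (hasDerivAt_integral_of_dominated_loc_of_deriv_le
    (F := fun (t y : ℝ) ↦ criticalLine y ^ j * Complex.exp (t * criticalLine y) * sechWeight y)
    (F' := fun (t y : ℝ) ↦
      criticalLine y ^ (j + 1) * Complex.exp (t * criticalLine y) * sechWeight y)
    (bound := fun y ↦ (1 + |y|) ^ (j + 1) * sechWeight y) (Iio_mem_nhds ht)
    (.of_forall fun _ ↦ Continuous.aestronglyMeasurable (by fun_prop))
    (integrable_sechMoment_integrand j ht.le) (Continuous.aestronglyMeasurable (by fun_prop))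
    (ae_of_all _ fun y _ hx ↦ norm_sechMoment_integrand_le _ (mem_Iio.1 hx).le y)
    (integrable_one_add_abs_pow_mul_sechWeight _) (ae_of_all _ fun y x _ ↦ ?_)).2
  have hlinear : HasDerivAt (fun x : ℝ ↦ (x : ℂ) * criticalLine y) (criticalLine y) x := by
    simpa using (Complex.ofRealCLM.hasDerivAt (x := x)).mul_const (criticalLine y)
  refine ((hlinear.cexp.const_mul (criticalLine y ^ j)).mul_const _).congr_deriv ?_
  ring

lemma sechMoment_zero {t : ℝ} (ht : t ≠ 0) :
    sechMoment 0 t = -(t * exp t / (1 - exp t) : ℝ) := by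
  have hpi : (π : ℂ) ≠ 0 := mod_cast pi_ne_zero
  have htC : (t : ℂ) ≠ 0 := mod_cast ht
  set a : ℂ := (t / (2 * π) : ℝ) * Complex.I with ha
  have htwo_pi : 2 * π * a = Complex.I * t := by
    rw [ha]
    push_cast
    field_simp
  have hintegral := integral_exp_mul_sechWeight (a := a)
    (by rw [ha, Complex.re_ofReal_mul, Complex.I_re, mul_zero, abs_zero]; exact one_pos)
    fun h0 ↦ by simp [h0, htC] at htwo_pi
  have hmoment : sechMoment 0 t =
      Complex.exp (t / 2) * ∫ y : ℝ, Complex.exp (2 * π * a * y) * sechWeight y := by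
    rw [sechMoment, ← integral_const_mul]
    refine integral_congr_ae (ae_of_all _ fun y ↦ ?_)
    simp only [htwo_pi, criticalLine, pow_zero, one_mul, ← mul_assoc, ← Complex.exp_add]
    ring_nf
  have hpi_a : π * a = (t / 2 : ℝ) * Complex.I := by
    push_cast
    linear_combination htwo_pi / 2
  have hreal : exp (t / 2) * (t / 2 / sinh (t / 2)) = -(t * exp t / (1 - exp t)) := by
    have hexp : exp t = exp (t / 2) ^ 2 := by
      rw [← exp_nat_mul]
      ring_nf
    have hden : exp (t / 2) ^ 2 - 1 ≠ 0 := by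
      rw [← hexp, sub_ne_zero, Ne, exp_eq_one_iff]
      exact ht
    have hden' : 1 - exp (t / 2) ^ 2 ≠ 0 := by
      rwa [← neg_ne_zero, neg_sub]
    rw [sinh_eq, exp_neg, hexp]
    field_simp
    ring
  rw [hmoment, hintegral, hpi_a, Complex.sin_mul_I, mul_div_mul_right _ _ Complex.I_ne_zero,
    ← Complex.ofReal_neg, ← hreal]
  push_cast
  rfl

/-- The series `∑ k ^ j e ^ (t k)` over `k ≥ 1`. -/
noncomputable def powExpSum (j : ℕ) (t : ℝ) : ℝ :=
  ∑' k : ℕ, ((k : ℝ) + 1) ^ j * exp (t * ((k : ℝ) + 1))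

lemma summable_powExpSum (j : ℕ) {t : ℝ} (ht : t < 0) :
    Summable fun k : ℕ ↦ ((k : ℝ) + 1) ^ j * exp (t * ((k : ℝ) + 1)) := by
  have hsum := summable_pow_mul_exp_neg_nat_mul j (neg_pos.2 ht)
  simpa using (summable_nat_add_iff 1).2 hsum

lemma hasDerivAt_powExpSum (j : ℕ) {t : ℝ} (ht : t < 0) :
    HasDerivAt (powExpSum j) (powExpSum (j + 1) t) t := by
  have hhalf : t < t / 2 := by linarith
  refine hasDerivAt_tsum_of_isPreconnected
    (g := fun (k : ℕ) (t : ℝ) ↦ ((k : ℝ) + 1) ^ j * exp (t * ((k : ℝ) + 1)))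
    (g' := fun (k : ℕ) (t : ℝ) ↦ ((k : ℝ) + 1) ^ (j + 1) * exp (t * ((k : ℝ) + 1)))
    (summable_powExpSum (j + 1) (by linarith : t / 2 < 0)) isOpen_Iio (convex_Iio _).isPreconnected
    (fun k y _ ↦ ?_) (fun k y hy ↦ ?_) hhalf (summable_powExpSum j ht) hhalf
  · refine ((hasDerivAt_mul_const ((k : ℝ) + 1)).exp.const_mul _).congr_deriv ?_
    ring
  · rw [norm_of_nonneg (by positivity)]
    gcongr
    exact (mem_Iio.1 hy).le

lemma powExpSum_zero {t : ℝ} (ht : t < 0) : powExpSum 0 t = exp t / (1 - exp t) := by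
  have hterm (k : ℕ) : ((k : ℝ) + 1) ^ 0 * exp (t * ((k : ℝ) + 1)) = exp t * exp t ^ k := by
    rw [pow_zero, one_mul, ← exp_nat_mul, ← exp_add]
    ring_nf
  simp_rw [powExpSum, hterm]
  rw [tsum_mul_left, tsum_geometric_of_lt_one (exp_pos t).le (exp_lt_one_iff.2 ht), div_eq_mul_inv]

lemma sechMoment_eq (j : ℕ) {t : ℝ} (ht : t < 0) :
    sechMoment j t = -((t * powExpSum j t + j * powExpSum (j - 1) t : ℝ) : ℂ) := by
  induction j generalizing t with
  | zero =>
    rw [sechMoment_zero ht.ne, powExpSum_zero ht]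
    push_cast
    ring
  | succ j ih =>
    have hprev : HasDerivAt (fun t ↦ (j : ℝ) * powExpSum (j - 1) t) (j * powExpSum j t) t := by
      rcases j with _ | j
      · simpa using hasDerivAt_const t (0 : ℝ)
      · exact (hasDerivAt_powExpSum j ht).const_mul _
    have hsum := ((hasDerivAt_id t).mul (hasDerivAt_powExpSum j ht)).add hprev
    have hmoment := hsum.ofReal_comp.neg.congr_of_eventuallyEq <|
      (eventually_lt_nhds ht).mono fun x hx ↦ ih hx
    rw [(hasDerivAt_sechMoment j ht).unique hmoment]
    push_cast
    simp only [id]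
    ring

/-- The series `∑ G(k) e ^ (t k)` over `k ≥ 1`. -/
noncomputable def polyExpSum (t : ℝ) (G : ℝ[X]) : ℝ :=
  ∑' k : ℕ, G.eval ((k : ℝ) + 1) * exp (t * ((k : ℝ) + 1))

lemma summable_polyExpSum (G : ℝ[X]) {t : ℝ} (ht : t < 0) :
    Summable fun k : ℕ ↦ G.eval ((k : ℝ) + 1) * exp (t * ((k : ℝ) + 1)) := by
  induction G using Polynomial.induction_on' with
  | add p q hp hq => simpa [add_mul] using hp.add hq
  | monomial n a => simpa [mul_assoc] using (summable_powExpSum n ht).mul_left a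

lemma polyExpSum_add (G H : ℝ[X]) {t : ℝ} (ht : t < 0) :
    polyExpSum t (G + H) = polyExpSum t G + polyExpSum t H := by
  simp only [polyExpSum, eval_add, add_mul]
  exact (summable_polyExpSum G ht).tsum_add (summable_polyExpSum H ht)

lemma polyExpSum_C_mul (a : ℝ) (G : ℝ[X]) (t : ℝ) :
    polyExpSum t (C a * G) = a * polyExpSum t G := by
  simp only [polyExpSum, eval_mul, eval_C, mul_assoc, tsum_mul_left]

lemma polyExpSum_monomial (j : ℕ) (a t : ℝ) :
    polyExpSum t (monomial j a) = a * powExpSum j t := by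
  simp only [polyExpSum, powExpSum, eval_monomial, mul_assoc, tsum_mul_left]

lemma integrable_aeval_criticalLine (G : ℝ[X]) {t : ℝ} (ht : t ≤ 0) :
    Integrable fun y ↦
      G.aeval (criticalLine y) * Complex.exp (t * criticalLine y) * sechWeight y := by
  induction G using Polynomial.induction_on' with
  | add p q hp hq =>
    simp only [map_add, add_mul]
    exact hp.add hq
  | monomial n a =>
    simpa [mul_assoc, aeval_monomial] using
      (integrable_sechMoment_integrand n ht).const_mul (a : ℂ)

theorem polyExpSum_C_mul_add_derivative (G : ℝ[X]) {t : ℝ} (ht : t < 0) :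
    (polyExpSum t (C t * G + derivative G) : ℂ) =
      -∫ y, G.aeval (criticalLine y) * Complex.exp (t * criticalLine y) * sechWeight y := by
  induction G using Polynomial.induction_on' with
  | add p q hp hq =>
    have hsplit : C t * (p + q) + derivative (p + q) =
        (C t * p + derivative p) + (C t * q + derivative q) := by
      rw [derivative_add]
      ring
    rw [hsplit, polyExpSum_add _ _ ht, Complex.ofReal_add, hp, hq]
    simp only [map_add, add_mul]
    rw [integral_add (integrable_aeval_criticalLine p ht.le)
      (integrable_aeval_criticalLine q ht.le), neg_add]
  | monomial n a =>
    have hmoment : ∫ y, (monomial n a).aeval (criticalLine y) *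
        Complex.exp (t * criticalLine y) * sechWeight y = a * sechMoment n t := by
      rw [sechMoment, ← integral_const_mul]
      simp only [aeval_monomial, Complex.coe_algebraMap, mul_assoc]
    rw [hmoment, sechMoment_eq n ht, polyExpSum_add _ _ ht, polyExpSum_C_mul,
      derivative_monomial, polyExpSum_monomial, polyExpSum_monomial]
    push_cast
    ring

theorem abs_polyExpSum_C_mul_add_derivative_le (G : ℝ[X]) {t : ℝ} (ht : t < 0) :
    |polyExpSum t (C t * G + derivative G)| ≤
      ∫ y, ‖G.aeval (criticalLine y)‖ * sechWeight y := by
  have hnorm (y : ℝ) :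
      ‖G.aeval (criticalLine y) * Complex.exp (t * criticalLine y) * sechWeight y‖ =
        exp (t / 2) * (‖G.aeval (criticalLine y)‖ * sechWeight y) := by
    rw [norm_mul, norm_mul, norm_exp_mul_criticalLine, norm_sechWeight]
    ring
  have hnonneg : 0 ≤ ∫ y, ‖G.aeval (criticalLine y)‖ * sechWeight y :=
    integral_nonneg fun y ↦ mul_nonneg (norm_nonneg _) (sechWeight_pos y).le
  calc |polyExpSum t (C t * G + derivative G)|
      = ‖∫ y, G.aeval (criticalLine y) * Complex.exp (t * criticalLine y) * sechWeight y‖ := by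
        rw [← norm_eq_abs, ← Complex.norm_real, polyExpSum_C_mul_add_derivative G ht, norm_neg]
    _ ≤ exp (t / 2) * ∫ y, ‖G.aeval (criticalLine y)‖ * sechWeight y := by
        refine (norm_integral_le_integral_norm _).trans_eq ?_
        simp_rw [hnorm, integral_const_mul]
    _ ≤ ∫ y, ‖G.aeval (criticalLine y)‖ * sechWeight y :=
        mul_le_of_le_one_left hnonneg (exp_le_one_iff.2 (by linarith))

end SechIntegral

section IntegerValued

open Polynomial Finset

/-- The integer-valued polynomials with coefficients in `R`: those taking values in the image of
`ℤ` at every integer. They are used to show that certain exponential sums are integers. -/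
noncomputable def integerValued (R : Type*) [CommRing R] : Subring R[X] :=
  ⨅ k : ℤ, (Int.castRingHom R).range.comap (evalRingHom (k : R))

variable {R : Type*} [CommRing R]

lemma mem_integerValued {G : R[X]} :
    G ∈ integerValued R ↔ ∀ k : ℤ, ∃ n : ℤ, (n : R) = G.eval (k : R) := by
  simp [integerValued, Subring.mem_iInf]

lemma map_mem_integerValued (Q : ℤ[X]) : Q.map (Int.castRingHom R) ∈ integerValued R :=
  mem_integerValued.2 fun k ↦ ⟨Q.eval k, by simp⟩

lemma taylor_mem_integerValued {G : R[X]} (hG : G ∈ integerValued R) (c : ℤ) :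
    taylor (c : R) G ∈ integerValued R :=
  mem_integerValued.2 fun k ↦ by simpa [taylor_eval] using mem_integerValued.1 hG (k + c)

/-- The formal adjoint `P(-d/dX)` of the constant-coefficient operator `P(d/dX)`. Applied to `G`
inside `∑ G(k) e ^ (t k)`, it approximates multiplication of the sum by `P(t)`. -/
noncomputable def adjointDiffOp (P : R[X]) : R[X] →ₗ[R] R[X] :=
  aeval (-derivative : Module.End R R[X]) P

lemma neg_derivative_pow_apply (i : ℕ) (G : R[X]) :
    ((-derivative : Module.End R R[X]) ^ i) G = (-1 : R) ^ i • derivative^[i] G := by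
  induction i with
  | zero => simp
  | succ i ih => simp [pow_succ' _ i, ih, Function.iterate_succ_apply']

lemma adjointDiffOp_apply (P G : R[X]) :
    adjointDiffOp P G =
      ∑ i ∈ range (P.natDegree + 1), (P.coeff i * (-1) ^ i) • derivative^[i] G := by
  simp only [adjointDiffOp, aeval_eq_sum_range, LinearMap.sum_apply, LinearMap.smul_apply]
  refine sum_congr rfl fun i _ ↦ ?_
  rw [neg_derivative_pow_apply, smul_smul]

lemma derivative_taylor (r : R) (G : R[X]) :
    derivative (taylor r G) = taylor r (derivative G) := by
  simp [taylor_apply, derivative_comp]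

lemma taylor_adjointDiffOp (r : R) (P G : R[X]) :
    taylor r (adjointDiffOp P G) = adjointDiffOp P (taylor r G) := by
  have hcomm : Function.Commute derivative (taylor r : R[X] → R[X]) := derivative_taylor r
  simp only [adjointDiffOp_apply, map_sum, map_smul, (hcomm.iterate_left _).eq]

lemma eval_adjointDiffOp_eq_zero {P G : R[X]} {n : ℕ} {x : R} (hP : P.natDegree ≤ n)
    (hG : (X - C x) ^ (n + 1) ∣ G) : (adjointDiffOp P G).eval x = 0 := by
  rw [adjointDiffOp_apply, eval_finsetSum]
  refine sum_eq_zero fun i hi ↦ ?_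
  have hroot : (X - C x) ∣ derivative^[i] G :=
    (dvd_pow_self _ (by grind)).trans (pow_sub_dvd_iterate_derivative_of_pow_dvd i hG)
  rw [eval_smul, dvd_iff_isRoot.1 hroot, smul_zero]

lemma eval_adjointDiffOp_X_sub_C_pow (P : R[X]) (x : R) (n : ℕ) :
    (adjointDiffOp P ((X - C x) ^ n)).eval x = P.coeff n * (-1) ^ n * n.factorial := by
  simp only [adjointDiffOp_apply, eval_finsetSum, eval_smul, iterate_derivative_X_sub_pow,
    smul_eq_mul, nsmul_eq_mul]
  rw [sum_eq_single n]
  · simp [Nat.descFactorial_self]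
  · intro i _ hne
    rcases hne.lt_or_gt with hlt | hgt
    · simp [Nat.sub_ne_zero_of_lt hlt]
    · simp [Nat.descFactorial_of_lt hgt]
  · intro hn
    simp [coeff_eq_zero_of_natDegree_lt (show P.natDegree < n by simpa using hn)]

lemma adjointDiffOp_mul_mem_integerValued {f : R[X]} {n : ℕ}
    (hf : ∀ i ≤ n, derivative^[i] f ∈ integerValued R) {P : ℤ[X]} (hP : P.natDegree ≤ n)
    (Q : ℤ[X]) :
    adjointDiffOp (P.map (Int.castRingHom R)) (f * Q.map (Int.castRingHom R)) ∈
      integerValued R := by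
  rw [adjointDiffOp_apply]
  refine Subring.sum_mem _ fun i hi ↦ ?_
  have hi : i ≤ n := by grind [natDegree_map_le (f := Int.castRingHom R) (p := P)]
  have hcoeff : (P.map (Int.castRingHom R)).coeff i * (-1) ^ i = ((P.coeff i * (-1) ^ i : ℤ) : R) :=
    by simp
  rw [hcoeff, Int.cast_smul_eq_zsmul, iterate_derivative_mul]
  refine Subring.zsmul_mem _ (Subring.sum_mem _ fun k _ ↦ nsmul_mem ?_ _) _
  rw [iterate_derivative_map]
  exact Subring.mul_mem _ (hf _ ((Nat.sub_le i k).trans hi)) (map_mem_integerValued _)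

lemma natDegree_taylor_sub_lt {G : R[X]} (hG : G.natDegree ≠ 0) (r : R) :
    (taylor r G - G).natDegree < G.natDegree := by
  by_cases hzero : taylor r G - G = 0
  · rw [hzero, natDegree_zero]
    exact hG.bot_lt
  · rw [← natDegree_taylor G r]
    refine natDegree_lt_natDegree hzero
      (degree_sub_lt_left (degree_taylor G r) ?_ (leadingCoeff_taylor r G))
    rintro hG0
    simp [← natDegree_taylor G r, hG0] at hG

end IntegerValued

section ExponentialSum

open Real Polynomial

/-- `polyExpSum t` as a linear functional, for `t < 0`, when the series converge. -/
noncomputable def polyExpSumHom {t : ℝ} (ht : t < 0) : ℝ[X] →ₗ[ℝ] ℝ where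
  toFun := polyExpSum t
  map_add' G H := polyExpSum_add G H ht
  map_smul' a G := by rw [smul_eq_C_mul, polyExpSum_C_mul, RingHom.id_apply, smul_eq_mul]

lemma polyExpSum_eq_shift {t : ℝ} (ht : t < 0) (G : ℝ[X]) :
    polyExpSum t G = exp t * (polyExpSum t (taylor 1 G) + G.eval 1) := by
  have hterm (k : ℕ) : G.eval (((k + 1 : ℕ) : ℝ) + 1) * exp (t * (((k + 1 : ℕ) : ℝ) + 1)) =
      exp t * ((taylor 1 G).eval ((k : ℝ) + 1) * exp (t * ((k : ℝ) + 1))) := by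
    rw [taylor_eval, Nat.cast_add_one, mul_add_one t, exp_add]
    ring
  rw [polyExpSum, (summable_polyExpSum G ht).tsum_eq_zero_add, polyExpSum]
  simp_rw [hterm, tsum_mul_left, Nat.cast_zero, zero_add, mul_one]
  ring

lemma polyExpSum_eq_exp_pow_mul {t : ℝ} (ht : t < 0) {G : ℝ[X]} {b : ℕ}
    (hG : ∀ k < b, G.eval ((k : ℝ) + 1) = 0) :
    polyExpSum t G = exp t ^ b * polyExpSum t (taylor (b : ℝ) G) := by
  induction b generalizing G with
  | zero => simp
  | succ b ih =>
    have hfirst : G.eval 1 = 0 := by simpa using hG 0 b.succ_pos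
    have hshift (k : ℕ) (hk : k < b) : (taylor 1 G).eval ((k : ℝ) + 1) = 0 := by
      simpa [taylor_eval] using hG (k + 1) (by lia)
    rw [polyExpSum_eq_shift ht, hfirst, add_zero, ih hshift, taylor_taylor, pow_succ]
    push_cast
    ring

variable {t : ℝ} {p : ℕ}

lemma neg_of_exp_eq_div (hexp : exp t = p / (p + 1)) : t < 0 := by
  rw [← exp_lt_one_iff, hexp, div_lt_one (by positivity)]
  exact lt_add_one _

theorem exists_polyExpSum_eq_mul_int (hexp : exp t = p / (p + 1)) {G : ℝ[X]}
    (hG : G ∈ integerValued ℝ) : ∃ N : ℤ, polyExpSum t G = p * N := by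
  have ht := neg_of_exp_eq_div hexp
  induction hn : G.natDegree using Nat.strong_induction_on generalizing G with | h n ih
  have hdiff : ∃ N : ℤ, polyExpSum t (taylor 1 G - G) = p * N := by
    by_cases hconst : G.natDegree = 0
    · rw [eq_C_of_natDegree_eq_zero hconst]
      exact ⟨0, by simp [polyExpSum]⟩
    · refine ih _ (hn ▸ natDegree_taylor_sub_lt hconst 1) (Subring.sub_mem _ ?_ hG) rfl
      exact_mod_cast taylor_mem_integerValued hG 1
  obtain ⟨N, hN⟩ := hdiff
  obtain ⟨N', hN'⟩ := mem_integerValued.1 hG 1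
  have hsub : polyExpSum t (taylor 1 G - G) = polyExpSum t (taylor 1 G) - polyExpSum t G :=
    map_sub (polyExpSumHom ht) _ _
  have hshift := polyExpSum_eq_shift ht G
  refine ⟨p * N + N', ?_⟩
  rw [Int.cast_one] at hN'
  rw [hexp, ← hN', eq_add_of_sub_eq (hsub.symm.trans hN), div_mul_eq_mul_div,
    eq_div_iff (by positivity)] at hshift
  push_cast
  linear_combination hshift

/-- The zeros of `G` to the right of `0` contribute the powers of `p`, those up to `0` the powers
of `p + 1`. -/
theorem exists_polyExpSum_eq_pow_mul_int (hexp : exp t = p / (p + 1)) {G : ℝ[X]}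
    (hG : G ∈ integerValued ℝ) {a b : ℕ}
    (hzero : ∀ k : ℤ, -(a : ℤ) < k → k ≤ b → G.eval (k : ℝ) = 0) :
    ∃ N : ℤ, polyExpSum t G = p * p ^ b * (p + 1) ^ a * N := by
  have ht := neg_of_exp_eq_div hexp
  have hp : (p : ℝ) ≠ 0 := fun h ↦ (exp_pos t).ne' (by simp [hexp, h])
  have hp1 : (p : ℝ) + 1 ≠ 0 := by positivity
  obtain ⟨N, hN⟩ := exists_polyExpSum_eq_mul_int hexp hG
  obtain ⟨Nr, hNr⟩ := exists_polyExpSum_eq_mul_int hexp (taylor_mem_integerValued hG b)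
  obtain ⟨Nl, hNl⟩ := exists_polyExpSum_eq_mul_int hexp (taylor_mem_integerValued hG (-a))
  have hright := polyExpSum_eq_exp_pow_mul ht (G := G) (b := b) fun k hk ↦ by
    simpa using hzero (k + 1) (by lia) (by lia)
  have hleft := polyExpSum_eq_exp_pow_mul ht (G := taylor (-(a : ℝ)) G) (b := a) fun k hk ↦ by
    simpa [taylor_eval, sub_eq_add_neg] using hzero (k + 1 - a) (by lia) (by lia)
  push_cast at hNr hNl
  rw [taylor_taylor, add_neg_cancel, taylor_zero, hN, hNl, hexp, div_pow, div_mul_eq_mul_div,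
    eq_div_iff (pow_ne_zero _ hp1)] at hleft
  rw [hN, hNr, hexp, div_pow, div_mul_eq_mul_div, eq_div_iff (pow_ne_zero _ hp1)] at hright
  have hright' : (p + 1 : ℤ) ^ b * N = (p : ℤ) ^ b * Nr := by
    have : ((p : ℝ) + 1) ^ b * N = (p : ℝ) ^ b * Nr :=
      mul_left_cancel₀ hp (by linear_combination hright)
    exact_mod_cast this
  have hleft' : (p : ℤ) ^ a * N = (p + 1 : ℤ) ^ a * Nl := by
    have : (p : ℝ) ^ a * N = ((p : ℝ) + 1) ^ a * Nl :=
      mul_left_cancel₀ hp (by linear_combination -hleft)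
    exact_mod_cast this
  have hcoprime : IsCoprime (p : ℤ) (p + 1) := ⟨-1, 1, by ring⟩
  obtain ⟨M, hM⟩ := (hcoprime.pow (m := b) (n := a)).mul_dvd
    ((hcoprime.pow (n := b)).dvd_of_dvd_mul_left ⟨Nr, hright'⟩)
    ((hcoprime.symm.pow (n := a)).dvd_of_dvd_mul_left ⟨Nl, hleft'⟩)
  refine ⟨M, ?_⟩
  rw [hN, hM]
  push_cast
  ring

end ExponentialSum

section Nonvanishing

open Polynomial

section ShiftInvariant

variable {K : Type*} [Field K]

variable {L : K[X] →ₗ[K] K} {x : K} {r d : ℕ} {F u v : K[X]}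

/-- The annihilator of `L` as a module over the polynomial ring. -/
def annihilatorIdeal {R : Type*} [CommRing R] (L : R[X] →ₗ[R] R) : Ideal R[X] where
  carrier := {g | ∀ W, L (g * W) = 0}
  add_mem' hg hh W := by rw [add_mul, map_add, hg, hh, add_zero]
  zero_mem' W := by rw [zero_mul, map_zero]
  smul_mem' q g hg W := by rw [smul_eq_mul, mul_assoc, mul_left_comm]; exact hg _

lemma apply_mul_sub_taylor_eq_zero (hL : ∀ g, (X - C 1) ^ r ∣ g → L g = x * L (taylor 1 g))
    (hshift : taylor 1 (F * u) = F * v) (hdvd : (X - C 1) ^ r ∣ F * u) (W : K[X]) :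
    L (F * (u * W - C x * (v * taylor 1 W))) = 0 := by
  have hsplit : F * (u * W - C x * (v * taylor 1 W)) =
      F * u * W - x • (F * v * taylor 1 W) := by
    rw [smul_eq_C_mul]
    ring
  rw [hsplit, map_sub, map_smul, hL _ (hdvd.mul_right W), taylor_mul, hshift, smul_eq_mul,
    sub_self]

lemma degree_mul_X_pow_sub_C_mul (hu : u.Monic) (hud : u.natDegree = d) (hv : v.Monic)
    (hvd : v.natDegree = d) (hx : x ≠ 1) (n : ℕ) :
    (u * X ^ n - C x * (v * taylor 1 (X ^ n))).degree = ↑(d + n) := by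
  have hu' : (u * X ^ n).Monic := hu.mul (monic_X_pow n)
  have hv' : (v * taylor 1 (X ^ n)).Monic := by
    rw [taylor_pow, taylor_X]
    exact hv.mul ((monic_X_add_C 1).pow n)
  have hud' : (u * X ^ n).natDegree = d + n := by
    rw [hu.natDegree_mul (monic_X_pow n), hud, natDegree_X_pow]
  have hvd' : (v * taylor 1 (X ^ n)).natDegree = d + n := by
    rw [hv.natDegree_mul' (right_ne_zero_of_mul hv'.ne_zero), hvd, natDegree_taylor,
      natDegree_X_pow]
  have hcoeff : (u * X ^ n - C x * (v * taylor 1 (X ^ n))).coeff (d + n) = 1 - x := by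
    have hul := hu'.coeff_natDegree
    have hvl := hv'.coeff_natDegree
    rw [hud'] at hul
    rw [hvd'] at hvl
    rw [coeff_sub, coeff_C_mul, hul, hvl, mul_one]
  refine degree_eq_of_le_of_coeff_ne_zero ?_ (hcoeff.trans_ne (sub_ne_zero.2 hx.symm))
  exact natDegree_le_iff_degree_le.1 ((natDegree_sub_le _ _).trans
    (max_le hud'.le ((natDegree_C_mul_le _ _).trans hvd'.le)))

/-- The polynomials `X ^ j` for `j < d`, continued by the elements `u X ^ n - x v (X + 1) ^ n` of
degree `d + n`, form a basis on which `L (F * ·)` vanishes. -/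
lemma mem_annihilatorIdeal (hL : ∀ g, (X - C 1) ^ r ∣ g → L g = x * L (taylor 1 g)) (hx : x ≠ 1)
    (hshift : taylor 1 (F * u) = F * v) (hdvd : (X - C 1) ^ r ∣ F * u)
    (hu : u.Monic) (hud : u.natDegree = d) (hv : v.Monic) (hvd : v.natDegree = d)
    (hzero : ∀ j < d, L (F * X ^ j) = 0) : F ∈ annihilatorIdeal L := by
  let basis : Polynomial.Sequence K :=
    { elems' := fun i ↦ if i < d then X ^ i
        else u * X ^ (i - d) - C x * (v * taylor 1 (X ^ (i - d)))
      degree_eq' := fun i ↦ by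
        split_ifs with hi
        · exact degree_X_pow i
        · rw [degree_mul_X_pow_sub_C_mul hu hud hv hvd hx, Nat.add_sub_cancel' (not_lt.1 hi)] }
  have hspan := basis.span fun i ↦ (leadingCoeff_ne_zero.2 (basis.ne_zero i)).isUnit
  have hcomp : L ∘ₗ LinearMap.mulLeft K F = 0 := by
    refine LinearMap.ext_on_range hspan fun i ↦ ?_
    change L (F * if i < d then X ^ i
      else u * X ^ (i - d) - C x * (v * taylor 1 (X ^ (i - d)))) = 0
    split_ifs with hi
    · exact hzero i hi
    · exact apply_mul_sub_taylor_eq_zero hL hshift hdvd _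
  exact fun W ↦ LinearMap.congr_fun hcomp W

variable [LinearOrder K] [IsStrictOrderedRing K]

/-- The largest root of `g` can only be `0` and its smallest root can only be `1`. -/
lemma isUnit_of_dvd_taylor {g : K[X]} {r : ℕ} (hg : g ≠ 0) (hsplits : g.Splits)
    (hright : g ∣ taylor 1 g * X ^ r) (hleft : g ∣ taylor (-1) g * (X - C 1) ^ r) :
    IsUnit g := by
  have mem_roots_iff (x : K) : x ∈ g.roots.toFinset ↔ g.eval x = 0 := by simp [hg]
  have hroots : g.roots.toFinset = ∅ := by
    by_contra! hne
    set M := g.roots.toFinset.max' hne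
    set m := g.roots.toFinset.min' hne
    have hM : M = 0 := by
      have hzero := eval_eq_zero_of_dvd_of_eval_eq_zero hright
        ((mem_roots_iff M).1 (Finset.max'_mem _ hne))
      rw [eval_mul, taylor_eval, mul_eq_zero] at hzero
      rcases hzero with hsucc | hpow
      · exact absurd (Finset.le_max' _ _ ((mem_roots_iff _).2 hsucc)) (lt_add_one M).not_ge
      · exact eq_zero_of_pow_eq_zero (n := r) (by simpa using hpow)
    have hm : m = 1 := by
      have hzero := eval_eq_zero_of_dvd_of_eval_eq_zero hleft
        ((mem_roots_iff m).1 (Finset.min'_mem _ hne))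
      rw [eval_mul, taylor_eval, mul_eq_zero] at hzero
      rcases hzero with hpred | hpow
      · exact absurd (Finset.min'_le _ _ ((mem_roots_iff _).2 hpred))
          (add_lt_of_neg_right m neg_one_lt_zero).not_ge
      · exact sub_eq_zero.1 (eq_zero_of_pow_eq_zero (n := r) (by simpa using hpow))
    have hle : m ≤ M := Finset.min'_le_max' _ hne
    rw [hM, hm] at hle
    exact zero_lt_one.not_ge hle
  rw [isUnit_iff_degree_eq_zero, degree_eq_natDegree hg, hsplits.natDegree_eq_card_roots,
    Multiset.toFinset_eq_empty.1 hroots]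
  rfl

lemma eq_zero_of_mem_annihilatorIdeal
    (hL : ∀ g, (X - C 1) ^ r ∣ g → L g = x * L (taylor 1 g)) (hx : x ≠ 0)
    (hF : F ≠ 0) (hsplits : F.Splits) (hmem : F ∈ annihilatorIdeal L) : L = 0 := by
  obtain ⟨g, hspan⟩ := (IsPrincipalIdealRing.principal (annihilatorIdeal L)).principal
  have mem_iff (q : K[X]) : q ∈ annihilatorIdeal L ↔ g ∣ q := by
    rw [hspan]
    exact Ideal.mem_span_singleton
  have hgF : g ∣ F := (mem_iff F).1 hmem
  have htaylor : taylor 1 ((X - C 1 : K[X]) ^ r) = X ^ r := by simp [taylor_pow]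
  have hright : g ∣ taylor 1 g * X ^ r := by
    refine (mem_iff _).1 fun W ↦ ?_
    have hzero := (mem_iff (g * (X - C 1) ^ r)).2 (dvd_mul_right _ _) (taylor (-1) W)
    rw [hL _ ((dvd_mul_left _ g).mul_right _), taylor_mul, taylor_mul, htaylor, taylor_taylor,
      add_neg_cancel, taylor_zero] at hzero
    exact (mul_eq_zero.1 hzero).resolve_left hx
  have hleft : g ∣ taylor (-1) g * (X - C 1) ^ r := by
    refine (mem_iff _).1 fun W ↦ ?_
    have hzero := (mem_iff (g * X ^ r)).2 (dvd_mul_right _ _) (taylor 1 W)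
    rw [hL _ ((dvd_mul_left _ _).mul_right _), taylor_mul, taylor_mul, htaylor, taylor_taylor,
      add_neg_cancel, taylor_zero, hzero, mul_zero]
  have hunit : IsUnit g := isUnit_of_dvd_taylor (ne_zero_of_dvd_ne_zero hF hgF)
    (hsplits.of_dvd hF hgF) hright hleft
  refine LinearMap.ext fun W ↦ ?_
  simpa using (mem_iff 1).2 hunit.dvd W

end ShiftInvariant

variable {t : ℝ}

lemma polyExpSum_adjointDiffOp_eq_shift (ht : t < 0) (P : ℝ[X]) (G : ℝ[X]) :
    polyExpSum t (adjointDiffOp P G) = Real.exp t *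
      (polyExpSum t (adjointDiffOp P (taylor 1 G)) + (adjointDiffOp P G).eval 1) := by
  rw [polyExpSum_eq_shift ht, taylor_adjointDiffOp]

lemma eq_zero_of_polyExpSum_adjointDiffOp_eq_zero (ht : t < 0) {P : ℝ[X]}
    (hzero : ∀ W, polyExpSum t (adjointDiffOp P W) = 0) : P = 0 := by
  ext n
  have heval := polyExpSum_adjointDiffOp_eq_shift ht P ((X - C 1) ^ n)
  rw [hzero, hzero, zero_add, eval_adjointDiffOp_X_sub_C_pow] at heval
  simpa [Nat.factorial_ne_zero] using heval.symm

/-- A vanishing of all these sums would propagate, by the shift relation, to every polynomial. -/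
theorem exists_polyExpSum_adjointDiffOp_ne_zero (ht : t < 0) {P : ℝ[X]} (hP : P ≠ 0)
    {F u v : ℝ[X]} {r d : ℕ} (hr : P.natDegree < r) (hF : F ≠ 0) (hsplits : F.Splits)
    (hshift : taylor 1 (F * u) = F * v) (hdvd : (X - C 1) ^ r ∣ F * u)
    (hu : u.Monic) (hud : u.natDegree = d) (hv : v.Monic) (hvd : v.natDegree = d) :
    ∃ j < d, polyExpSum t (adjointDiffOp P (F * X ^ j)) ≠ 0 := by
  by_contra! hzero
  let L : ℝ[X] →ₗ[ℝ] ℝ := polyExpSumHom ht ∘ₗ adjointDiffOp P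
  have hL (g : ℝ[X]) (hg : (X - C 1) ^ r ∣ g) : L g = Real.exp t * L (taylor 1 g) := by
    refine (polyExpSum_adjointDiffOp_eq_shift ht P g).trans ?_
    rw [eval_adjointDiffOp_eq_zero le_rfl ((pow_dvd_pow _ hr).trans hg), add_zero]
    rfl
  have hexp : Real.exp t ≠ 1 := (Real.exp_lt_one_iff.2 ht).ne
  have hL0 : L = 0 := eq_zero_of_mem_annihilatorIdeal hL (Real.exp_pos t).ne' hF hsplits
    (mem_annihilatorIdeal hL hexp hshift hdvd hu hud hv hvd hzero)
  exact hP (eq_zero_of_polyExpSum_adjointDiffOp_eq_zero ht (LinearMap.congr_fun hL0))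

end Nonvanishing

section PrimeGain

open Finset
open scoped Nat

/-- The left endpoints of two families of ten intervals. If the fractional part of `n / p` lies in
an interval of the family `e`, then at least `e + 1` of any three residues `y`, `y - n`, `y - 2n`
modulo `p` are smaller than `11 n mod p`, see `lt_card_small_residues`. -/
def gainLeft : Fin 2 → Fin 10 → ℚ :=
  ![![1/13, 2/13, 3/13, 4/13, 2/5, 1/2, 7/12, 2/3, 7/9, 8/9],
    ![1/12, 1/6, 1/4, 1/3, 4/9, 7/13, 8/13, 7/10, 4/5, 9/10]]

/-- The common right endpoints of the intervals that start at `gainLeft`. -/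
def gainRight (i : Fin 10) : ℚ := (i + 1) / 11

lemma gainLeft_pos (q : Fin 2 × Fin 10) : 0 < gainLeft q.1 q.2 := by
  revert q; decide +kernel

lemma le_gainLeft (q : Fin 2 × Fin 10) : q.2 / 11 ≤ gainLeft q.1 q.2 := by
  revert q; decide +kernel

lemma gainLeft_lt_gainRight (q : Fin 2 × Fin 10) : gainLeft q.1 q.2 < gainRight q.2 := by
  revert q; decide +kernel

/-- The fractional part of `n / p` lies in the interval indexed by `q`. -/
def IsGained (n p : ℕ) (q : Fin 2 × Fin 10) : Prop :=
  gainLeft q.1 q.2 * p ≤ (n % p : ℕ) ∧ (n % p : ℕ) < gainRight q.2 * p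

instance (n p : ℕ) : DecidablePred (IsGained n p) := fun _ ↦ inferInstanceAs (Decidable (_ ∧ _))

/-- The number of factors `p` that three consecutive blocks of `11 n` integers, shifted by `n`,
certainly contain in excess of `((11 n)!) ^ 3` at the first power of `p`. -/
def gain (n p : ℕ) : ℕ := #{q | IsGained n p q}

variable {n p : ℕ} {q q' : Fin 2 × Fin 10}

lemma IsGained.pos (hq : IsGained n p q) : 0 < p := by
  rcases p.eq_zero_or_pos with rfl | hp
  · simpa using hq.1.trans_lt hq.2
  · exact hp

lemma IsGained.div_eq (hq : IsGained n p q) : 11 * (n % p) / p = q.2 := by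
  have hp : (0 : ℚ) < p := mod_cast hq.pos
  have hleft : (q.2 : ℚ) * p ≤ 11 * (n % p : ℕ) := by
    nlinarith [hq.1, mul_le_mul_of_nonneg_right (le_gainLeft q) hp.le]
  have hright : 11 * ((n % p : ℕ) : ℚ) < ((q.2 + 1 : ℕ) : ℚ) * p := by
    have := hq.2
    rw [gainRight] at this
    push_cast at this ⊢
    linarith
  exact Nat.div_eq_of_lt_le (mod_cast hleft) (mod_cast hright)

lemma IsGained.snd_eq (hq : IsGained n p q) (hq' : IsGained n p q') : q.2 = q'.2 :=
  Fin.ext (hq.div_eq.symm.trans hq'.div_eq)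

lemma IsGained.mod_add (hq : IsGained n p q) : 11 * n % p + q.2 * p = 11 * (n % p) := by
  rw [← hq.div_eq, ← Nat.mul_mod_mod, Nat.mod_add_div']

lemma gain_le_of_forall_lt {b : ℕ} (hb : ∀ q, IsGained n p q → (q.1 : ℕ) < b) :
    gain n p ≤ b := by
  have hcard : #{q | IsGained n p q} ≤ #(range b) := by
    refine card_le_card_of_injOn (fun q ↦ (q.1 : ℕ))
      (fun q hq ↦ mem_coe.2 (mem_range.2 (hb q ((mem_filter_univ q).1 hq)))) ?_
    intro q hq q' hq' heq
    rw [mem_coe, mem_filter_univ] at hq hq'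
    exact Prod.ext (Fin.ext heq) (hq.snd_eq hq')
  rwa [card_range] at hcard

lemma gain_le_two (n p : ℕ) : gain n p ≤ 2 := gain_le_of_forall_lt fun q _ ↦ q.1.isLt

lemma emod_sub_eq_or {p : ℤ} (hp : 0 < p) (a b : ℤ) :
    (a - b) % p = a % p - b % p ∨ (a - b) % p = a % p - b % p + p := by
  have ha := Int.emod_lt_of_pos a hp
  have hb := Int.emod_lt_of_pos b hp
  have ha0 := Int.emod_nonneg a hp.ne'
  have hb0 := Int.emod_nonneg b hp.ne'
  rw [Int.sub_emod]
  rcases le_or_gt (b % p) (a % p) with hle | hlt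
  · exact .inl (Int.emod_eq_of_lt (by lia) (by lia))
  · rw [← Int.add_emod_right]
    exact .inr (Int.emod_eq_of_lt (by lia) (by lia))

/-- A finite check of linear inequalities: the subtraction of `n` modulo `p` either wraps around
or not. -/
lemma lt_card_small_residues (hq : IsGained n p q) (y : ℤ) :
    (q.1 : ℕ) < #{i ∈ range 3 | (y - n * (i : ℕ)) % p < (11 * n % p : ℕ)} := by
  have hp : (0 : ℤ) < p := mod_cast hq.pos
  have hlt0 := Int.emod_lt_of_pos y hp
  have hlt1 := Int.emod_lt_of_pos (y - n) hp
  have hlt2 := Int.emod_lt_of_pos (y - n - n) hp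
  have hnn0 := Int.emod_nonneg y hp.ne'
  have hnn1 := Int.emod_nonneg (y - n) hp.ne'
  have hnn2 := Int.emod_nonneg (y - n - n) hp.ne'
  have hstep1 := emod_sub_eq_or hp y n
  have hstep2 := emod_sub_eq_or hp (y - n) n
  rw [← Int.natCast_mod] at hstep1 hstep2
  have hmod : ((11 * n % p : ℕ) : ℤ) + (q.2 : ℕ) * p = 11 * (n % p : ℕ) := mod_cast hq.mod_add
  have hlo : (gainLeft q.1 q.2).num * p ≤ (n % p : ℕ) * (gainLeft q.1 q.2).den := by
    have hmul := mul_le_mul_of_nonneg_right hq.1 (gainLeft q.1 q.2).den.cast_nonneg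
    rw [mul_right_comm, Rat.mul_den_eq_num] at hmul
    exact (Int.cast_le (R := ℚ)).1 (by push_cast at hmul ⊢; exact hmul)
  have hhi : 11 * ((n % p : ℕ) : ℤ) < ((q.2 : ℕ) + 1) * p := by
    have hlt := hq.2
    rw [gainRight, div_mul_eq_mul_div, lt_div_iff₀ (by norm_num), mul_comm] at hlt
    exact_mod_cast hlt
  have hsub : y - n * 2 = y - n - n := by ring
  simp only [card_filter, sum_range_succ, sum_range_zero, zero_add, Nat.cast_zero, Nat.cast_one,
    Nat.cast_ofNat, mul_zero, sub_zero, mul_one, hsub]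
  generalize 11 * n % p = R at *
  generalize n % p = r at *
  generalize y % (p : ℤ) = s₀ at *
  generalize (y - n) % (p : ℤ) = s₁ at *
  generalize (y - n - n) % (p : ℤ) = s₂ at *
  clear hq
  obtain ⟨e, i⟩ := q
  fin_cases e <;> fin_cases i <;> norm_num [gainLeft] at hlo hhi hmod ⊢ <;>
    split_ifs <;> omega

lemma gain_le_card_small_residues (n p : ℕ) (y : ℤ) :
    gain n p ≤ #{i ∈ range 3 | (y - n * (i : ℕ)) % p < (11 * n % p : ℕ)} :=
  gain_le_of_forall_lt fun _ hq ↦ lt_card_small_residues hq y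

lemma card_filter_dvd_sub {d : ℕ} (hd : 0 < d) (L : ℕ) (c : ℤ) :
    #{j ∈ range L | (d : ℤ) ∣ c - (j : ℕ)} = L / d + if c % d < (L % d : ℕ) then 1 else 0 := by
  have hd' : (0 : ℤ) < d := mod_cast hd
  obtain ⟨r, hr⟩ := Int.eq_ofNat_of_zero_le (Int.emod_nonneg c hd'.ne')
  have hrd : r < d := by have := Int.emod_lt_of_pos c hd'; lia
  have hiff (j : ℕ) : (d : ℤ) ∣ c - j ↔ j ≡ r [MOD d] := by
    rw [← Int.modEq_iff_dvd, ← Int.natCast_modEq_iff, ← hr]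
    exact ⟨fun h ↦ h.trans (Int.mod_modEq c d).symm, fun h ↦ h.trans (Int.mod_modEq c d)⟩
  simp only [hiff, hr, Nat.cast_lt]
  rw [← Nat.count_eq_card_filter_range, Nat.count_modEq_card L hd, Nat.mod_eq_of_lt hrd]

/-- The index set of three blocks of `11 n` consecutive integers, the block `i` starting
at `n * i`. -/
def blockIndex (n : ℕ) : Finset (ℕ × ℕ) := range 3 ×ˢ range (11 * n)

lemma card_blockIndex_filter_dvd {d : ℕ} (hd : 0 < d) (n : ℕ) (k : ℤ) :
    #{q ∈ blockIndex n | (d : ℤ) ∣ k - (n * q.1 + q.2)} =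
      3 * (11 * n / d) + #{i ∈ range 3 | (k - n * (i : ℕ)) % d < (11 * n % d : ℕ)} := by
  rw [blockIndex, card_filter, sum_product]
  simp only [← sub_sub, ← card_filter, card_filter_dvd_sub hd, sum_add_distrib, sum_const,
    card_range, smul_eq_mul]

/-- The denominator by which `∏ (X - x)`, over the `33 n - 2` nodes `x` left after omitting two
points of the blocks, has to be multiplied to become divisible by `((11 n)!) ^ 3` at all integers:
two omitted nodes cost at most two factors `p` for each power of `p`. -/
def reducedDenom (n : ℕ) : ℕ := ∏ p ∈ Nat.primesLE (11 * n), p ^ (2 * Nat.log p (11 * n) - gain n p)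

lemma reducedDenom_pos (n : ℕ) : 0 < reducedDenom n :=
  prod_pos fun _ hp ↦ pow_pos (Nat.mem_primesLE.1 hp).2.pos _

lemma factorization_reducedDenom (hp : p.Prime) (hpn : p ≤ 11 * n) :
    (reducedDenom n).factorization p = 2 * Nat.log p (11 * n) - gain n p := by
  rw [reducedDenom, Nat.factorization_prod fun q hq ↦
    (pow_pos (Nat.mem_primesLE.1 hq).2.pos _).ne', sum_apply', sum_eq_single p]
  · rw [hp.factorization_pow, Finsupp.single_eq_same]
  · intro q hq hqp
    rw [(Nat.mem_primesLE.1 hq).2.factorization_pow, Finsupp.single_eq_of_ne hqp.symm]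
  · exact fun hmem ↦ absurd (Nat.mem_primesLE.2 ⟨hpn, hp⟩) hmem

lemma card_filter_pow_dvd_le_factorization (hp : p.Prime) {x : ℤ} (hx : x ≠ 0) (b : ℕ) :
    #{a ∈ Ico 1 b | ((p ^ a : ℕ) : ℤ) ∣ x} ≤ x.natAbs.factorization p := by
  have hsub : {a ∈ Ico 1 b | ((p ^ a : ℕ) : ℤ) ∣ x} ⊆ Ioc 0 (x.natAbs.factorization p) := by
    intro a ha
    rw [mem_filter, mem_Ico, Int.natCast_dvd,
      hp.pow_dvd_iff_le_factorization (Int.natAbs_ne_zero.2 hx)] at ha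
    exact mem_Ioc.2 ⟨ha.1.1, ha.2⟩
  simpa only [Nat.card_Ioc, Nat.sub_zero] using card_le_card hsub

lemma sum_card_filter_pow_dvd_le_factorization {ι : Type*} {t : Finset ι} {f : ι → ℤ}
    (hp : p.Prime) (hf : ∏ q ∈ t, f q ≠ 0) (b : ℕ) :
    ∑ a ∈ Ico 1 b, #{q ∈ t | ((p ^ a : ℕ) : ℤ) ∣ f q} ≤
      (∏ q ∈ t, f q).natAbs.factorization p := by
  rw [prod_ne_zero_iff] at hf
  rw [show (∏ q ∈ t, f q).natAbs = ∏ q ∈ t, (f q).natAbs from map_prod Int.natAbsHom f t,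
    Nat.factorization_prod fun q hq ↦ Int.natAbs_ne_zero.2 (hf q hq), sum_apply']
  simp only [card_filter]
  rw [sum_comm]
  simp only [← card_filter]
  exact sum_le_sum fun q hq ↦ card_filter_pow_dvd_le_factorization hp (hf q hq) b

lemma card_filter_le_card_filter_add_card_sdiff {ι : Type*} [DecidableEq ι] (s t : Finset ι)
    (P : ι → Prop) [DecidablePred P] : #{q ∈ s | P q} ≤ #{q ∈ t | P q} + #(s \ t) := by
  refine (card_le_card fun q hq ↦ ?_).trans (card_union_le _ _)
  rw [mem_filter] at hq
  rw [mem_union, mem_filter, mem_sdiff]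
  tauto

/-- Legendre's formula: at each power `p ^ a ≤ 11 n` the remaining nodes provide all but two of the
`3 ⌊11 n / p ^ a⌋` factors required, and at `p` itself they provide `gain n p` further ones. -/
lemma factorization_factorial_le (hp : p.Prime) (hpn : p ≤ 11 * n) (k : ℤ) {t : Finset (ℕ × ℕ)}
    (hcard : #(blockIndex n \ t) ≤ 2) :
    3 * (11 * n)!.factorization p ≤ 2 * Nat.log p (11 * n) - gain n p +
      ∑ a ∈ Ico 1 (Nat.log p (11 * n) + 1),
        #{q ∈ t | ((p ^ a : ℕ) : ℤ) ∣ k - (n * q.1 + q.2)} := by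
  set b := Nat.log p (11 * n)
  have hb : 1 ≤ b := Nat.log_pos hp.one_lt hpn
  have hgain := gain_le_two n p
  have hall (a : ℕ) : #{q ∈ blockIndex n | ((p ^ a : ℕ) : ℤ) ∣ k - (n * q.1 + q.2)} ≤
      #{q ∈ t | ((p ^ a : ℕ) : ℤ) ∣ k - (n * q.1 + q.2)} + 2 :=
    (card_filter_le_card_filter_add_card_sdiff _ t _).trans (by lia)
  have hfirst := hall 1
  rw [card_blockIndex_filter_dvd (pow_pos hp.pos _), pow_one] at hfirst
  have hgain_le := gain_le_card_small_residues n p k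
  have hrest : ∑ a ∈ Ico 2 (b + 1), 3 * (11 * n / p ^ a) ≤
      ∑ a ∈ Ico 2 (b + 1), (#{q ∈ t | ((p ^ a : ℕ) : ℤ) ∣ k - (n * q.1 + q.2)} + 2) := by
    refine sum_le_sum fun a _ ↦ le_trans ?_ (hall a)
    rw [card_blockIndex_filter_dvd (pow_pos hp.pos a)]
    exact Nat.le_add_right _ _
  rw [sum_add_distrib, sum_const, Nat.card_Ico, smul_eq_mul, ← mul_sum] at hrest
  rw [Nat.factorization_factorial hp (lt_add_one b)]
  simp only [sum_eq_sum_Ico_succ_bot (Nat.lt_add_one_of_le hb), pow_one, one_add_one_eq_two]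
  omega

theorem factorial_pow_three_dvd (n : ℕ) (k : ℤ) {t : Finset (ℕ × ℕ)}
    (hcard : #(blockIndex n \ t) ≤ 2) :
    ((11 * n)! : ℤ) ^ 3 ∣ reducedDenom n * ∏ q ∈ t, (k - (n * q.1 + q.2)) := by
  by_cases hprod : ∏ q ∈ t, (k - (n * q.1 + q.2) : ℤ) = 0
  · rw [hprod, mul_zero]
    exact dvd_zero _
  have hprod' := Int.natAbs_ne_zero.2 hprod
  have hdenom := (reducedDenom_pos n).ne'
  rw [← Int.natAbs_dvd_natAbs, Int.natAbs_mul, Int.natAbs_pow, Int.natAbs_natCast,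
    Int.natAbs_natCast, ← Nat.factorization_prime_le_iff_dvd
      (pow_ne_zero 3 (Nat.factorial_ne_zero _)) (mul_ne_zero hdenom hprod')]
  intro p hp
  rw [Nat.factorization_pow, Finsupp.smul_apply, Nat.factorization_mul hdenom hprod',
    Finsupp.add_apply, smul_eq_mul]
  rcases le_or_gt p (11 * n) with hpn | hpn
  · rw [factorization_reducedDenom hp hpn]
    exact (factorization_factorial_le hp hpn k hcard).trans
      (Nat.add_le_add_left (sum_card_filter_pow_dvd_le_factorization hp hprod _) _)
  · rw [Nat.factorization_factorial_eq_zero_of_lt hpn, mul_zero]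
    exact Nat.zero_le _

end PrimeGain

section AuxiliaryPolynomial

open Polynomial Finset
open scoped Nat

/-- The polynomial with simple roots at the indices in `t`, see `blockIndex`, after a translation
under which the first block starts at `1 - s`. -/
noncomputable def nodeProd (n s : ℕ) (t : Finset (ℕ × ℕ)) : ℝ[X] :=
  ∏ q ∈ t, (X - C ((n * q.1 + q.2 + 1 - s : ℤ) : ℝ))

/-- The normalised product over all three blocks: a product of three binomial coefficients of
upper index `x + s - 1 - n i` and lower index `11 n`. -/
noncomputable def binomialProd (n s : ℕ) : ℝ[X] :=
  C (((11 * n)! : ℝ) ^ 3)⁻¹ * nodeProd n s (blockIndex n)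

variable {n s : ℕ}

lemma binomialProd_ne_zero : binomialProd n s ≠ 0 :=
  mul_ne_zero (C_ne_zero.2 (by positivity)) (prod_ne_zero_iff.2 fun _ _ ↦ X_sub_C_ne_zero _)

lemma splits_binomialProd : (binomialProd n s).Splits :=
  (Splits.C _).mul (Splits.prod fun _ _ ↦ Splits.X_sub_C _)

lemma nodeProd_blockIndex : nodeProd n s (blockIndex n) =
    ∏ i ∈ range 3, ∏ j ∈ range (11 * n), (X - C ((n * i + j + 1 - s : ℤ) : ℝ)) :=
  prod_product _ _ _

lemma derivative_nodeProd (t : Finset (ℕ × ℕ)) :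
    derivative (nodeProd n s t) = ∑ q ∈ t, nodeProd n s (t.erase q) := by
  simp only [nodeProd, derivative_prod_finset, derivative_X_sub_C, mul_one]

lemma C_reducedDenom_mul_nodeProd_mem_integerValued {t : Finset (ℕ × ℕ)}
    (ht : #(blockIndex n \ t) ≤ 2) :
    C (reducedDenom n : ℝ) * (C (((11 * n)! : ℝ) ^ 3)⁻¹ * nodeProd n s t) ∈
      integerValued ℝ := by
  refine mem_integerValued.2 fun k ↦ ?_
  obtain ⟨N, hN⟩ := factorial_pow_three_dvd n (k + s - 1) ht
  have hN' : (reducedDenom n : ℝ) * ∏ q ∈ t, ((k : ℝ) - (n * q.1 + q.2 + 1 - s : ℤ)) =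
      ((11 * n)! : ℝ) ^ 3 * N := by
    rw [← Int.cast_natCast, ← Int.cast_natCast (11 * n)!, ← Int.cast_pow, ← Int.cast_mul, ← hN]
    push_cast
    exact congrArg _ (prod_congr rfl fun q _ ↦ by ring)
  refine ⟨N, ?_⟩
  simp only [nodeProd, eval_mul, eval_C, eval_prod, eval_sub, eval_X]
  rw [mul_left_comm, hN', inv_mul_cancel_left₀ (by positivity)]

lemma card_sdiff_erase_le {ι : Type*} [DecidableEq ι] (s t : Finset ι) (q : ι) :
    #(s \ t.erase q) ≤ #(s \ t) + 1 := by
  refine (card_le_card fun x hx ↦ ?_).trans (card_insert_le q _)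
  simp only [mem_sdiff, mem_erase, mem_insert] at hx ⊢
  tauto

/-- Every derivative omits one more node. -/
lemma C_reducedDenom_mul_iterate_derivative_nodeProd_mem_integerValued (i : ℕ) :
    ∀ t, #(blockIndex n \ t) + i ≤ 2 →
      C (reducedDenom n : ℝ) * (C (((11 * n)! : ℝ) ^ 3)⁻¹ * derivative^[i] (nodeProd n s t)) ∈
        integerValued ℝ := by
  induction i with
  | zero => exact fun t ht ↦ C_reducedDenom_mul_nodeProd_mem_integerValued ht
  | succ i ih =>
    intro t ht
    rw [Function.iterate_succ_apply, derivative_nodeProd, iterate_derivative_sum, mul_sum, mul_sum]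
    refine sum_mem fun q _ ↦ ih _ ?_
    have := card_sdiff_erase_le (blockIndex n) t q
    lia

lemma iterate_derivative_C_reducedDenom_mul_binomialProd_mem_integerValued {i : ℕ} (hi : i ≤ 2) :
    derivative^[i] (C (reducedDenom n : ℝ) * binomialProd n s) ∈ integerValued ℝ := by
  rw [iterate_derivative_C_mul, binomialProd, iterate_derivative_C_mul]
  refine C_reducedDenom_mul_iterate_derivative_nodeProd_mem_integerValued i _ ?_
  rwa [Finset.sdiff_self, card_empty, zero_add]

lemma X_sub_C_pow_three_dvd_binomialProd {k : ℤ} (hlo : 2 * n < k + s) (hhi : k + s ≤ 11 * n) :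
    (X - C (k : ℝ)) ^ 3 ∣ binomialProd n s := by
  refine dvd_mul_of_dvd_right ?_ _
  rw [nodeProd_blockIndex, ← card_range 3, ← prod_const]
  refine prod_dvd_prod_of_dvd _ _ fun i hi ↦ ?_
  have hni : (n * i : ℤ) ≤ n * 2 :=
    mul_le_mul_of_nonneg_left (by have := mem_range.1 hi; lia) n.cast_nonneg
  obtain ⟨j, hj⟩ := Int.eq_ofNat_of_zero_le (a := k + s - 1 - n * i) (by lia)
  have hk : k = n * i + j + 1 - s := by lia
  rw [hk]
  exact dvd_prod_of_mem (fun j : ℕ ↦ X - C ((n * i + j + 1 - s : ℤ) : ℝ))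
    (mem_range.2 (by have : (0 : ℤ) ≤ n * i := by positivity
                     lia))

variable {t : ℝ}

theorem exists_reducedDenom_mul_polyExpSum_eq {p : ℕ} (hexp : Real.exp t = p / (p + 1)) {a b : ℕ}
    (ha : 2 * n + a ≤ s) (hb : b + s ≤ 11 * n) {P : ℤ[X]} (hP : P.natDegree ≤ 2) (j : ℕ) :
    ∃ N : ℤ, reducedDenom n *
      polyExpSum t (adjointDiffOp (P.map (Int.castRingHom ℝ)) (binomialProd n s * X ^ j)) =
        p * p ^ b * (p + 1) ^ a * N := by
  have hmem := adjointDiffOp_mul_mem_integerValued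
    (fun i hi ↦ iterate_derivative_C_reducedDenom_mul_binomialProd_mem_integerValued
      (n := n) (s := s) hi)
    hP (X ^ j)
  obtain ⟨N, hN⟩ := exists_polyExpSum_eq_pow_mul_int (a := a) (b := b) hexp hmem fun k hlo hhi ↦
    eval_adjointDiffOp_eq_zero (natDegree_map_le.trans hP)
      (((X_sub_C_pow_three_dvd_binomialProd (by lia) (by lia)).mul_left _).mul_right _)
  refine ⟨N, ?_⟩
  rw [← hN, ← polyExpSum_C_mul, Polynomial.map_pow, map_X, mul_assoc, ← smul_eq_C_mul,
    ← smul_eq_C_mul, map_smul]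

lemma taylor_nodeProd_mul : taylor 1 (nodeProd n s (blockIndex n) *
      ∏ i ∈ range 3, (X - C ((n * i + (11 * n : ℕ) + 1 - s : ℤ) : ℝ))) =
    nodeProd n s (blockIndex n) * ∏ i ∈ range 3, (X - C ((n * i - s : ℤ) : ℝ)) := by
  have htaylor (c : ℤ) : taylor (1 : ℝ) (X - C ((c + 1 : ℤ) : ℝ)) = X - C (c : ℝ) := by
    rw [map_sub, taylor_X, taylor_C, Int.cast_add, Int.cast_one, C_add]
    ring
  have hshift (i j : ℕ) : taylor (1 : ℝ) (X - C ((n * i + j + 1 - s : ℤ) : ℝ)) =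
      X - C ((n * i + j - s : ℤ) : ℝ) := by
    rw [add_sub_right_comm, htaylor]
  simp only [nodeProd_blockIndex, ← prod_mul_distrib]
  rw [← taylorAlgHom_apply, map_prod]
  refine prod_congr rfl fun i _ ↦ ?_
  rw [← prod_range_succ (fun j : ℕ ↦ X - C ((n * i + j + 1 - s : ℤ) : ℝ)), map_prod,
    prod_range_succ']
  simp only [taylorAlgHom_apply, hshift]
  simp only [Nat.cast_add, Nat.cast_one, Nat.cast_zero, add_zero, ← add_assoc]

theorem exists_polyExpSum_binomialProd_ne_zero (ht : t < 0) (hlo : 2 * n ≤ s) (hhi : s < 11 * n)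
    {P : ℝ[X]} (hP : P ≠ 0) (hdeg : P.natDegree ≤ 2) :
    ∃ j < 3, polyExpSum t (adjointDiffOp P (binomialProd n s * X ^ j)) ≠ 0 := by
  have hmonic (f : ℕ → ℝ) : (∏ i ∈ range 3, (X - C (f i))).Monic :=
    monic_prod_of_monic _ _ fun i _ ↦ monic_X_sub_C _
  have hnatDegree (f : ℕ → ℝ) : (∏ i ∈ range 3, (X - C (f i))).natDegree = 3 :=
    (natDegree_finsetProd_X_sub_C_eq_card _ _).trans (card_range 3)
  refine exists_polyExpSum_adjointDiffOp_ne_zero ht hP (Nat.lt_succ_of_le hdeg)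
    binomialProd_ne_zero splits_binomialProd
    (u := ∏ i ∈ range 3, (X - C ((n * i + (11 * n : ℕ) + 1 - s : ℤ) : ℝ)))
    (v := ∏ i ∈ range 3, (X - C ((n * i - s : ℤ) : ℝ))) ?_ (Dvd.dvd.mul_right ?_ _)
    (hmonic _) (hnatDegree _) (hmonic _) (hnatDegree _)
  · rw [binomialProd, mul_assoc, taylor_mul, taylor_C, taylor_nodeProd_mul, mul_assoc]
  · rw [← Int.cast_one]
    exact X_sub_C_pow_three_dvd_binomialProd (by lia) (by lia)

end AuxiliaryPolynomial

section DenominatorGrowth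

open Finset Filter Topology
open Chebyshev (theta psi)

lemma log_reducedDenom (n : ℕ) : Real.log (reducedDenom n) =
    2 * psi (11 * n : ℕ) - ∑ p ∈ Nat.primesLE (11 * n), gain n p * Real.log p := by
  rw [reducedDenom, Nat.cast_prod, Real.log_prod fun p hp ↦ ?_,
    Chebyshev.psi_eq_sum_mul_log_prime, mul_sum, ← sum_sub_distrib]
  · refine sum_congr rfl fun p hp ↦ ?_
    obtain ⟨hle, hprime⟩ := Nat.mem_primesLE.1 hp
    have hlog : 0 < Nat.log p (11 * n) := Nat.log_pos hprime.one_lt hle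
    have hgain := gain_le_two n p
    rw [Nat.cast_pow, Real.log_pow, Nat.cast_sub (by lia)]
    push_cast
    ring
  · have := (Nat.mem_primesLE.1 hp).2.pos
    positivity

/-- The least `M` such that `n / p` in the `M`-th translate of an interval starting at
`gainLeft e i` forces `p ≤ 11 n`. -/
def firstQuotient (i : Fin 10) : ℕ := if i = 0 then 1 else 0

variable (q : Fin 2 × Fin 10)

lemma one_le_mul_add_gainLeft {M : ℕ} (hM : firstQuotient q.2 ≤ M) :
    1 ≤ 11 * (M + gainLeft q.1 q.2) := by
  have hfirst : 1 ≤ 11 * (firstQuotient q.2 + gainLeft q.1 q.2) := by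
    clear hM; revert q; decide +kernel
  have : (firstQuotient q.2 : ℚ) ≤ M := mod_cast hM
  linarith

lemma gainRight_le_one (i : Fin 10) : gainRight i ≤ 1 := by
  revert i; decide +kernel

lemma theta_sub_theta_eq_sum {x y : ℝ} (hx : 0 ≤ x) (hxy : x ≤ y) {N : ℕ} (hN : y ≤ N) :
    theta y - theta x = ∑ p ∈ Nat.primesLE N with x < (p : ℕ) ∧ (p : ℕ) ≤ y, Real.log p := by
  have hsub : Nat.primesLE ⌊x⌋₊ ⊆ Nat.primesLE ⌊y⌋₊ := fun p hp ↦ by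
    rw [Nat.mem_primesLE] at hp ⊢
    exact ⟨hp.1.trans (Nat.floor_le_floor hxy), hp.2⟩
  rw [Chebyshev.theta_eq_sum_primesLE, Chebyshev.theta_eq_sum_primesLE, ← sum_sdiff_eq_sub hsub]
  refine sum_congr (Finset.ext fun p ↦ ?_) fun _ _ ↦ rfl
  simp only [Finset.mem_sdiff, mem_filter, Nat.mem_primesLE, Nat.le_floor_iff hx,
    Nat.le_floor_iff (hx.trans hxy), not_and', ← not_le]
  refine ⟨fun ⟨⟨hy, hprime⟩, hnot⟩ ↦ ⟨⟨?_, hprime⟩, hnot hprime, hy⟩,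
    fun ⟨⟨_, hprime⟩, hnot, hy⟩ ↦ ⟨⟨hy, hprime⟩, fun _ ↦ hnot⟩⟩
  exact_mod_cast hy.trans hN

lemma isGained_of_le_of_lt {n p M : ℕ} (hle : (M + gainLeft q.1 q.2) * p ≤ n)
    (hlt : n < (M + gainRight q.2) * p) : IsGained n p q ∧ n / p = M := by
  have hleft : 0 ≤ gainLeft q.1 q.2 * p := mul_nonneg (gainLeft_pos q).le p.cast_nonneg
  have hright := mul_le_mul_of_nonneg_right (gainRight_le_one q.2) (p.cast_nonneg (α := ℚ))
  have hdiv : n / p = M := by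
    refine Nat.div_eq_of_lt_le ?_ ?_ <;> qify <;> linarith
  have hmod : ((n % p : ℕ) : ℚ) = n - M * p := by
    rw [← hdiv, eq_sub_iff_add_eq]
    exact_mod_cast Nat.mod_add_div' n p
  refine ⟨⟨?_, ?_⟩, hdiv⟩ <;> rw [hmod] <;> linarith

/-- The primes `p` with `M + gainLeft q.1 q.2 ≤ n / p < M + gainRight q.2` have total logarithmic
weight `thetaGap q n M`. -/
noncomputable def thetaGap (n M : ℕ) : ℝ :=
  theta (((M + gainLeft q.1 q.2 : ℚ) : ℝ)⁻¹ * n) - theta (((M + gainRight q.2 : ℚ) : ℝ)⁻¹ * n)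

lemma thetaGap_le {n M : ℕ} (hM : firstQuotient q.2 ≤ M) : thetaGap q n M ≤
    ∑ p ∈ Nat.primesLE (11 * n) with IsGained n p q ∧ n / p = M, Real.log p := by
  have hleft : (0 : ℝ) < (M + gainLeft q.1 q.2 : ℚ) :=
    mod_cast add_pos_of_nonneg_of_pos M.cast_nonneg (gainLeft_pos q)
  have hlt : ((M + gainLeft q.1 q.2 : ℚ) : ℝ) < (M + gainRight q.2 : ℚ) :=
    mod_cast add_lt_add_right (gainLeft_lt_gainRight q) _
  have hright := hleft.trans hlt
  have hbound : ((M + gainLeft q.1 q.2 : ℚ) : ℝ)⁻¹ * n ≤ (11 * n : ℕ) := by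
    have : (1 : ℝ) ≤ 11 * (M + gainLeft q.1 q.2 : ℚ) := mod_cast one_le_mul_add_gainLeft q hM
    rw [Nat.cast_mul, Nat.cast_ofNat]
    gcongr
    exact inv_le_of_inv_le₀ (by norm_num) (by linarith)
  rw [thetaGap, theta_sub_theta_eq_sum (by positivity) (by gcongr) hbound]
  refine sum_le_sum_of_subset_of_nonneg (monotone_filter_right _ fun p _ ⟨hgt, hle⟩ ↦ ?_)
    fun p _ _ ↦ Real.log_natCast_nonneg p
  rw [inv_mul_lt_iff₀ hright] at hgt
  rw [le_inv_mul_iff₀ hleft] at hle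
  exact isGained_of_le_of_lt q (mod_cast hle) (mod_cast hgt)

lemma sum_thetaGap_le (n T : ℕ) :
    ∑ q, ∑ M ∈ Ico (firstQuotient q.2) T, thetaGap q n M ≤
      ∑ p ∈ Nat.primesLE (11 * n), gain n p * Real.log p := by
  have hswap : ∑ p ∈ Nat.primesLE (11 * n), gain n p * Real.log p =
      ∑ q, ∑ p ∈ Nat.primesLE (11 * n) with IsGained n p q, Real.log p := by
    simp only [gain, card_filter, sum_filter, Nat.cast_sum, sum_mul, Nat.cast_ite, Nat.cast_one,
      Nat.cast_zero, ite_mul, one_mul, zero_mul]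
    exact sum_comm
  rw [hswap]
  refine sum_le_sum fun q _ ↦ ?_
  calc ∑ M ∈ Ico (firstQuotient q.2) T, thetaGap q n M
      ≤ ∑ M ∈ Ico (firstQuotient q.2) T,
          ∑ p ∈ {p ∈ Nat.primesLE (11 * n) | IsGained n p q} with n / p = M, Real.log p := by
        simp only [filter_filter]
        exact sum_le_sum fun M hM ↦ thetaGap_le q (mem_Ico.1 hM).1
    _ ≤ ∑ p ∈ Nat.primesLE (11 * n) with IsGained n p q, Real.log p := by
        rw [sum_fiberwise_eq_sum_filter]
        exact sum_le_sum_of_subset_of_nonneg (filter_subset _ _)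
          fun p _ _ ↦ Real.log_natCast_nonneg p

/-- The limit of `∑ q, ∑ M < T, thetaGap q n M / n` for `n → ∞`, by the prime number theorem. -/
def gainDensity (T : ℕ) : ℚ :=
  ∑ q : Fin 2 × Fin 10, ∑ M ∈ Ico (firstQuotient q.2) T,
    ((M + gainLeft q.1 q.2)⁻¹ - (M + gainRight q.2)⁻¹)

lemma tendsto_thetaGap_div (M : ℕ) : Tendsto (fun n ↦ thetaGap q n M / n) atTop
    (𝓝 (((M + gainLeft q.1 q.2)⁻¹ - (M + gainRight q.2)⁻¹ : ℚ) : ℝ)) := by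
  have hleft : (0 : ℝ) < (M + gainLeft q.1 q.2 : ℚ) :=
    mod_cast add_pos_of_nonneg_of_pos M.cast_nonneg (gainLeft_pos q)
  have hright : (0 : ℝ) < (M + gainRight q.2 : ℚ) :=
    mod_cast add_pos_of_nonneg_of_pos M.cast_nonneg
      ((gainLeft_pos q).trans (gainLeft_lt_gainRight q))
  simp only [thetaGap, sub_div, Rat.cast_sub, Rat.cast_inv]
  exact (tendsto_comp_mul_natCast_div tendsto_theta_div_self (inv_pos.2 hleft)).sub
    (tendsto_comp_mul_natCast_div tendsto_theta_div_self (inv_pos.2 hright))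

lemma eventually_log_reducedDenom_le {T : ℕ} {g : ℝ} (hg : g < gainDensity T) :
    ∀ᶠ n : ℕ in atTop, Real.log (reducedDenom n) ≤ (22 - g) * n := by
  have hgap : Tendsto
      (fun n : ℕ ↦ (∑ q, ∑ M ∈ Ico (firstQuotient q.2) T, thetaGap q n M) / n) atTop
      (𝓝 (gainDensity T)) := by
    simp only [sum_div, gainDensity, Rat.cast_sum]
    exact tendsto_finsetSum _ fun q _ ↦ tendsto_finsetSum _ fun M _ ↦ tendsto_thetaGap_div q M
  have hpsi := (tendsto_comp_mul_natCast_div tendsto_psi_div_self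
    (a := 11) (by norm_num)).const_mul 2
  filter_upwards [(hpsi.sub hgap).eventually_lt_const (u := 22 - g) (by linarith),
    eventually_gt_atTop 0] with n hn hpos
  rw [← mul_div_assoc, ← sub_div, div_lt_iff₀ (mod_cast hpos)] at hn
  rw [log_reducedDenom]
  push_cast
  linarith [sum_thetaGap_le n T]

section Numerics

/-- The shift `α` makes `(M + α) * (M + 1 + α)` dominate `(M + u) * (M + v)` for `M ≥ N`, so that
the sum is compared with a telescoping one. -/
lemma le_sum_Ico_inv_sub_inv {N T : ℕ} (hN : 0 < N) (hNT : N ≤ T) {u v : ℚ} (hu : 0 < u)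
    (huv : u < v) {α : ℚ} (hα : α = (u + v) / 2 - 1 / 2 + 1 / (8 * N)) :
    (v - u) * ((N + α)⁻¹ - (T + α)⁻¹) ≤ ∑ M ∈ Ico N T, ((M + u)⁻¹ - (M + v)⁻¹) := by
  have hstep (M : ℕ) (hM : N ≤ M) :
      (v - u) * ((M + α)⁻¹ - ((M + 1 : ℕ) + α)⁻¹) ≤ (M + u)⁻¹ - (M + v)⁻¹ := by
    have hNpos : (1 : ℚ) ≤ N := mod_cast hN
    have hNM : (N : ℚ) ≤ M := mod_cast hM
    have hshift : 0 < 1 / (8 * (N : ℚ)) := by positivity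
    have hα' : 0 < M + α := by linarith
    have hprod : (M + u) * (M + v) ≤ (M + α) * (M + 1 + α) := by
      have hquarter : 1 / 8 ≤ M * (1 / (8 * (N : ℚ))) := by
        rw [mul_one_div, div_le_div_iff₀ (by norm_num) (by positivity)]
        linarith
      rw [hα]
      nlinarith [sq_nonneg (u - v), mul_pos hu hshift, mul_pos (hu.trans huv) hshift]
    have : 0 < M + 1 + α := by linarith
    have : 0 < M + u := by positivity
    have : 0 < M + v := by linarith
    calc (v - u) * ((M + α)⁻¹ - ((M + 1 : ℕ) + α)⁻¹)
        = (v - u) * ((M + α) * (M + 1 + α))⁻¹ := by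
          push_cast
          field_simp
          ring
      _ ≤ (v - u) * ((M + u) * (M + v))⁻¹ := by gcongr
      _ = (M + u)⁻¹ - (M + v)⁻¹ := by
          field_simp
          ring
  calc (v - u) * ((N + α)⁻¹ - (T + α)⁻¹)
      = ∑ M ∈ Ico N T, (v - u) * ((M + α)⁻¹ - ((M + 1 : ℕ) + α)⁻¹) := by
        have htelescope := sum_Ico_sub (fun M : ℕ ↦ -((M : ℚ) + α)⁻¹) hNT
        simp only [neg_sub_neg] at htelescope
        rw [← mul_sum, htelescope]
    _ ≤ _ := sum_le_sum fun M hM ↦ hstep M (mem_Ico.1 hM).1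

/-- The terms with `M < 40` are added up exactly and the
others are bounded below by a telescoping sum. -/
lemma lt_gainDensity : 4.859914 < gainDensity (10 ^ 6) := by
  let α (q : Fin 2 × Fin 10) : ℚ :=
    (gainLeft q.1 q.2 + gainRight q.2) / 2 - 1 / 2 + 1 / (8 * (40 : ℕ))
  have hfirst (q : Fin 2 × Fin 10) : firstQuotient q.2 ≤ 40 := by
    rw [firstQuotient]; split_ifs <;> norm_num
  calc (4.859914 : ℚ)
      < ∑ q : Fin 2 × Fin 10, (∑ M ∈ Ico (firstQuotient q.2) 40,
          ((M + gainLeft q.1 q.2)⁻¹ - (M + gainRight q.2)⁻¹) +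
        (gainRight q.2 - gainLeft q.1 q.2) *
          (((40 : ℕ) + α q)⁻¹ - ((10 ^ 6 : ℕ) + α q)⁻¹)) := by
        decide +kernel
    _ ≤ gainDensity (10 ^ 6) := by
        refine sum_le_sum fun q _ ↦ ?_
        rw [← sum_Ico_consecutive _ (hfirst q) (by norm_num : 40 ≤ 10 ^ 6)]
        exact add_le_add_right (le_sum_Ico_inv_sub_inv (by norm_num) (by norm_num)
          (gainLeft_pos q) (gainLeft_lt_gainRight q) rfl) _

end Numerics

theorem eventually_log_reducedDenom_le_mul :
    ∀ᶠ n : ℕ in atTop, Real.log (reducedDenom n) ≤ (22 - 4.859914) * n :=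
  eventually_log_reducedDenom_le <|
    (by norm_num : (4.859914 : ℝ) = (4.859914 : ℚ)).trans_lt (Rat.cast_lt.2 lt_gainDensity)

end DenominatorGrowth

section CriticalLineBound

open Finset Polynomial Real
open scoped Nat

section LogSqrtPrimitive

/-- A primitive of `x ↦ log √(x ^ 2 + y ^ 2)`. -/
noncomputable def logSqrtPrimitive (y x : ℝ) : ℝ :=
  x / 2 * log (x ^ 2 + y ^ 2) - x + y * arctan (x / y)

variable {y z : ℝ}

lemma hasDerivAt_logSqrtPrimitive (hy : 0 < y) (x : ℝ) :
    HasDerivAt (logSqrtPrimitive y) (log (x ^ 2 + y ^ 2) / 2) x := by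
  have hsq : 0 < x ^ 2 + y ^ 2 := by positivity
  have hlog := (((hasDerivAt_id x).fun_pow 2).add_const (y ^ 2)).log hsq.ne'
  have harctan := (((hasDerivAt_id x).div_const y).arctan).const_mul y
  refine (((((hasDerivAt_id x).div_const 2).mul hlog).sub (hasDerivAt_id x)).add
    harctan).congr_deriv ?_
  simp only [id]
  field_simp
  ring

lemma hasDerivAt_logSqrtPrimitive_left (hy : 0 < y) (x : ℝ) :
    HasDerivAt (fun y ↦ logSqrtPrimitive y x) (arctan (x / y)) y := by
  have hsq : 0 < x ^ 2 + y ^ 2 := by positivity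
  have hlog := (((hasDerivAt_id y).fun_pow 2).const_add (x ^ 2)).log hsq.ne'
  have harctan := (hasDerivAt_id y).mul (((hasDerivAt_id y).fun_inv hy.ne').const_mul x).arctan
  refine (((hlog.const_mul (x / 2)).sub_const x).add harctan).congr_deriv ?_
  simp only [id, ← div_eq_mul_inv]
  field_simp
  ring

lemma log_sqrt_le_logSqrtPrimitive_sub (hy : 0 < y) {x : ℝ} (hx : 0 ≤ x) :
    log (√(x ^ 2 + y ^ 2)) ≤ logSqrtPrimitive y (x + 1) - logSqrtPrimitive y x := by
  obtain ⟨c, hc, hslope⟩ := exists_hasDerivAt_eq_slope (logSqrtPrimitive y) _ (lt_add_one x)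
    (fun w _ ↦ (hasDerivAt_logSqrtPrimitive hy w).continuousAt.continuousWithinAt)
    (fun w _ ↦ hasDerivAt_logSqrtPrimitive hy w)
  rw [add_sub_cancel_left, div_one] at hslope
  rw [log_sqrt (by positivity), ← hslope]
  have := hc.1.le
  gcongr

lemma le_tangent_of_antitoneOn {f f' : ℝ → ℝ} (hf : ∀ x, 0 < x → HasDerivAt f (f' x) x)
    (hanti : AntitoneOn f' (Set.Ioi 0)) (hy : 0 < y) (hz : 0 < z) :
    f y ≤ f z + f' z * (y - z) := by
  have hmvt {u v : ℝ} (hu : 0 < u) (huv : u < v) :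
      ∃ c ∈ Set.Ioo u v, f' c * (v - u) = f v - f u := by
    obtain ⟨c, hc, hslope⟩ := exists_hasDerivAt_eq_slope f f' huv
      (fun x hx ↦ (hf x (hu.trans_le hx.1)).continuousAt.continuousWithinAt)
      fun x hx ↦ hf x (hu.trans hx.1)
    exact ⟨c, hc, (eq_div_iff (sub_pos.2 huv).ne').1 hslope⟩
  rcases lt_trichotomy y z with hlt | rfl | hgt
  · obtain ⟨c, hc, hslope⟩ := hmvt hy hlt
    nlinarith [hanti (hy.trans hc.1) hz hc.2.le]
  · simp
  · obtain ⟨c, hc, hslope⟩ := hmvt hz hgt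
    nlinarith [hanti hz (hz.trans hc.1) hc.1.le]

lemma logSqrtPrimitive_le {x : ℝ} (hx : 0 ≤ x) (hy : 0 < y) (hz : 0 < z) :
    logSqrtPrimitive y x ≤ x / 2 * log (x ^ 2 + z ^ 2) - x + y * arctan (x / z) := by
  have hanti : AntitoneOn (fun y ↦ arctan (x / y)) (Set.Ioi 0) := fun u hu v _ huv ↦
    arctan_mono (div_le_div_of_nonneg_left hx hu huv)
  have htangent := le_tangent_of_antitoneOn
    (fun y hy ↦ hasDerivAt_logSqrtPrimitive_left hy x) hanti hy hz
  simp only [logSqrtPrimitive] at htangent ⊢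
  linarith

end LogSqrtPrimitive

/-- The product of the distances from `criticalLine y` to the integers `1, …, A`, or to
`0, -1, …, 1 - A`. -/
noncomputable def distProd (A : ℕ) (y : ℝ) : ℝ := ∏ l ∈ range A, √((l + 1 / 2) ^ 2 + y ^ 2)

lemma distProd_nonneg (A : ℕ) (y : ℝ) : 0 ≤ distProd A y := prod_nonneg fun _ _ ↦ sqrt_nonneg _

lemma distProd_le_of_abs_le (A : ℕ) {y z : ℝ} (h : |y| ≤ z) : distProd A y ≤ distProd A z := by
  have hsq : y ^ 2 ≤ z ^ 2 := sq_le_sq' (abs_le.1 h).1 (abs_le.1 h).2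
  exact prod_le_prod (fun _ _ ↦ sqrt_nonneg _) fun _ _ ↦ by gcongr

lemma distProd_le_mul_exp (A : ℕ) {y : ℝ} (hy : 1 ≤ y) :
    distProd A y ≤ √(A ^ 2 + y ^ 2) * exp (logSqrtPrimitive y A) := by
  have hpos : 0 < y := by linarith
  induction A with
  | zero => simpa [distProd, logSqrtPrimitive, sqrt_sq hpos.le] using hy
  | succ A ih =>
    have hstep : √((A : ℝ) ^ 2 + y ^ 2) ≤
        exp (logSqrtPrimitive y (A + 1) - logSqrtPrimitive y A) :=
      (log_le_iff_le_exp (by positivity)).1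
        (log_sqrt_le_logSqrtPrimitive_sub hpos A.cast_nonneg)
    calc distProd (A + 1) y
        = distProd A y * √((A + 1 / 2) ^ 2 + y ^ 2) := prod_range_succ _ _
      _ ≤ (√(A ^ 2 + y ^ 2) * exp (logSqrtPrimitive y A)) * √((A + 1) ^ 2 + y ^ 2) := by
          gcongr
          norm_num
      _ ≤ (exp (logSqrtPrimitive y (A + 1) - logSqrtPrimitive y A) *
            exp (logSqrtPrimitive y A)) * √((A + 1) ^ 2 + y ^ 2) := by gcongr
      _ = √((A + 1 : ℕ) ^ 2 + y ^ 2) * exp (logSqrtPrimitive y (A + 1 : ℕ)) := by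
          rw [← exp_add, sub_add_cancel, mul_comm, Nat.cast_add_one]

lemma distProd_le (A : ℕ) {z : ℝ} (hz : 0 < z) (y : ℝ) : distProd A y ≤
    (A + (1 + |y|)) * exp (A / 2 * log (A ^ 2 + z ^ 2) - A + (1 + |y|) * arctan (A / z)) := by
  have hone : 1 ≤ 1 + |y| := by linarith [abs_nonneg y]
  refine (distProd_le_of_abs_le A (by linarith : |y| ≤ 1 + |y|)).trans
    ((distProd_le_mul_exp A hone).trans ?_)
  gcongr
  · rw [sqrt_le_left (by positivity)]
    nlinarith [A.cast_nonneg (α := ℝ)]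
  · exact logSqrtPrimitive_le A.cast_nonneg (by linarith) hz

lemma norm_criticalLine_sub (y x : ℝ) : ‖criticalLine y - x‖ = √((x - 1 / 2) ^ 2 + y ^ 2) := by
  rw [Complex.norm_def, Complex.normSq_apply]
  congr 1
  simp [criticalLine]
  ring

lemma prod_norm_criticalLine_sub (a b : ℕ) (y : ℝ) :
    ∏ j ∈ range (a + b), ‖criticalLine y - ((j + 1 - a : ℤ) : ℝ)‖ =
      distProd a y * distProd b y := by
  simp only [norm_criticalLine_sub, distProd]
  rw [prod_range_add, ← prod_range_reflect]
  congr 1 <;> refine prod_congr rfl fun j hj ↦ ?_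
  · have hcast : ((a - 1 - j : ℕ) : ℝ) = a - 1 - j := by
      have := mem_range.1 hj
      rw [Nat.cast_sub (by lia), Nat.cast_sub (by lia), Nat.cast_one]
    push_cast
    rw [hcast]
    ring_nf
  · push_cast
    ring_nf

lemma one_half_le_norm_criticalLine_sub (y : ℝ) (k : ℤ) :
    1 / 2 ≤ ‖criticalLine y - (k : ℝ)‖ := by
  have hk : (0 : ℝ) ≤ k * (k - 1) := by
    rcases le_or_gt k 0 with h | h
    · exact_mod_cast mul_nonneg_of_nonpos_of_nonpos h (by lia : k - 1 ≤ 0)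
    · exact_mod_cast mul_nonneg h.le (by lia : 0 ≤ k - 1)
  rw [norm_criticalLine_sub]
  refine le_sqrt_of_sq_le ?_
  nlinarith [sq_nonneg y]

variable {n s : ℕ}

lemma norm_aeval_nodeProd (t : Finset (ℕ × ℕ)) (y : ℝ) :
    ‖(nodeProd n s t).aeval (criticalLine y)‖ =
      ∏ q ∈ t, ‖criticalLine y - ((n * q.1 + q.2 + 1 - s : ℤ) : ℝ)‖ := by
  simp only [nodeProd, map_prod, norm_prod, map_sub, aeval_X, aeval_C, Complex.coe_algebraMap]

lemma norm_aeval_derivative_nodeProd_le (t : Finset (ℕ × ℕ)) (y : ℝ) :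
    ‖(derivative (nodeProd n s t)).aeval (criticalLine y)‖ ≤
      2 * #t * ‖(nodeProd n s t).aeval (criticalLine y)‖ := by
  have herase (q : ℕ × ℕ) (hq : q ∈ t) : ‖(nodeProd n s (t.erase q)).aeval (criticalLine y)‖ ≤
      2 * ‖(nodeProd n s t).aeval (criticalLine y)‖ := by
    rw [norm_aeval_nodeProd t, ← mul_prod_erase _ _ hq, ← norm_aeval_nodeProd]
    nlinarith [one_half_le_norm_criticalLine_sub y (n * q.1 + q.2 + 1 - s),
      norm_nonneg ((nodeProd n s (t.erase q)).aeval (criticalLine y))]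
  rw [derivative_nodeProd, map_sum]
  calc _ ≤ ∑ q ∈ t, ‖(nodeProd n s (t.erase q)).aeval (criticalLine y)‖ := norm_sum_le _ _
    _ ≤ #t • (2 * ‖(nodeProd n s t).aeval (criticalLine y)‖) := sum_le_card_nsmul _ _ _ herase
    _ = 2 * #t * ‖(nodeProd n s t).aeval (criticalLine y)‖ := by
        rw [nsmul_eq_mul]
        ring

lemma norm_aeval_derivative_binomialProd_le (y : ℝ) :
    ‖(derivative (binomialProd n s)).aeval (criticalLine y)‖ ≤
      66 * n * ‖(binomialProd n s).aeval (criticalLine y)‖ := by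
  have hcard : (#(blockIndex n) : ℝ) = 33 * n := by
    rw [blockIndex, card_product, card_range, card_range]
    push_cast
    ring
  have hnode := norm_aeval_derivative_nodeProd_le (n := n) (s := s) (blockIndex n) y
  rw [hcard] at hnode
  rw [binomialProd, derivative_C_mul, map_mul, map_mul, norm_mul, norm_mul]
  calc _ ≤ _ := mul_le_mul_of_nonneg_left hnode (norm_nonneg _)
    _ = _ := by ring

lemma norm_aeval_binomialProd (hlo : 2 * n ≤ s) (hhi : s ≤ 11 * n) (y : ℝ) :
    ‖(binomialProd n s).aeval (criticalLine y)‖ = (((11 * n)! : ℝ) ^ 3)⁻¹ *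
      ∏ i ∈ range 3, distProd (s - n * i) y * distProd (11 * n + n * i - s) y := by
  have hconst : ‖(C (((11 * n)! : ℝ) ^ 3)⁻¹).aeval (criticalLine y)‖ =
      (((11 * n)! : ℝ) ^ 3)⁻¹ := by
    rw [aeval_C, norm_algebraMap', norm_of_nonneg (by positivity)]
  rw [binomialProd, map_mul, norm_mul, hconst, norm_aeval_nodeProd, blockIndex, prod_product]
  refine congrArg _ (prod_congr rfl fun i hi ↦ ?_)
  have hni : n * i ≤ n * 2 := Nat.mul_le_mul_left _ (by have := mem_range.1 hi; lia)
  rw [← prod_norm_criticalLine_sub]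
  refine prod_congr (congrArg range (by lia)) fun j _ ↦ ?_
  rw [Nat.cast_sub (by lia)]
  congr 4
  push_cast
  ring

end CriticalLineBound

section SaddlePoint

open Finset Polynomial Real MeasureTheory
open scoped Nat

/-- The exponential rate of the bound for `binomialProd n (ρ * n)` on the critical line that
comes from the saddle point at height `c * n`. -/
noncomputable def saddleExponent (ρ c : ℝ) : ℝ :=
  ∑ i ∈ range 3, ((ρ - i) / 2 * log ((ρ - i) ^ 2 + c ^ 2) +
    (11 + i - ρ) / 2 * log ((11 + i - ρ) ^ 2 + c ^ 2)) - 33 * log 11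

/-- The exponential growth rate in `|y|` that accompanies `saddleExponent ρ c`: the total angle
under which the intervals of nodes appear from the saddle point. -/
noncomputable def saddleAngle (ρ c : ℝ) : ℝ :=
  ∑ i ∈ range 3, (arctan ((ρ - i) / c) + arctan ((11 + i - ρ) / c))

variable {n s : ℕ} {ρ c : ℝ}

lemma distProd_le_of_eq_mul {A : ℕ} {a : ℝ} (hA : (A : ℝ) = a * n) (hn : 0 < n) (ha : a ≤ 11)
    (hc : 0 < c) (y : ℝ) : distProd A y ≤ 12 * n * (1 + |y|) *
      exp (n * (a / 2 * log (a ^ 2 + c ^ 2) + a * (log n - 1)) + (1 + |y|) * arctan (a / c)) := by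
  have hn' : (1 : ℝ) ≤ n := mod_cast hn
  have hlog : log ((a * n) ^ 2 + (c * n) ^ 2) = log (a ^ 2 + c ^ 2) + 2 * log n := by
    rw [mul_pow, mul_pow, ← add_mul, log_mul (by positivity) (by positivity), log_pow,
      Nat.cast_ofNat]
  have hfactor : a * n + (1 + |y|) ≤ 12 * n * (1 + |y|) := by
    nlinarith [mul_le_mul_of_nonneg_right ha n.cast_nonneg, abs_nonneg y,
      mul_nonneg (sub_nonneg.2 hn') (abs_nonneg y)]
  have hbound := distProd_le A (z := c * n) (by positivity) y
  rw [hA, hlog, mul_div_mul_right _ _ (by positivity)] at hbound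
  refine hbound.trans ?_
  gcongr
  exact le_of_eq (by ring)

lemma inv_factorial_pow_three_le (hn : 0 < n) :
    (((11 * n)! : ℝ) ^ 3)⁻¹ ≤ exp (-(n * (33 * log 11 + 33 * (log n - 1)))) := by
  have hstirling := Stirling.le_log_factorial_stirling (n := 11 * n) (by lia)
  have hlog_nonneg : 0 ≤ log (11 * n : ℕ) := log_natCast_nonneg _
  have hlog : log (11 * n : ℕ) = log 11 + log n := by
    rw [Nat.cast_mul, log_mul (by norm_num) (by positivity), Nat.cast_ofNat]
  have hpi : 0 ≤ log (2 * π) := log_nonneg (by linarith [pi_gt_three])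
  have hfactorial : 11 * n * (log 11 + log n) - 11 * n ≤ log (11 * n)! := by
    rw [hlog] at hstirling hlog_nonneg
    push_cast at hstirling
    linarith
  rw [← exp_log (by positivity : (0 : ℝ) < (11 * n)!), ← exp_nat_mul, ← exp_neg]
  refine exp_le_exp.2 (neg_le_neg ?_)
  push_cast
  linarith

lemma norm_aeval_binomialProd_le (hs : (s : ℝ) = ρ * n) (hn : 0 < n) (hlo : 2 ≤ ρ) (hhi : ρ ≤ 11)
    (hc : 0 < c) (y : ℝ) : ‖(binomialProd n s).aeval (criticalLine y)‖ ≤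
      (12 * n * (1 + |y|)) ^ 6 *
        exp (n * saddleExponent ρ c + (1 + |y|) * saddleAngle ρ c) := by
  have hslo : 2 * n ≤ s := by
    have : (2 : ℝ) * n ≤ s := hs ▸ mul_le_mul_of_nonneg_right hlo n.cast_nonneg
    exact_mod_cast this
  have hshi : s ≤ 11 * n := by
    have : (s : ℝ) ≤ 11 * n := hs ▸ mul_le_mul_of_nonneg_right hhi n.cast_nonneg
    exact_mod_cast this
  have hni {i : ℕ} (hi : i ∈ range 3) : n * i ≤ n * 2 :=
    Nat.mul_le_mul_left _ (by have := mem_range.1 hi; lia)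
  have hleft {i : ℕ} (hi : i ∈ range 3) :=
    distProd_le_of_eq_mul (A := s - n * i) (a := ρ - i)
      (by rw [Nat.cast_sub ((hni hi).trans (by lia)), hs]; push_cast; ring) hn
      (by linarith [i.cast_nonneg (α := ℝ)]) hc y
  have hright {i : ℕ} (hi : i ∈ range 3) :=
    distProd_le_of_eq_mul (A := 11 * n + n * i - s) (a := 11 + i - ρ)
      (by rw [Nat.cast_sub (by lia), hs]; push_cast; ring) hn
      (by have : (i : ℝ) ≤ 2 := mod_cast Nat.lt_succ_iff.1 (mem_range.1 hi)
          linarith) hc y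
  rw [norm_aeval_binomialProd hslo hshi]
  refine (mul_le_mul (inv_factorial_pow_three_le hn)
    (prod_le_prod (fun i _ ↦ mul_nonneg (distProd_nonneg _ _) (distProd_nonneg _ _))
      fun i hi ↦ mul_le_mul (hleft hi) (hright hi) (distProd_nonneg _ _) (by positivity))
    (prod_nonneg fun i _ ↦ mul_nonneg (distProd_nonneg _ _) (distProd_nonneg _ _))
    (exp_nonneg _)).trans_eq ?_
  simp only [mul_mul_mul_comm, ← exp_add]
  rw [prod_mul_distrib, prod_const, card_range, ← exp_sum, mul_left_comm, ← exp_add, ← sq,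
    ← pow_mul]
  congr 2
  simp only [saddleExponent, saddleAngle, sum_range_succ, sum_range_zero]
  push_cast
  ring

lemma adjointDiffOp_eq_eval_mul_sub (t : ℝ) {P : ℝ[X]} (hP : P.natDegree ≤ 2) (G : ℝ[X]) :
    ∃ H, H = C (P.coeff 1 + t * P.coeff 2) * G - C (P.coeff 2) * derivative G ∧
      adjointDiffOp P G = C (P.eval t) * G - (C t * H + derivative H) := by
  refine ⟨_, rfl, ?_⟩
  have hquadratic := eq_quadratic_of_degree_le_two (natDegree_le_iff_degree_le.1 hP)
  have heval : P.eval t = P.coeff 2 * t ^ 2 + P.coeff 1 * t + P.coeff 0 := by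
    conv_lhs => rw [hquadratic]
    simp only [eval_add, eval_mul, eval_C, eval_pow, eval_X]
  have hadj : adjointDiffOp P G =
      C (P.coeff 2) * derivative (derivative G) - C (P.coeff 1) * derivative G +
        C (P.coeff 0) * G := by
    conv_lhs => rw [hquadratic]
    simp only [adjointDiffOp, map_add, map_mul, aeval_C, aeval_X, LinearMap.add_apply,
      Module.End.mul_apply, Module.algebraMap_end_apply, pow_two, smul_eq_C_mul,
      LinearMap.neg_apply, sub_eq_add_neg, map_neg, neg_neg]
  rw [hadj, heval]
  simp only [derivative_sub, derivative_C_mul]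
  simp only [C_add, C_mul, C_pow]
  ring

lemma norm_criticalLine_pow_le {j : ℕ} (hj : j < 3) (y : ℝ) :
    ‖criticalLine y‖ ^ j ≤ (1 + |y|) ^ 2 :=
  (pow_le_pow_left₀ (norm_nonneg _) (norm_criticalLine_le y) j).trans
    (pow_le_pow_right₀ (by linarith [abs_nonneg y]) (by lia))

lemma norm_aeval_binomialProd_mul_X_pow_le {j : ℕ} (hj : j < 3) (y : ℝ) :
    ‖(binomialProd n s * X ^ j).aeval (criticalLine y)‖ ≤
      (1 + |y|) ^ 2 * ‖(binomialProd n s).aeval (criticalLine y)‖ := by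
  rw [map_mul, map_pow, aeval_X, norm_mul, norm_pow, mul_comm]
  gcongr
  exact norm_criticalLine_pow_le hj y

lemma norm_aeval_derivative_binomialProd_mul_X_pow_le {j : ℕ} (hj : j < 3) (y : ℝ) :
    ‖(derivative (binomialProd n s * X ^ j)).aeval (criticalLine y)‖ ≤
      (66 * n + 2) * ((1 + |y|) ^ 2 * ‖(binomialProd n s).aeval (criticalLine y)‖) := by
  have hderiv := norm_aeval_derivative_binomialProd_le (n := n) (s := s) y
  have hj' : (j : ℝ) ≤ 2 := mod_cast Nat.lt_succ_iff.1 hj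
  rw [derivative_mul, derivative_X_pow, map_add]
  refine (norm_add_le _ _).trans ?_
  simp only [map_mul, map_pow, aeval_X, aeval_C, norm_mul, norm_pow, norm_algebraMap', norm_natCast]
  calc _ ≤ 66 * n * ‖(binomialProd n s).aeval (criticalLine y)‖ * (1 + |y|) ^ 2 +
        ‖(binomialProd n s).aeval (criticalLine y)‖ * (2 * (1 + |y|) ^ 2) := by
        gcongr
        · exact norm_criticalLine_pow_le hj y
        · exact norm_criticalLine_pow_le (by lia) y
    _ = _ := by ring

lemma norm_aeval_C_mul_sub_C_mul_derivative_le (hn : 0 < n) {j : ℕ} (hj : j < 3)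
    {t h a b : ℝ} (ha : |a| ≤ (1 + |t|) * h) (hb : |b| ≤ h) (y : ℝ) :
    ‖(C a * (binomialProd n s * X ^ j) - C b * derivative (binomialProd n s * X ^ j)).aeval
        (criticalLine y)‖ ≤
      (69 + |t|) * h * n * ((1 + |y|) ^ 2 * ‖(binomialProd n s).aeval (criticalLine y)‖) := by
  have hn' : (1 : ℝ) ≤ n := mod_cast hn
  have hh : 0 ≤ h := (abs_nonneg b).trans hb
  have hvalue := norm_aeval_binomialProd_mul_X_pow_le (n := n) (s := s) hj y
  have hderiv := norm_aeval_derivative_binomialProd_mul_X_pow_le (n := n) (s := s) hj y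
  rw [map_sub, map_mul _ (C a), map_mul _ (C b), aeval_C, aeval_C]
  refine (norm_sub_le _ _).trans ?_
  simp only [norm_mul, norm_algebraMap', norm_eq_abs]
  calc _ ≤ (1 + |t|) * h * ((1 + |y|) ^ 2 * ‖(binomialProd n s).aeval (criticalLine y)‖) +
        h * ((66 * n + 2) * ((1 + |y|) ^ 2 * ‖(binomialProd n s).aeval (criticalLine y)‖)) := by
        gcongr
    _ = ((1 + |t|) + (66 * n + 2)) * h *
        ((1 + |y|) ^ 2 * ‖(binomialProd n s).aeval (criticalLine y)‖) := by ring
    _ ≤ _ := by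
        rw [mul_right_comm (69 + |t|)]
        gcongr
        nlinarith [abs_nonneg t]

lemma integral_norm_aeval_mul_sechWeight_le (hs : (s : ℝ) = ρ * n) (hn : 0 < n) (hlo : 2 ≤ ρ)
    (hhi : ρ ≤ 11) (hc : 0 < c) (hangle : saddleAngle ρ c < 2 * π) {L : ℝ} (hL : 0 ≤ L)
    {H : ℝ[X]} (hH : ∀ y, ‖H.aeval (criticalLine y)‖ ≤
      L * ((1 + |y|) ^ 2 * ‖(binomialProd n s).aeval (criticalLine y)‖)) :
    ∫ y, ‖H.aeval (criticalLine y)‖ * sechWeight y ≤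
      L * n ^ 6 * exp (n * saddleExponent ρ c) * (12 ^ 6 * (2 * π) * exp (saddleAngle ρ c) *
        ∫ y, (1 + |y|) ^ 8 * exp (-(2 * π - saddleAngle ρ c) * |y|)) := by
  rw [← integral_const_mul, ← integral_const_mul]
  refine integral_mono_of_nonneg
    (.of_forall fun y ↦ mul_nonneg (norm_nonneg _) (sechWeight_pos y).le)
    (((integrable_one_add_abs_pow_mul_exp_neg (by linarith) 8).const_mul _).const_mul _)
    (.of_forall fun y ↦ ?_)
  calc ‖H.aeval (criticalLine y)‖ * sechWeight y
      ≤ L * ((1 + |y|) ^ 2 * ((12 * n * (1 + |y|)) ^ 6 *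
        exp (n * saddleExponent ρ c + (1 + |y|) * saddleAngle ρ c))) *
          (2 * π * exp (-(2 * π) * |y|)) := by
        refine mul_le_mul ((hH y).trans ?_) (sechWeight_le y) (sechWeight_pos y).le (by positivity)
        gcongr
        exact norm_aeval_binomialProd_le hs hn hlo hhi hc y
    _ = _ := by
        have hexp : n * saddleExponent ρ c + (1 + |y|) * saddleAngle ρ c + -(2 * π) * |y| =
            n * saddleExponent ρ c + saddleAngle ρ c + -(2 * π - saddleAngle ρ c) * |y| := by ring
        have hexp' := congrArg exp hexp
        simp only [exp_add _ (-_ * _), exp_add _ (saddleAngle ρ c)] at hexp'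
        linear_combination L * (1 + |y|) ^ 8 * 12 ^ 6 * n ^ 6 * (2 * π) * hexp'

theorem exists_abs_polyExpSum_adjointDiffOp_sub_le {t : ℝ} (ht : t < 0) (hlo : 2 ≤ ρ)
    (hhi : ρ ≤ 11) (hc : 0 < c) (hangle : saddleAngle ρ c < 2 * π) :
    ∃ K, 0 ≤ K ∧ ∀ n s : ℕ, 0 < n → (s : ℝ) = ρ * n → ∀ j < 3, ∀ P : ℝ[X], P.natDegree ≤ 2 →
      ∀ h, (∀ i, |P.coeff i| ≤ h) →
        |polyExpSum t (adjointDiffOp P (binomialProd n s * X ^ j)) -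
          P.eval t * polyExpSum t (binomialProd n s * X ^ j)| ≤
            K * h * n ^ 7 * exp (n * saddleExponent ρ c) := by
  refine ⟨(69 + |t|) * (12 ^ 6 * (2 * π) * exp (saddleAngle ρ c) *
    ∫ y, (1 + |y|) ^ 8 * exp (-(2 * π - saddleAngle ρ c) * |y|)), ?_, ?_⟩
  · have : 0 ≤ ∫ y : ℝ, (1 + |y|) ^ 8 * exp (-(2 * π - saddleAngle ρ c) * |y|) :=
      integral_nonneg fun y ↦ by positivity
    positivity
  intro n s hn hs j hj P hP h hcoeff
  have hh : 0 ≤ h := (abs_nonneg _).trans (hcoeff 0)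
  obtain ⟨H, hH, hadj⟩ := adjointDiffOp_eq_eval_mul_sub t hP (binomialProd n s * X ^ j)
  have hsplit : polyExpSum t (adjointDiffOp P (binomialProd n s * X ^ j)) =
      P.eval t * polyExpSum t (binomialProd n s * X ^ j) -
        polyExpSum t (C t * H + derivative H) := by
    rw [hadj, ← polyExpSum_C_mul]
    exact map_sub (polyExpSumHom ht) _ _
  have hslope : |P.coeff 1 + t * P.coeff 2| ≤ (1 + |t|) * h :=
    calc _ ≤ |P.coeff 1| + |t| * |P.coeff 2| := by
          rw [← abs_mul]
          exact abs_add_le _ _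
      _ ≤ h + |t| * h := by gcongr <;> exact hcoeff _
      _ = _ := by ring
  rw [hsplit, sub_sub_cancel_left, abs_neg]
  refine ((abs_polyExpSum_C_mul_add_derivative_le H ht).trans
    (integral_norm_aeval_mul_sechWeight_le hs hn hlo hhi hc hangle (by positivity) fun y ↦
      hH ▸ norm_aeval_C_mul_sub_C_mul_derivative_le hn hj hslope (hcoeff 2) y)).trans_eq ?_
  ring

end SaddlePoint

section SaddleNumerics

open Finset Real

lemma one_le_log_sub_mul_log_ten : 1 ≤ log 27182818286 - 10 * log 10 := by
  have hexp : exp 1 ≤ 27182818286 / 10 ^ 10 := exp_one_lt_d9.le.trans (by norm_num)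
  rwa [← le_log_iff_exp_le (by positivity), log_div (by positivity) (by positivity), log_pow,
    Nat.cast_ofNat] at hexp

lemma log_sub_mul_log_ten_le_one : log 27182818283 - 10 * log 10 ≤ 1 := by
  have hexp : 27182818283 / 10 ^ 10 ≤ exp 1 := le_trans (by norm_num) exp_one_gt_d9.le
  rwa [← log_le_iff_le_exp (by positivity), log_div (by positivity) (by positivity), log_pow,
    Nat.cast_ofNat] at hexp

lemma log_sq_add_sq_saddle {x : ℝ} (a : ℕ) (hx : x = a / 100) :
    log (x ^ 2 + 3.102761 ^ 2) = log (a ^ 2 * 10 ^ 8 + 3102761 ^ 2) - 12 * log 10 := by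
  have hscale : x ^ 2 + 3.102761 ^ 2 = (a ^ 2 * 10 ^ 8 + 3102761 ^ 2) / 10 ^ 12 := by
    rw [hx]
    ring
  rw [hscale, log_div (by positivity) (by positivity), log_pow, Nat.cast_ofNat]

set_option exponentiation.threshold 400000 in
-- The `1000`-th power of `exp (saddleExponent 6.99 3.102761) ≤ exp (-17.754037)`, with
-- denominators cleared, `e` replaced by `2.7182818286` and `exp (-0.037)` by `0.963`.
lemma saddle_power_le : (699 ^ 2 * 10 ^ 8 + 3102761 ^ 2) ^ 3495 *
    (401 ^ 2 * 10 ^ 8 + 3102761 ^ 2) ^ 2005 * (599 ^ 2 * 10 ^ 8 + 3102761 ^ 2) ^ 2995 *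
    (501 ^ 2 * 10 ^ 8 + 3102761 ^ 2) ^ 2505 * (499 ^ 2 * 10 ^ 8 + 3102761 ^ 2) ^ 2495 *
    (601 ^ 2 * 10 ^ 8 + 3102761 ^ 2) ^ 3005 * 27182818286 ^ 17754 * 1000 ≤
      963 * 11 ^ 33000 * 10 ^ 375540 := by
  norm_num

lemma saddleExponent_le : saddleExponent 6.99 3.102761 ≤ -17.754037 := by
  have hpower := log_le_log (by positivity) (Nat.cast_le (α := ℝ).2 saddle_power_le)
  simp only [Nat.cast_mul, Nat.cast_pow, Nat.cast_add, Nat.cast_ofNat] at hpower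
  simp (disch := positivity) only [log_mul, log_pow] at hpower
  have hratio : log 963 - log 1000 ≤ -0.037 := by
    rw [← log_div (by norm_num) (by norm_num)]
    exact (log_le_sub_one_of_pos (by norm_num)).trans_eq (by norm_num)
  have he := one_le_log_sub_mul_log_ten
  simp only [saddleExponent, sum_range_succ, sum_range_zero]
  rw [log_sq_add_sq_saddle (x := 6.99 - (0 : ℕ)) 699 (by norm_num),
    log_sq_add_sq_saddle (x := 6.99 - (1 : ℕ)) 599 (by norm_num),
    log_sq_add_sq_saddle (x := 6.99 - (2 : ℕ)) 499 (by norm_num),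
    log_sq_add_sq_saddle (x := 11 + (0 : ℕ) - 6.99) 401 (by norm_num),
    log_sq_add_sq_saddle (x := 11 + (1 : ℕ) - 6.99) 501 (by norm_num),
    log_sq_add_sq_saddle (x := 11 + (2 : ℕ) - 6.99) 601 (by norm_num)]
  norm_num only at hpower hratio ⊢
  linarith

lemma pi_lt_arctan_add_arctan_add_arctan {x y z : ℝ} (hx : 0 < x) (hxy : 1 < x * y)
    (hxyz : x + y + z < x * y * z) : π < arctan x + arctan y + arctan z := by
  have hbelow : -((x + y) / (1 - x * y)) < z := by
    rw [← div_neg, neg_sub, div_lt_iff₀ (by linarith)]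
    linarith
  have hmono := arctan_strictMono hbelow
  rw [arctan_neg] at hmono
  linarith [arctan_add_eq_add_pi hxy hx]

lemma saddleAngle_lt : saddleAngle 6.99 3.102761 < 2 * π := by
  have hinv {a : ℝ} (ha : 0 < a) :
      arctan (a / 3.102761) = π / 2 - arctan (3.102761 / a) := by
    rw [← arctan_inv_of_pos (by positivity), inv_div]
  have hadd₁ := arctan_add (x := 3.102761 / 6.99) (y := 3.102761 / 4.01) (by norm_num)
  have hadd₂ := arctan_add (x := 3.102761 / 5.99) (y := 3.102761 / 5.01) (by norm_num)
  have hadd₃ := arctan_add (x := 3.102761 / 4.99) (y := 3.102761 / 6.01) (by norm_num)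
  have htriangle := pi_lt_arctan_add_arctan_add_arctan
    (x := (3.102761 / 6.99 + 3.102761 / 4.01) / (1 - 3.102761 / 6.99 * (3.102761 / 4.01)))
    (y := (3.102761 / 5.99 + 3.102761 / 5.01) / (1 - 3.102761 / 5.99 * (3.102761 / 5.01)))
    (z := (3.102761 / 4.99 + 3.102761 / 6.01) / (1 - 3.102761 / 4.99 * (3.102761 / 6.01)))
    (by norm_num) (by norm_num) (by norm_num)
  have hangles : saddleAngle 6.99 3.102761 =
      arctan (6.99 / 3.102761) + arctan (4.01 / 3.102761) +
        (arctan (5.99 / 3.102761) + arctan (5.01 / 3.102761)) +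
        (arctan (4.99 / 3.102761) + arctan (6.01 / 3.102761)) := by
    simp only [saddleAngle, sum_range_succ, sum_range_zero]
    norm_num
  rw [hangles, hinv (by norm_num), hinv (by norm_num), hinv (by norm_num), hinv (by norm_num),
    hinv (by norm_num), hinv (by norm_num)]
  linarith

end SaddleNumerics

section GrowthBound

open Finset Polynomial Real
open scoped Nat

lemma choose_le_one_add_pow_div (n l : ℕ) {u : ℝ} (hu : 0 < u) :
    (n.choose l : ℝ) ≤ (1 + u) ^ n / u ^ l := by
  rw [le_div_iff₀ (by positivity), add_comm, add_pow]
  rcases le_or_gt l n with hl | hl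
  · have hterm := single_le_sum (f := fun i ↦ u ^ i * 1 ^ (n - i) * (n.choose i : ℝ))
      (fun i _ ↦ by positivity) (mem_range.2 (Nat.lt_succ_of_le hl))
    rwa [one_pow, mul_one, mul_comm] at hterm
  · rw [Nat.choose_eq_zero_of_lt hl, Nat.cast_zero, zero_mul]
    positivity

lemma prod_range_sub_eq_factorial_mul_choose (n l : ℕ) :
    ∏ j ∈ range l, ((n : ℝ) - j) = l ! * n.choose l := by
  rw [← descPochhammer_eval_eq_prod_range, descPochhammer_eval_eq_descFactorial,
    Nat.descFactorial_eq_factorial_mul_choose, Nat.cast_mul]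

variable {n s : ℕ}

lemma eval_binomialProd (hs : 2 * n ≤ s) (k : ℕ) : (binomialProd n s).eval ((k : ℝ) + 1) =
    ∏ i ∈ range 3, ((k + (s - n * i)).choose (11 * n) : ℝ) := by
  have hblock {i : ℕ} (hi : i ∈ range 3) :
      ∏ j ∈ range (11 * n), ((k : ℝ) + 1 - ((n * i + j + 1 - s : ℤ) : ℝ)) =
        (11 * n)! * (k + (s - n * i)).choose (11 * n) := by
    have hni : n * i ≤ n * 2 := Nat.mul_le_mul_left _ (by have := mem_range.1 hi; lia)
    rw [← prod_range_sub_eq_factorial_mul_choose, Nat.cast_add, Nat.cast_sub (by lia)]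
    refine prod_congr rfl fun j _ ↦ ?_
    push_cast
    ring
  simp only [binomialProd, nodeProd_blockIndex, eval_mul, eval_C, eval_prod, eval_sub, eval_X]
  rw [prod_congr rfl fun i hi ↦ hblock hi, prod_mul_distrib, prod_const, card_range,
    inv_mul_cancel_left₀ (by positivity)]

/-- The exponential rate of the bound for the values of `binomialProd n (ρ * n)` that comes from
`Nat.choose m l ≤ (1 + u) ^ m / u ^ l` with `u = 11 / (w - i)` in the `i`-th block. -/
noncomputable def growthExponent (ρ w : ℝ) : ℝ :=
  ∑ i ∈ range 3, ((ρ - i) * log (w + 11 - i) + (11 + i - ρ) * log (w - i)) - 33 * log 11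

variable {ρ w : ℝ}

lemma choose_le_exp_mul_pow (hs : (s : ℝ) = ρ * n) (hlo : 2 * n ≤ s) (hw : 2 < w) {i : ℕ}
    (hi : i ∈ range 3) (k : ℕ) : ((k + (s - n * i)).choose (11 * n) : ℝ) ≤
      exp (n * ((ρ - i) * log (w + 11 - i) + (11 + i - ρ) * log (w - i) - 11 * log 11)) *
        ((w + 11 - i) / (w - i)) ^ (k + 1) := by
  have hi2 : i ≤ 2 := Nat.lt_succ_iff.1 (mem_range.1 hi)
  have hni : n * i ≤ s := (Nat.mul_le_mul_left n hi2).trans (by lia)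
  have hwi : 0 < w - i := by
    have : (i : ℝ) ≤ 2 := mod_cast hi2
    linarith
  have hwi' : 0 < w + 11 - i := by linarith
  have hratio : 1 + 11 / (w - i) = (w + 11 - i) / (w - i) := by
    rw [one_add_div hwi.ne', sub_add_eq_add_sub]
  have : 1 ≤ (w + 11 - i) / (w - i) := (one_le_div hwi).2 (by linarith)
  have hbase : ((w + 11 - i) / (w - i)) ^ (s - n * i) / (11 / (w - i)) ^ (11 * n) =
      exp (n * ((ρ - i) * log (w + 11 - i) + (11 + i - ρ) * log (w - i) - 11 * log 11)) := by
    rw [eq_comm, ← log_injOn_pos.eq_iff (exp_pos _) (by positivity : (0 : ℝ) < _), log_exp,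
      log_div (by positivity) (by positivity), log_pow, log_pow, log_div hwi'.ne' hwi.ne',
      log_div (by norm_num) hwi.ne', Nat.cast_sub hni, hs]
    push_cast
    ring
  refine (choose_le_one_add_pow_div _ _ (div_pos (by norm_num : (0 : ℝ) < 11) hwi)).trans ?_
  rw [hratio, pow_add, mul_div_assoc, hbase, mul_comm]
  gcongr
  exact k.le_succ

lemma eval_binomialProd_le (hs : (s : ℝ) = ρ * n) (hlo : 2 * n ≤ s) (hw : 2 < w) (k : ℕ) :
    (binomialProd n s).eval ((k : ℝ) + 1) ≤
      exp (n * growthExponent ρ w) * (∏ i ∈ range 3, (w + 11 - i) / (w - i)) ^ (k + 1) := by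
  rw [eval_binomialProd hlo]
  refine (prod_le_prod (fun i _ ↦ Nat.cast_nonneg _)
    fun i hi ↦ choose_le_exp_mul_pow hs hlo hw hi k).trans_eq ?_
  rw [prod_mul_distrib, ← exp_sum, ← mul_sum, prod_pow, sum_sub_distrib, sum_const, card_range,
    growthExponent]
  congr 3
  rw [nsmul_eq_mul]
  ring

lemma eval_binomialProd_mul_X_pow_mul_exp_nonneg (hlo : 2 * n ≤ s) (t : ℝ) (j k : ℕ) :
    0 ≤ (binomialProd n s * X ^ j).eval ((k : ℝ) + 1) * exp (t * ((k : ℝ) + 1)) := by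
  rw [eval_mul, eval_pow, eval_X, eval_binomialProd hlo]
  positivity

lemma eval_binomialProd_mul_X_pow_mul_exp_le (hs : (s : ℝ) = ρ * n) (hlo : 2 * n ≤ s)
    (hw : 2 < w) (t : ℝ) {j : ℕ} (hj : j < 3) (k : ℕ) :
    (binomialProd n s * X ^ j).eval ((k : ℝ) + 1) * exp (t * ((k : ℝ) + 1)) ≤
      ((k : ℝ) + 1) ^ 2 * (exp t * ∏ i ∈ range 3, (w + 11 - i) / (w - i)) ^ (k + 1) *
        exp (n * growthExponent ρ w) := by
  have hvalue := eval_binomialProd_le hs hlo hw k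
  have hnonneg : 0 ≤ (binomialProd n s).eval ((k : ℝ) + 1) := by
    rw [eval_binomialProd hlo]
    positivity
  have hpow : ((k : ℝ) + 1) ^ j ≤ ((k : ℝ) + 1) ^ 2 :=
    pow_le_pow_right₀ (by linarith [k.cast_nonneg (α := ℝ)]) (by lia)
  have hexp : exp (t * ((k : ℝ) + 1)) = exp t ^ (k + 1) := by
    rw [← exp_nat_mul, mul_comm, Nat.cast_add_one]
  rw [eval_mul, eval_pow, eval_X, hexp, mul_pow (exp t)]
  calc _ ≤ exp (n * growthExponent ρ w) * (∏ i ∈ range 3, (w + 11 - i) / (w - i)) ^ (k + 1) *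
        ((k : ℝ) + 1) ^ 2 * exp t ^ (k + 1) :=
        mul_le_mul_of_nonneg_right
          (mul_le_mul hvalue hpow (by positivity) (hnonneg.trans hvalue)) (by positivity)
    _ = _ := by ring

lemma summable_add_one_sq_mul_pow_succ {q : ℝ} (hq : |q| < 1) :
    Summable fun k : ℕ ↦ ((k : ℝ) + 1) ^ 2 * q ^ (k + 1) := by
  have hgeometric : Summable fun k : ℕ ↦ (k : ℝ) ^ 2 * q ^ k :=
    summable_pow_mul_geometric_of_norm_lt_one 2 (by rwa [norm_eq_abs])
  simpa only [Nat.cast_add_one] using (summable_nat_add_iff 1).2 hgeometric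

theorem exists_abs_polyExpSum_binomialProd_mul_X_pow_le {t : ℝ} (ht : t < 0) (hρ : 2 ≤ ρ)
    (hw : 2 < w) (hconv : exp t * ∏ i ∈ range 3, (w + 11 - i) / (w - i) < 1) :
    ∃ K, 0 ≤ K ∧ ∀ n s : ℕ, (s : ℝ) = ρ * n → ∀ j < 3,
      |polyExpSum t (binomialProd n s * X ^ j)| ≤ K * exp (n * growthExponent ρ w) := by
  have hnonneg : 0 ≤ exp t * ∏ i ∈ range 3, (w + 11 - i) / (w - i) :=
    mul_nonneg (exp_nonneg _) (prod_nonneg fun i hi ↦ by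
      have : (i : ℝ) ≤ 2 := mod_cast Nat.lt_succ_iff.1 (mem_range.1 hi)
      exact div_nonneg (by linarith) (by linarith))
  have hsummable := summable_add_one_sq_mul_pow_succ ((abs_of_nonneg hnonneg).trans_lt hconv)
  refine ⟨∑' k : ℕ, ((k : ℝ) + 1) ^ 2 *
      (exp t * ∏ i ∈ range 3, (w + 11 - i) / (w - i)) ^ (k + 1),
    tsum_nonneg fun k ↦ mul_nonneg (sq_nonneg _) (pow_nonneg hnonneg (k + 1)), ?_⟩
  intro n s hs j hj
  have hlo : 2 * n ≤ s := by
    have : (2 : ℝ) * n ≤ s := hs ▸ mul_le_mul_of_nonneg_right hρ n.cast_nonneg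
    exact_mod_cast this
  rw [polyExpSum,
    abs_of_nonneg (tsum_nonneg (eval_binomialProd_mul_X_pow_mul_exp_nonneg hlo t j)),
    ← tsum_mul_right]
  exact (summable_polyExpSum _ ht).tsum_le_tsum
    (eval_binomialProd_mul_X_pow_mul_exp_le hs hlo hw t hj) (hsummable.mul_right _)

end GrowthBound

section GrowthNumerics

open Finset Real

set_option exponentiation.threshold 400000 in
-- The `500`-th power of `exp (growthExponent 6.99 77.0201) ≤ exp 66.215892`, with denominators
-- cleared, `e` replaced by `2.7182818283` and `exp (-0.054)` by `0.946`.
lemma growth_power_le :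
    880201 ^ 3495 * 870201 ^ 2995 * 860201 ^ 2495 *
        770201 ^ 2005 * 760201 ^ 2505 * 750201 ^ 3005 * 10 ^ 331080 * 1000 ≤
      946 * (110000 ^ 16500 * 27182818283 ^ 33108) := by
  norm_num

lemma growthExponent_le : growthExponent 6.99 77.0201 ≤ 66.215892 := by
  have hpower := log_le_log (by positivity) (Nat.cast_le (α := ℝ).2 growth_power_le)
  simp only [Nat.cast_mul, Nat.cast_pow, Nat.cast_ofNat] at hpower
  simp (disch := positivity) only [log_mul, log_pow] at hpower
  have hratio : log 946 - log 1000 ≤ -0.054 := by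
    rw [← log_div (by norm_num) (by norm_num)]
    exact (log_le_sub_one_of_pos (by norm_num)).trans_eq (by norm_num)
  have hscale {x : ℝ} (m : ℝ) (hm : 0 < m) (hx : x = m / 10 ^ 4) :
      log x = log m - 4 * log 10 := by
    rw [hx, log_div hm.ne' (by positivity), log_pow, Nat.cast_ofNat]
  have he := log_sub_mul_log_ten_le_one
  simp only [growthExponent, sum_range_succ, sum_range_zero]
  rw [hscale (x := 77.0201 + 11 - (0 : ℕ)) 880201 (by norm_num) (by norm_num),
    hscale (x := 77.0201 + 11 - (1 : ℕ)) 870201 (by norm_num) (by norm_num),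
    hscale (x := 77.0201 + 11 - (2 : ℕ)) 860201 (by norm_num) (by norm_num),
    hscale (x := 77.0201 - (0 : ℕ)) 770201 (by norm_num) (by norm_num),
    hscale (x := 77.0201 - (1 : ℕ)) 760201 (by norm_num) (by norm_num),
    hscale (x := 77.0201 - (2 : ℕ)) 750201 (by norm_num) (by norm_num),
    hscale (x := 11) 110000 (by norm_num) (by norm_num)]
  norm_num only at hpower hratio ⊢
  linarith

lemma two_thirds_mul_prod_growth_ratio_lt_one :
    (2 / 3 : ℝ) * ∏ i ∈ range 3, (77.0201 + 11 - (i : ℝ)) / (77.0201 - i) < 1 := by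
  simp only [prod_range_succ, prod_range_zero]
  norm_num

set_option exponentiation.threshold 400000 in
-- The `4400`-th power of `exp 8.261595 ≤ 2 ^ 4.01 * 3 ^ 4.99`, with denominators cleared and `e`
-- replaced by `2.7182818286`; the slack `1.0204` rounds the exponents `8.261595 * 4400` to integers.
lemma le_two_pow_mul_three_pow :
    27182818286 ^ 36351 * 10204 ≤ 10000 * (2 ^ 17644 * 3 ^ 21956 * 10 ^ 363510) := by
  norm_num

lemma le_mul_log_two_add_mul_log_three : 8.261595 ≤ 4.01 * log 2 + 4.99 * log 3 := by
  have hpower := log_le_log (by positivity) (Nat.cast_le (α := ℝ).2 le_two_pow_mul_three_pow)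
  simp only [Nat.cast_mul, Nat.cast_pow, Nat.cast_ofNat] at hpower
  simp (disch := positivity) only [log_mul, log_pow] at hpower
  have hratio : log 10000 - log 10204 ≤ 10000 / 10204 - 1 := by
    rw [← log_div (by norm_num) (by norm_num)]
    exact log_le_sub_one_of_pos (by norm_num)
  have he := one_le_log_sub_mul_log_ten
  norm_num only at hpower hratio ⊢
  linarith

end GrowthNumerics

section PolynomialMeasure

open Finset Filter Polynomial Real
open scoped Topology

/-- The real number `α` satisfies `|P(α)| ≥ c * h ^ (-μ)` for some `c > 0` and all nonzero integer
polynomials `P` of degree at most `d` whose coefficients are bounded by a large enough `h`. -/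
def HasPolynomialMeasure (d : ℕ) (α μ : ℝ) : Prop :=
  ∃ c > 0, ∀ᶠ h : ℝ in atTop, ∀ P : ℤ[X], P ≠ 0 → P.natDegree ≤ d →
    (∀ i, |(P.coeff i : ℝ)| ≤ h) → c ≤ |aeval α P| * h ^ μ

lemma natAbs_coeff_le_polyHeight (P : ℤ[X]) (i : ℕ) : (P.coeff i).natAbs ≤ polyHeight P := by
  by_cases hi : i ∈ P.support
  · exact le_sup (f := fun i ↦ (P.coeff i).natAbs) hi
  · rw [notMem_support_iff.1 hi, Int.natAbs_zero]
    exact zero_le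

lemma abs_coeff_le_polyHeight (P : ℤ[X]) (i : ℕ) : |(P.coeff i : ℝ)| ≤ polyHeight P := by
  rw [← Int.cast_abs, ← Nat.cast_natAbs]
  exact_mod_cast natAbs_coeff_le_polyHeight P i

variable {d : ℕ} {α μ : ℝ}

lemma finite_setOf_root_of_polyHeight_le (d N : ℕ) :
    {β : ℝ | ∃ P : ℤ[X], P ≠ 0 ∧ P.natDegree ≤ d ∧ aeval β P = 0 ∧ polyHeight P ≤ N}.Finite := by
  refine (bUnion_roots_finite (algebraMap ℤ ℝ) d (Set.finite_Icc (-N : ℤ) N)).subset ?_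
  rintro β ⟨P, hP, hdeg, hroot, hheight⟩
  refine Set.mem_biUnion (x := P) ⟨hdeg, fun i ↦ ?_⟩ ?_
  · have := natAbs_coeff_le_polyHeight P i
    exact ⟨by lia, by lia⟩
  · exact mem_rootSet.2 ⟨hP, hroot⟩

lemma abs_aeval_sub_aeval_le {β h : ℝ} (hβ : |α - β| ≤ 1) {P : ℤ[X]} (hdeg : P.natDegree ≤ d)
    (hcoeff : ∀ i, |(P.coeff i : ℝ)| ≤ h) :
    |aeval α P - aeval β P| ≤
      |α - β| * h * ∑ i ∈ range (d + 1), i * (|α| + 1) ^ (i - 1) := by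
  have hmax : max |α| |β| ≤ |α| + 1 := by
    have htriangle := abs_sub_abs_le_abs_sub β α
    rw [abs_sub_comm] at htriangle
    exact max_le (by linarith) (by linarith)
  have hpow (i : ℕ) : |α ^ i - β ^ i| ≤ |α - β| * (i * (|α| + 1) ^ (i - 1)) := by
    rw [← mul_assoc]
    exact (abs_pow_sub_pow_le α β i).trans (by gcongr)
  rw [aeval_eq_sum_range' (Nat.lt_succ_of_le hdeg), aeval_eq_sum_range' (Nat.lt_succ_of_le hdeg),
    ← sum_sub_distrib, mul_sum]
  refine (abs_sum_le_sum_abs _ _).trans (sum_le_sum fun i _ ↦ ?_)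
  rw [zsmul_eq_mul, zsmul_eq_mul, ← mul_sub, abs_mul]
  calc _ ≤ h * (|α - β| * (i * (|α| + 1) ^ (i - 1))) :=
        mul_le_mul (hcoeff i) (hpow i) (abs_nonneg _) ((abs_nonneg _).trans (hcoeff i))
    _ = _ := by ring

namespace HasPolynomialMeasure

lemma intCast_mul (hα : HasPolynomialMeasure d α μ) {q : ℤ} (hq : q ≠ 0) :
    HasPolynomialMeasure d (q * α) μ := by
  obtain ⟨c, hc, hlower⟩ := hα
  have hqpos : (0 : ℝ) < |(q : ℝ)| ^ d := by positivity
  have hqone : 1 ≤ |(q : ℝ)| := mod_cast Int.one_le_abs hq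
  refine ⟨c / (|(q : ℝ)| ^ d) ^ μ, by positivity, ?_⟩
  filter_upwards [(tendsto_id.const_mul_atTop hqpos).eventually hlower, eventually_ge_atTop 0]
    with h hh hnonneg P hP hdeg hcoeff
  have hscaled : aeval α (P.comp (C q * X)) = aeval (q * α) P := by
    rw [aeval_comp, map_mul, aeval_C, aeval_X, algebraMap_int_eq, eq_intCast]
  rw [div_le_iff₀ (by positivity), mul_right_comm, mul_assoc, mul_comm _ (h ^ μ), mul_comm (h ^ μ),
    ← mul_rpow hqpos.le hnonneg, ← hscaled]
  refine hh _ ((comp_C_mul_X_eq_zero_iff (mem_nonZeroDivisors_of_ne_zero hq)).not.2 hP)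
    ?_ fun i ↦ ?_
  · rwa [natDegree_comp, natDegree_C_mul_X _ hq, mul_one]
  · rw [comp_C_mul_X_coeff, Int.cast_mul, Int.cast_pow, abs_mul, abs_pow, mul_comm]
    obtain hi | hi := le_or_gt i d
    · exact mul_le_mul (pow_le_pow_right₀ hqone hi) (hcoeff i) (abs_nonneg _) hqpos.le
    · rw [coeff_eq_zero_of_natDegree_lt (hdeg.trans_lt hi), Int.cast_zero, abs_zero, mul_zero]
      exact mul_nonneg hqpos.le hnonneg

theorem finite_setOf_abs_sub_lt (hα : HasPolynomialMeasure d α μ) (hμ : 0 ≤ μ) {κ : ℝ}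
    (hκ : μ + 1 < κ) : {β : ℝ | ∃ P : ℤ[X], P ≠ 0 ∧ P.natDegree ≤ d ∧ aeval β P = 0 ∧
      |α - β| < (polyHeight P : ℝ) ^ (-κ)}.Finite := by
  obtain ⟨c, hc, hlower⟩ := hα
  set K := ∑ i ∈ range (d + 1), i * (|α| + 1) ^ (i - 1)
  have : 0 ≤ K := sum_nonneg fun i _ ↦ by positivity
  have hdecay : ∀ᶠ h : ℝ in atTop, K * h ^ (-(κ - (μ + 1))) < c := by
    have hlim := (tendsto_rpow_neg_atTop (sub_pos.2 hκ)).const_mul K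
    rw [mul_zero] at hlim
    exact hlim.eventually_lt_const hc
  obtain ⟨N, hN⟩ := eventually_atTop.1 (tendsto_natCast_atTop_atTop.eventually
    (hlower.and (hdecay.and (eventually_ge_atTop 1))))
  refine (finite_setOf_root_of_polyHeight_le d N).subset ?_
  rintro β ⟨P, hP, hdeg, hroot, hclose⟩
  refine ⟨P, hP, hdeg, hroot, le_of_not_gt fun hlarge ↦ ?_⟩
  obtain ⟨hbelow, hsmall, hone⟩ := hN _ hlarge.le
  set h : ℝ := (polyHeight P : ℝ)
  have hβ : |α - β| ≤ 1 :=
    hclose.le.trans (rpow_le_one_of_one_le_of_nonpos hone (by linarith))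
  have habove := abs_aeval_sub_aeval_le hβ hdeg (abs_coeff_le_polyHeight P)
  rw [hroot, sub_zero] at habove
  have hexponents : h ^ (-κ) * h * h ^ μ = h ^ (-(κ - (μ + 1))) := by
    nth_rewrite 2 [← rpow_one h]
    rw [← rpow_add (by linarith), ← rpow_add (by linarith)]
    ring_nf
  have hcontra : c ≤ K * h ^ (-(κ - (μ + 1))) :=
    calc c ≤ |aeval α P| * h ^ μ := hbelow P hP hdeg (abs_coeff_le_polyHeight P)
      _ ≤ h ^ (-κ) * h * K * h ^ μ := by
        gcongr
        exact habove.trans (by gcongr)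
      _ = K * h ^ (-(κ - (μ + 1))) := by
        rw [← hexponents]
        ring
  exact hcontra.not_gt hsmall

end HasPolynomialMeasure

end PolynomialMeasure

section LogTwoThirds

open Filter Polynomial Real

lemma le_reducedDenom_mul_abs_polyExpSum {p n s a b : ℕ} {t : ℝ} (hexp : exp t = p / (p + 1))
    (ha : 2 * n + a ≤ s) (hb : b + s ≤ 11 * n) (hs : s < 11 * n) {P : ℤ[X]} (hP : P ≠ 0)
    (hdeg : P.natDegree ≤ 2) : ∃ j < 3, p * p ^ b * (p + 1) ^ a ≤ (reducedDenom n : ℝ) *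
      |polyExpSum t (adjointDiffOp (P.map (Int.castRingHom ℝ)) (binomialProd n s * X ^ j))| := by
  have ht : t < 0 := by
    rw [← exp_lt_one_iff, hexp, div_lt_one (by positivity)]
    exact lt_add_one _
  obtain ⟨j, hj, hne⟩ := exists_polyExpSum_binomialProd_ne_zero ht (by lia) hs
    ((Polynomial.map_ne_zero_iff (RingHom.injective_int (Int.castRingHom ℝ))).2 hP)
    (natDegree_map_le.trans hdeg)
  obtain ⟨N, hN⟩ := exists_reducedDenom_mul_polyExpSum_eq hexp ha hb hdeg j
  have hdenom : (0 : ℝ) < reducedDenom n := Nat.cast_pos.2 (reducedDenom_pos n)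
  have hN_ne : N ≠ 0 := by
    rintro rfl
    rw [Int.cast_zero, mul_zero] at hN
    exact mul_ne_zero hdenom.ne' hne hN
  refine ⟨j, hj, ?_⟩
  rw [← abs_of_pos hdenom, ← abs_mul, hN, abs_mul, abs_of_nonneg (by positivity)]
  exact le_mul_of_one_le_right (by positivity) (mod_cast Int.one_le_abs hN_ne)

lemma eventually_mul_pow_le_exp (K : ℝ) (k : ℕ) {ε : ℝ} (hε : 0 < ε) :
    ∀ᶠ m : ℕ in atTop, K * (m : ℝ) ^ k ≤ exp (ε * m) := by
  have hlittle := (isLittleO_pow_exp_pos_mul_atTop k hε).const_mul_left K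
  filter_upwards [tendsto_natCast_atTop_atTop.eventually (hlittle.bound one_pos)] with m hm
  rw [one_mul, norm_eq_abs, norm_eq_abs, abs_exp] at hm
  exact (le_abs_self _).trans hm

lemma exp_log_two_thirds : exp (log (2 / 3)) = (2 : ℕ) / ((2 : ℕ) + 1) := by
  rw [exp_log (by norm_num)]
  norm_num

lemma log_two_thirds_neg : log (2 / 3) < 0 :=
  log_neg (by norm_num) (by norm_num)

lemma exp_mul_le_two_pow_mul_three_pow (m : ℕ) :
    exp (826.1595 * m) ≤ (2 : ℕ) * (2 : ℕ) ^ (401 * m) * ((2 : ℕ) + 1) ^ (499 * m) := by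
  have hlog := mul_le_mul_of_nonneg_right le_mul_log_two_add_mul_log_three (m.cast_nonneg (α := ℝ))
  rw [← le_log_iff_exp_le (by positivity), log_mul (by positivity) (by positivity),
    log_mul (by positivity) (by positivity), log_pow, log_pow]
  have := log_pos (one_lt_two (α := ℝ))
  norm_num at hlog ⊢
  linarith

lemma one_le_abs_mul_exp_add {m : ℕ} {D W Λ x q K L h : ℝ} (hDpos : 0 < D)
    (hh : 0 ≤ h) (hD : log D ≤ 1714.0086 * m) (hW : exp (826.1595 * m) ≤ W) (hWD : W ≤ D * |Λ|)
    (happrox : |Λ - x * q| ≤ K * h * m ^ 7 * exp (-1775.4037 * m))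
    (hq : |q| ≤ L * exp (6621.5892 * m)) (hK_le : K * m ^ 7 ≤ exp (0.0001 * m))
    (hL_le : L ≤ exp (0.0001 * m)) :
    1 ≤ |x| * exp (7509.4384 * m) + h * exp (-887.5545 * m) := by
  have hΛ : |Λ| ≤ |x| * exp (6621.5893 * m) + h * exp (-1775.4036 * m) :=
    calc |Λ| ≤ |x * q| + |Λ - x * q| := by
          have := abs_add_le (x * q) (Λ - x * q)
          rwa [add_sub_cancel] at this
      _ ≤ |x| * (L * exp (6621.5892 * m)) +
          h * (K * m ^ 7 * exp (-1775.4037 * m)) := by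
        rw [abs_mul]
        gcongr
        exact happrox.trans_eq (by ring)
      _ ≤ |x| * (exp (0.0001 * m) * exp (6621.5892 * m)) +
          h * (exp (0.0001 * m) * exp (-1775.4037 * m)) := by gcongr
      _ = _ := by
        rw [← exp_add, ← exp_add]
        ring_nf
  have hscaled : exp (826.1595 * m) ≤ exp (1714.0086 * m) *
      (|x| * exp (6621.5893 * m) + h * exp (-1775.4036 * m)) :=
    hW.trans (hWD.trans (mul_le_mul ((log_le_iff_le_exp hDpos).1 hD) hΛ (abs_nonneg _)
      (exp_nonneg _)))
  rw [← one_mul (exp (826.1595 * m))] at hscaled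
  refine le_of_mul_le_mul_right (hscaled.trans_eq ?_) (exp_pos (826.1595 * m))
  rw [mul_add, add_mul, mul_left_comm, ← exp_add, mul_left_comm, ← exp_add, mul_assoc, ← exp_add,
    mul_assoc, ← exp_add]
  ring_nf

lemma cast_699_mul_eq (m : ℕ) : ((699 * m : ℕ) : ℝ) = 6.99 * (100 * m : ℕ) := by
  push_cast
  ring

lemma exists_abs_polyExpSum_sub_aeval_mul_le : ∃ K : ℝ, ∀ m j : ℕ, 0 < m → j < 3 → ∀ P : ℤ[X],
    P.natDegree ≤ 2 → ∀ h, (∀ i, |(P.coeff i : ℝ)| ≤ h) →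
      |polyExpSum (log (2 / 3)) (adjointDiffOp (P.map (Int.castRingHom ℝ))
          (binomialProd (100 * m) (699 * m) * X ^ j)) -
        aeval (log (2 / 3)) P *
          polyExpSum (log (2 / 3)) (binomialProd (100 * m) (699 * m) * X ^ j)| ≤
        K * h * m ^ 7 * exp (-1775.4037 * m) := by
  obtain ⟨K, hK, happrox⟩ := exists_abs_polyExpSum_adjointDiffOp_sub_le log_two_thirds_neg
    (by norm_num) (by norm_num) (by norm_num) saddleAngle_lt
  refine ⟨K * 100 ^ 7, fun m j hm hj P hdeg h hcoeff ↦ ?_⟩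
  have hdiff := happrox _ _ (by lia) (cast_699_mul_eq m) j hj
    (P.map (Int.castRingHom ℝ)) (natDegree_map_le.trans hdeg) h
    fun i ↦ by simpa only [coeff_map, eq_intCast] using hcoeff i
  rw [eval_map, ← algebraMap_int_eq, ← aeval_def] at hdiff
  have hh : 0 ≤ h := (abs_nonneg _).trans (hcoeff 0)
  have hexp : exp ((100 * m : ℕ) * saddleExponent 6.99 3.102761) ≤ exp (-1775.4037 * m) := by
    refine exp_le_exp.2 ?_
    push_cast
    linarith [mul_le_mul_of_nonneg_left saddleExponent_le (Nat.cast_nonneg (α := ℝ) m)]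
  refine (hdiff.trans (mul_le_mul_of_nonneg_left hexp (by positivity))).trans_eq ?_
  push_cast
  ring

lemma exists_abs_polyExpSum_le : ∃ L : ℝ, ∀ m j : ℕ, j < 3 →
    |polyExpSum (log (2 / 3)) (binomialProd (100 * m) (699 * m) * X ^ j)| ≤
      L * exp (6621.5892 * m) := by
  obtain ⟨L, hL, hgrowth⟩ := exists_abs_polyExpSum_binomialProd_mul_X_pow_le (ρ := 6.99)
    (w := 77.0201) log_two_thirds_neg (by norm_num) (by norm_num)
    ((exp_log (by norm_num : (0 : ℝ) < 2 / 3)).symm ▸ two_thirds_mul_prod_growth_ratio_lt_one)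
  refine ⟨L, fun m j hj ↦ (hgrowth _ _ (cast_699_mul_eq m) j hj).trans
    (mul_le_mul_of_nonneg_left (exp_le_exp.2 ?_) hL)⟩
  push_cast
  linarith [mul_le_mul_of_nonneg_left growthExponent_le (Nat.cast_nonneg (α := ℝ) m)]

theorem eventually_one_le_abs_aeval_mul_exp_add :
    ∀ᶠ m : ℕ in atTop, ∀ h : ℝ, ∀ P : ℤ[X], P ≠ 0 → P.natDegree ≤ 2 →
      (∀ i, |(P.coeff i : ℝ)| ≤ h) →
        1 ≤ |aeval (log (2 / 3)) P| * exp (7509.4384 * m) + h * exp (-887.5545 * m) := by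
  obtain ⟨K, happrox⟩ := exists_abs_polyExpSum_sub_aeval_mul_le
  obtain ⟨L, hgrowth⟩ := exists_abs_polyExpSum_le
  have hmul : Tendsto (fun m : ℕ ↦ 100 * m) atTop atTop :=
    tendsto_id.const_mul_atTop' (by norm_num)
  filter_upwards [hmul.eventually eventually_log_reducedDenom_le_mul, eventually_gt_atTop 0,
    eventually_mul_pow_le_exp K 7 (ε := 0.0001) (by norm_num),
    eventually_mul_pow_le_exp L 0 (ε := 0.0001) (by norm_num)]
    with m hdenom hm hK_le hL_le h P hP hdeg hcoeff
  obtain ⟨j, hj, hlower⟩ := le_reducedDenom_mul_abs_polyExpSum (n := 100 * m) (s := 699 * m)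
    (a := 499 * m) (b := 401 * m) exp_log_two_thirds (by lia) (by lia) (by lia) hP hdeg
  rw [pow_zero, mul_one] at hL_le
  refine one_le_abs_mul_exp_add (Nat.cast_pos.2 (reducedDenom_pos (100 * m)))
    ((abs_nonneg _).trans (hcoeff 0)) (hdenom.trans_eq ?_) (exp_mul_le_two_pow_mul_three_pow m)
    hlower (happrox m j hm hj P hdeg h hcoeff) (hgrowth m j hj) hK_le hL_le
  push_cast
  ring

lemma le_mul_rpow_of_one_le {A B μ h x : ℝ} (hB : 0 < B) (hA : A ≤ μ * B) (hμ : 0 ≤ μ)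
    (hh : 1 ≤ h) (hx : 0 ≤ x)
    (hx_le : 1 ≤ x * exp (A * ⌈log (2 * h) / B⌉₊) + h * exp (-B * ⌈log (2 * h) / B⌉₊)) :
    (2 * (2 * exp B) ^ μ)⁻¹ ≤ x * h ^ μ := by
  set m := ⌈log (2 * h) / B⌉₊
  have hlog : 0 ≤ log (2 * h) := log_nonneg (by linarith)
  have hm_lower : log (2 * h) ≤ m * B := (div_le_iff₀ hB).1 (Nat.le_ceil _)
  have hm_upper : m * B ≤ log (2 * h) + B := by
    have hceil := mul_le_mul_of_nonneg_right (Nat.ceil_lt_add_one (div_nonneg hlog hB.le)).le hB.le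
    rwa [add_mul, div_mul_cancel₀ _ hB.ne', one_mul] at hceil
  have hexpB : h * exp (-B * m) ≤ 1 / 2 := by
    have : exp (-B * m) ≤ exp (-log (2 * h)) := exp_le_exp.2 (by linarith)
    rw [exp_neg, exp_log (by linarith)] at this
    calc h * exp (-B * m) ≤ h * (2 * h)⁻¹ := by gcongr
      _ = 1 / 2 := by field_simp
  have hexpA : exp (A * m) ≤ (2 * exp B) ^ μ * h ^ μ := by
    rw [← mul_rpow (by positivity) (by positivity), rpow_def_of_pos (by positivity),
      mul_right_comm, log_mul (by positivity) (by positivity), log_exp, exp_le_exp]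
    calc A * m ≤ μ * B * m := by gcongr
      _ = m * B * μ := by ring
      _ ≤ (log (2 * h) + B) * μ := by gcongr
  rw [inv_le_iff_one_le_mul₀ (by positivity)]
  have := mul_le_mul_of_nonneg_left hexpA hx
  linarith

theorem hasPolynomialMeasure_log_two_thirds : HasPolynomialMeasure 2 (log (2 / 3)) 8.46082 := by
  refine ⟨(2 * (2 * exp 887.5545) ^ (8.46082 : ℝ))⁻¹, by positivity, ?_⟩
  have hceil : Tendsto (fun h : ℝ ↦ ⌈log (2 * h) / 887.5545⌉₊) atTop atTop :=
    tendsto_nat_ceil_atTop.comp ((tendsto_log_atTop.comp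
      (tendsto_id.const_mul_atTop two_pos)).atTop_div_const (by norm_num))
  filter_upwards [hceil.eventually eventually_one_le_abs_aeval_mul_exp_add, eventually_ge_atTop 1]
    with h hmain hone P hP hdeg hcoeff
  exact le_mul_rpow_of_one_le (by norm_num) (by norm_num) (by norm_num) hone (abs_nonneg _)
    (hmain h P hP hdeg hcoeff)

lemma sqrt_mul_log_sub_one_div_add_one :
    √25 * log ((√25 - 1) / (√25 + 1)) = (5 : ℤ) * log (2 / 3) := by
  have hsqrt : √25 = 5 := by
    rw [show (25 : ℝ) = 5 ^ 2 by norm_num, sqrt_sq (by norm_num)]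
  rw [hsqrt]
  norm_num

theorem non_quadraticity_measure_alpha_12_general :
    ∀ κ : ℝ, κ > 9.46082 →
      {β : ℝ | ∃ P : ℤ[X], P ≠ 0 ∧ P.natDegree ≤ 2 ∧ aeval β P = 0 ∧
          |√25 * log ((√25 - 1) / (√25 + 1)) - β| < (polyHeight P : ℝ) ^ (-κ)}.Finite := by
  intro κ hκ
  rw [sqrt_mul_log_sub_one_div_add_one]
  exact (hasPolynomialMeasure_log_two_thirds.intCast_mul (by norm_num)).finite_setOf_abs_sub_lt
    (by norm_num) (by linarith)

end LogTwoThirds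

theorem non_quadraticity_measure_alpha_12 :
    ∀ κ : ℝ, κ > 9.46082 →
      {β : ℝ | ∃ P : Polynomial ℤ, Irreducible P ∧ P.natDegree ≤ 2 ∧
          Polynomial.aeval β P = 0 ∧
          |Real.sqrt 25 * Real.log ((Real.sqrt 25 - 1) / (Real.sqrt 25 + 1)) - β| <
            ((polyHeight P : ℕ) : ℝ) ^ (-κ)}.Finite :=
  fun κ hκ ↦ (non_quadraticity_measure_alpha_12_general κ hκ).subset
    fun _ ⟨P, hirr, hP⟩ ↦ ⟨P, hirr.ne_zero, hP⟩
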